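/- Let 1 ≤ p < ∞. There exist positive constants C_1(p) and C_2(p) such that for every probability space (Ω,μ), every N ≥ 3, and every N-dimensional linear space X_N of real-valued measurable functions defined at every point of Ω with finite L_p(μ)-norm, there exist points ξ^1,…,ξ^m ∈ Ω (repetitions allowed) with ‖f‖_p ≤ C_2 ((1/m)∑_{j=1}^m |f(ξ^j)|^p)^{1/p} for all f ∈ X_N, where: m ≤ C_1 N if p = 2; m ≤ C_1 N log N if p = 1; m ≤ C_1 N log N (log log N)² if 1 < p < 2; m ≤ C_1 N^{p/2} if p is an even integer; and m ≤ C_1 N^{p/2} log N if p > 2. -/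

import Mathlib

open MeasureTheory

/-- The `L_p(μ)`-norm of a function `f`, `(∫ |f|^p dμ)^(1/p)`. -/
noncomputable def LpNorm {Ω : Type*} [MeasurableSpace Ω] (μ : Measure Ω) (p : ℝ)
    (f : Ω → ℝ) : ℝ :=
  (∫ ω, |f ω| ^ p ∂μ) ^ (1 / p)

/-!
Approximation by simple functions reduces the problem to a finite set, and Lewis's change of density
turns the space into the functions `x ↦ ⟨a, u x⟩` of an isotropic frame with `|u x| = √d`. For
`p ≠ 1` the dyadic level sets of such a function are determined, up to a negligible part, by a short
list of points, found greedily: by perceptron steps if `p > 2`, by descent of a dual potential if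
`1 < p < 2`. Chernoff's inequality for a random sample and the union bound over these lists then
give the discretization. For `p = 1` symmetrization and contraction compare the sample with a
random signed sum of the frame. Sampling twice replaces the logarithm of the number of points by
`log d`, and rounding makes the weights equal.

If `p = 2k`, the `k`-th tensor power of the space reduces matters to squares, where the barrier
argument of Batson, Spielman and Srivastava selects `O(dim)` points one at a time.
-/

open scoped Finset Matrix

/-! ### Independent sampling from finite weights -/

section Sampling

/-- The law of `n` independent draws from the weights `π`. -/
def iidWeight {ι : Type*} (π : ι → ℝ) (n : ℕ) (ξ : Fin n → ι) : ℝ := ∏ i, π (ξ i)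

theorem iidWeight_cons {ι : Type*} (π : ι → ℝ) {n : ℕ} (x : ι) (ξ : Fin n → ι) :
    iidWeight π (n + 1) (Fin.cons x ξ) = π x * iidWeight π n ξ := by
  simp [iidWeight, Fin.prod_univ_succ]

variable {ι : Type*} [Fintype ι] {π : ι → ℝ}

theorem exists_lt_of_sum_mul_lt (hπ : π ∈ stdSimplex ℝ ι) {f : ι → ℝ} {c : ℝ}
    (h : ∑ x, π x * f x < c) : ∃ x, f x < c := by
  by_contra! hcon
  have : ∑ x, π x * c ≤ ∑ x, π x * f x :=
    Finset.sum_le_sum fun x _ => mul_le_mul_of_nonneg_left (hcon x) (hπ.1 x)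
  rw [← Finset.sum_mul, hπ.2, one_mul] at this
  linarith

theorem nonempty_of_mem_stdSimplex (hπ : π ∈ stdSimplex ℝ ι) : Nonempty ι := by
  by_contra! hι
  simpa using hπ.2

theorem sum_iidWeight_mul_prod (π φ : ι → ℝ) (n : ℕ) :
    ∑ ξ, iidWeight π n ξ * ∏ i, φ (ξ i) = (∑ x, π x * φ x) ^ n := by
  classical
  simp only [iidWeight, Fintype.sum_pow, Finset.prod_mul_distrib]

theorem iidWeight_mem_stdSimplex (hπ : π ∈ stdSimplex ℝ ι) (n : ℕ) :
    iidWeight π n ∈ stdSimplex ℝ (Fin n → ι) := by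
  refine ⟨fun ξ => Finset.prod_nonneg fun i _ => hπ.1 _, ?_⟩
  simpa [hπ.2] using sum_iidWeight_mul_prod π (fun _ => 1) n

theorem sum_iidWeight_succ (π : ι → ℝ) {n : ℕ} (R : (Fin (n + 1) → ι) → ℝ) :
    ∑ ξ, iidWeight π (n + 1) ξ * R ξ =
      ∑ x, π x * ∑ ξ : Fin n → ι, iidWeight π n ξ * R (Fin.cons x ξ) := by
  calc _ = ∑ z : ι × (Fin n → ι), iidWeight π (n + 1) (Fin.cons z.1 z.2) * R (Fin.cons z.1 z.2) :=
        (Fintype.sum_equiv (Fin.consEquiv fun _ : Fin (n + 1) => ι) _ _ fun _ => rfl).symm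
    _ = _ := by simp only [Fintype.sum_prod_type, iidWeight_cons, mul_assoc, Finset.mul_sum]

theorem sum_iidWeight_mul_sum (hπ : π ∈ stdSimplex ℝ ι) (g : ι → ℝ) (n : ℕ) :
    ∑ ξ, iidWeight π n ξ * ∑ i, g (ξ i) = n * ∑ x, π x * g x := by
  induction n with
  | zero => simp
  | succ n ih =>
    simp only [sum_iidWeight_succ, Fin.sum_univ_succ, Fin.cons_zero, Fin.cons_succ, mul_add,
      Finset.sum_add_distrib, ← Finset.sum_mul, ih, hπ.2, (iidWeight_mem_stdSimplex hπ n).2,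
      one_mul]
    push_cast
    ring

theorem exists_sample_lt_one (hπ : π ∈ stdSimplex ℝ ι) {g : ι → ℝ} (hg : ∀ x, 0 ≤ g x)
    (hg1 : ∑ x, π x * g x ≤ 1) {M : ℕ} (hM : 0 < M) {Z : (Fin M → ι) → ℝ} (hZ : ∀ ξ, 0 ≤ Z ξ)
    (hmean : ∑ ξ, iidWeight π M ξ * Z ξ < 3 / 4) :
    ∃ ξ : Fin M → ι, ∑ i, g (ξ i) ≤ 4 * M ∧ Z ξ < 1 := by
  have hMr : (0 : ℝ) < 4 * M := by positivity
  have hsum : ∑ ξ, iidWeight π M ξ * (Z ξ + (∑ i, g (ξ i)) / (4 * M)) < 1 := by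
    simp only [mul_add, ← mul_div_assoc, Finset.sum_add_distrib, ← Finset.sum_div,
      sum_iidWeight_mul_sum hπ]
    have : M * (∑ x, π x * g x) / (4 * M) ≤ 1 / 4 := by
      rw [div_le_iff₀ hMr]
      nlinarith
    linarith
  obtain ⟨ξ, hξ⟩ := exists_lt_of_sum_mul_lt (iidWeight_mem_stdSimplex hπ M) hsum
  have hg0 : 0 ≤ (∑ i, g (ξ i)) / (4 * M) :=
    div_nonneg (Finset.sum_nonneg fun i _ => hg _) hMr.le
  have hlt : (∑ i, g (ξ i)) / (4 * M) < 1 := by linarith [hZ ξ]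
  exact ⟨ξ, ((div_lt_one hMr).1 hlt).le, by linarith⟩

theorem sum_mul_exp_neg_ite_mem_le [DecidableEq ι] (hπ : π ∈ stdSimplex ℝ ι) (J : Finset ι) :
    ∑ x, π x * Real.exp (-if x ∈ J then 1 else 0) ≤ Real.exp (-((∑ x ∈ J, π x) / 2)) := by
  calc _ ≤ ∑ x, (π x - (if x ∈ J then π x else 0) / 2) := by
        refine Finset.sum_le_sum fun x _ => ?_
        split_ifs
        · nlinarith [hπ.1 x, Real.exp_neg_one_lt_d9]
        · simp
    _ = -((∑ x ∈ J, π x) / 2) + 1 := by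
        rw [Finset.sum_sub_distrib, hπ.2, ← Finset.sum_div, Finset.sum_ite_mem, Finset.univ_inter]
        ring
    _ ≤ _ := Real.add_one_le_exp _

theorem sum_iidWeight_mul_exp_neg_card_le [DecidableEq ι] (hπ : π ∈ stdSimplex ℝ ι)
    (J : Finset ι) (M : ℕ) :
    ∑ ξ, iidWeight π M ξ * Real.exp (-#{i | ξ i ∈ J}) ≤
      Real.exp (-(M * (∑ x ∈ J, π x) / 2)) := by
  calc _ = (∑ x, π x * Real.exp (-if x ∈ J then 1 else 0)) ^ M := by
        rw [← sum_iidWeight_mul_prod]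
        simp_rw [← Real.exp_sum, Finset.sum_neg_distrib, Finset.natCast_card_filter]
    _ ≤ Real.exp (-((∑ x ∈ J, π x) / 2)) ^ M :=
        pow_le_pow_left₀ (Finset.sum_nonneg fun x _ => mul_nonneg (hπ.1 x) (Real.exp_pos _).le)
          (sum_mul_exp_neg_ite_mem_le hπ J) M
    _ = _ := by
        rw [← Real.exp_nat_mul]
        congr 1
        ring

theorem exists_sample_forall_code_le [DecidableEq ι] (hπ : π ∈ stdSimplex ℝ ι) {g : ι → ℝ}
    (hg : ∀ x, 0 ≤ g x) (hg1 : ∑ x, π x * g x ≤ 1) {M : ℕ} (hM : 0 < M) {Code : Type*}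
    (J : Code → Finset ι) (cost : Code → ℝ)
    (hcost : ∀ T : Finset Code, ∑ c ∈ T, Real.exp (-cost c) ≤ 1 / 2) :
    ∃ ξ : Fin M → ι, ∑ i, g (ξ i) ≤ 4 * M ∧
      ∀ c, M * (∑ x ∈ J c, π x) / 2 - cost c ≤ #{i | ξ i ∈ J c} := by
  classical
  -- One violated code per sample: the union bound runs over a finite set of codes.
  by_contra! hcon
  have : Nonempty Code := by
    obtain ⟨ξ, hξ, -⟩ := exists_sample_lt_one hπ hg hg1 hM (Z := 0) (fun _ => le_rfl) (by simp)
    exact (hcon ξ hξ).nonempty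
  choose! code hcode using hcon
  set T : Finset Code := Finset.univ.image code
  set q : Code → ℝ := fun c => M * (∑ x ∈ J c, π x) / 2
  set Z : (Fin M → ι) → ℝ := fun ξ =>
    ∑ c ∈ T, Real.exp (q c - cost c) * Real.exp (-#{i | ξ i ∈ J c})
  have hZ : ∀ ξ, 0 ≤ Z ξ := fun ξ => Finset.sum_nonneg fun c _ => by positivity
  have hmean : ∑ ξ, iidWeight π M ξ * Z ξ ≤ 1 / 2 := by
    calc _ = ∑ c ∈ T, Real.exp (q c - cost c) *
          ∑ ξ, iidWeight π M ξ * Real.exp (-#{i | ξ i ∈ J c}) := by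
          simp only [Z, Finset.mul_sum]
          rw [Finset.sum_comm]
          exact Finset.sum_congr rfl fun c _ => Finset.sum_congr rfl fun ξ _ => by ring
      _ ≤ ∑ c ∈ T, Real.exp (q c - cost c) * Real.exp (-q c) := by
          gcongr
          exact sum_iidWeight_mul_exp_neg_card_le hπ _ M
      _ = ∑ c ∈ T, Real.exp (-cost c) := by
          refine Finset.sum_congr rfl fun c _ => ?_
          rw [← Real.exp_add]
          congr 1
          ring
      _ ≤ 1 / 2 := hcost T
  obtain ⟨ξ, hξg, hξ⟩ := exists_sample_lt_one hπ hg hg1 hM hZ (by linarith)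
  have hle : Real.exp (q (code ξ) - cost (code ξ)) * Real.exp (-#{i | ξ i ∈ J (code ξ)}) ≤ Z ξ :=
    Finset.single_le_sum
      (f := fun c => Real.exp (q c - cost c) * Real.exp (-#{i | ξ i ∈ J c}))
      (fun c _ => by positivity) (Finset.mem_image_of_mem code (Finset.mem_univ ξ))
  rw [← Real.exp_add] at hle
  have hviolated : (#{i | ξ i ∈ J (code ξ)} : ℝ) < q (code ξ) - cost (code ξ) := hcode ξ hξg
  linarith [Real.exp_lt_one_iff.1 (hle.trans_lt hξ)]

end Sampling

section ListCodes

variable {E : Type*} [Fintype E]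

theorem card_filter_length_eq_le (T : Finset (List E)) (k : ℕ) :
    #{l ∈ T | l.length = k} ≤ Fintype.card E ^ k := by
  classical
  rw [← card_vector, ← Fintype.card_coe]
  exact Fintype.card_le_of_injective
    (fun l => (⟨l.1, (Finset.mem_filter.1 l.2).2⟩ : List.Vector E k))
    fun l l' h => Subtype.ext (congrArg (fun v : List.Vector E k => v.1) h)

theorem sum_pow_length_le_two {q : ℝ} (hq : 0 ≤ q) (hE : Fintype.card E * q ≤ 1 / 2)
    (T : Finset (List E)) : ∑ l ∈ T, q ^ l.length ≤ 2 := by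
  set K := T.sup List.length + 1
  have hK : ∀ l ∈ T, l.length ∈ Finset.range K := fun l hl =>
    Finset.mem_range.2 (Nat.lt_succ_of_le (Finset.le_sup (f := List.length) hl))
  calc ∑ l ∈ T, q ^ l.length = ∑ k ∈ Finset.range K, ∑ l ∈ T with l.length = k, q ^ l.length :=
        (Finset.sum_fiberwise_of_maps_to hK _).symm
    _ = ∑ k ∈ Finset.range K, #{l ∈ T | l.length = k} * q ^ k := by
        refine Finset.sum_congr rfl fun k _ => ?_
        rw [Finset.sum_congr rfl fun l hl => by rw [(Finset.mem_filter.1 hl).2], Finset.sum_const,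
          nsmul_eq_mul]
    _ ≤ ∑ k ∈ Finset.range K, (1 / 2 : ℝ) ^ k := by
        refine Finset.sum_le_sum fun k _ => ?_
        calc (#{l ∈ T | l.length = k} : ℝ) * q ^ k ≤ (Fintype.card E : ℝ) ^ k * q ^ k := by
              gcongr
              exact_mod_cast card_filter_length_eq_le T k
          _ = (Fintype.card E * q) ^ k := (mul_pow _ _ _).symm
          _ ≤ _ := pow_le_pow_left₀ (by positivity) hE k
    _ ≤ 2 := by
        have h := summable_geometric_two.sum_le_tsum (Finset.range K) fun _ _ => by positivity
        rwa [tsum_geometric_two] at h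

theorem sum_exp_neg_length_le_half {n : ℕ} {L : ℝ} (hn : 4 * n ≤ Real.exp L)
    (hE : 2 * Fintype.card E ≤ Real.exp L) (T : Finset (Fin n × List E)) :
    ∑ c ∈ T, Real.exp (-((c.2.length + 1) * L)) ≤ 1 / 2 := by
  classical
  have hterm : ∀ k : ℕ, Real.exp (-((k + 1) * L)) = Real.exp (-L) * Real.exp (-L) ^ k := fun k => by
    rw [← Real.exp_nat_mul, ← Real.exp_add]
    congr 1
    ring
  have hinv : Real.exp L * Real.exp (-L) = 1 := by
    rw [← Real.exp_add, add_neg_cancel, Real.exp_zero]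
  have hq := Real.exp_pos (-L)
  have hlists := sum_pow_length_le_two (E := E) hq.le (by nlinarith) (T.image Prod.snd)
  calc _ ≤ ∑ c ∈ (Finset.univ : Finset (Fin n)) ×ˢ T.image Prod.snd,
          Real.exp (-((c.2.length + 1) * L)) := by
        refine Finset.sum_le_sum_of_subset_of_nonneg (fun c hc => ?_) fun _ _ _ =>
          (Real.exp_pos _).le
        exact Finset.mem_product.2 ⟨Finset.mem_univ _, Finset.mem_image_of_mem _ hc⟩
    _ = n * (Real.exp (-L) * ∑ l ∈ T.image Prod.snd, Real.exp (-L) ^ l.length) := by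
        rw [Finset.sum_product]
        simp only [hterm, Finset.sum_const, Finset.card_univ, Fintype.card_fin, nsmul_eq_mul,
          Finset.mul_sum]
    _ ≤ n * (Real.exp (-L) * 2) := by gcongr
    _ ≤ 1 / 2 := by nlinarith

end ListCodes

/-! ### Dyadic levels -/

section DyadicLevels

/-- The dyadic levels `1/4, 1/2, 1, 2, …`. They start at `1/4` so that the values below the first
level carry at most a quarter of a normalised `p`-th moment. -/
noncomputable def dyadicLevel (s : ℕ) : ℝ := 2 ^ s / 4

theorem dyadicLevel_pos (s : ℕ) : 0 < dyadicLevel s := by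
  unfold dyadicLevel
  positivity

theorem dyadicLevel_zero : dyadicLevel 0 = 1 / 4 := by
  norm_num [dyadicLevel]

theorem dyadicLevel_succ (s : ℕ) : dyadicLevel (s + 1) = 2 * dyadicLevel s := by
  unfold dyadicLevel
  ring

theorem dyadicLevel_mono : Monotone dyadicLevel :=
  monotone_nat_of_le_succ fun s => by
    rw [dyadicLevel_succ]
    linarith [dyadicLevel_pos s]

theorem two_le_two_rpow {p : ℝ} (hp : 1 ≤ p) : (2 : ℝ) ≤ 2 ^ p :=
  Real.self_le_rpow_of_one_le one_le_two hp

theorem sum_dyadicLevel_rpow_le {α : ℝ} (hα : 0 < α) (n : ℕ) :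
    ∑ s ∈ Finset.range (n + 1), dyadicLevel s ^ α ≤ 2 ^ α / (2 ^ α - 1) * dyadicLevel n ^ α := by
  have hgt : (0 : ℝ) < 2 ^ α - 1 := sub_pos.2 (Real.one_lt_rpow one_lt_two hα)
  have hone : 1 ≤ (2 : ℝ) ^ α / (2 ^ α - 1) := by
    rw [le_div_iff₀ hgt]
    linarith
  induction n with
  | zero =>
    rw [Finset.sum_range_one]
    exact le_mul_of_one_le_left (Real.rpow_nonneg (dyadicLevel_pos 0).le α) hone
  | succ n ih =>
    rw [Finset.sum_range_succ, dyadicLevel_succ, Real.mul_rpow zero_le_two (dyadicLevel_pos n).le]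
    refine (add_le_add_left ih _).trans_eq ?_
    field_simp
    ring

theorem sum_dyadicLevel_rpow_le_two_mul {p : ℝ} (hp : 1 ≤ p) (n : ℕ) :
    ∑ s ∈ Finset.range (n + 1), dyadicLevel s ^ p ≤ 2 * dyadicLevel n ^ p := by
  refine (sum_dyadicLevel_rpow_le (by linarith) n).trans ?_
  have h2 := two_le_two_rpow hp
  have := Real.rpow_nonneg (dyadicLevel_pos n).le p
  gcongr
  rw [div_le_iff₀ (by linarith)]
  linarith

theorem sum_ite_dyadicLevel_le_rpow_le {p : ℝ} (hp : 1 ≤ p) (n : ℕ) {A : ℝ} (hA : 0 ≤ A) :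
    ∑ s ∈ Finset.range (n + 1), (if dyadicLevel s ≤ A then dyadicLevel s ^ p else 0) ≤
      2 * A ^ p := by
  have hp0 : 0 ≤ p := by linarith
  induction n with
  | zero =>
    have h0 : 0 ≤ A ^ p := Real.rpow_nonneg hA p
    rw [Finset.sum_range_one]
    split_ifs with h
    · linarith [Real.rpow_le_rpow (dyadicLevel_pos 0).le h hp0]
    · linarith
  | succ n ih =>
    by_cases h : dyadicLevel (n + 1) ≤ A
    · calc _ = ∑ s ∈ Finset.range (n + 1 + 1), dyadicLevel s ^ p :=
            Finset.sum_congr rfl fun s hs =>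
              if_pos ((dyadicLevel_mono (Finset.mem_range_succ_iff.1 hs)).trans h)
        _ ≤ 2 * dyadicLevel (n + 1) ^ p := sum_dyadicLevel_rpow_le_two_mul hp (n + 1)
        _ ≤ _ := by
          gcongr
          exact (dyadicLevel_pos _).le
    · rwa [Finset.sum_range_succ, if_neg h, add_zero]

theorem exists_dyadicLevel_le_lt {S : ℕ} {y : ℝ} (h0 : dyadicLevel 0 ≤ y)
    (hS : y < 2 * dyadicLevel S) : ∃ s ≤ S, dyadicLevel s ≤ y ∧ y < 2 * dyadicLevel s := by
  induction S with
  | zero => exact ⟨0, le_rfl, h0, hS⟩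
  | succ S ih =>
    by_cases h : y < 2 * dyadicLevel S
    · obtain ⟨s, hs, hy⟩ := ih h
      exact ⟨s, hs.trans S.le_succ, hy⟩
    · exact ⟨S + 1, le_rfl, by rwa [dyadicLevel_succ, ← not_lt], hS⟩

theorem exists_top_dyadicLevel {R : ℝ} (hR : 1 ≤ R) :
    ∃ S : ℕ, dyadicLevel S ≤ R ∧ R < 2 * dyadicLevel S ∧ (S : ℝ) + 1 ≤ 4 * R := by
  obtain ⟨n, hle, hlt⟩ := exists_nat_pow_near (x := 4 * R) (y := 2) (by linarith) one_lt_two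
  refine ⟨n, ?_, ?_, le_trans ?_ hle⟩
  · unfold dyadicLevel
    linarith
  · unfold dyadicLevel
    rw [pow_succ] at hlt
    linarith
  · exact_mod_cast Nat.lt_two_pow_self

end DyadicLevels

/-! ### Approximate level sets and their samples -/

section ApproxLevelSets

variable {ι : Type*} {π : ι → ℝ} {p : ℝ} {S : ℕ}

/-- The sets `J s`, `s ≤ S`, approximate the dyadic level sets of `F`: up to an exceptional set `B`
that carries at most a quarter of the `p`-th moment of `F`, they contain the points where
`|F|` is comparable to the level `s`, and `|F|` is at least half the level on `J s`. -/
structure ApproxLevelSets (π : ι → ℝ) (p : ℝ) (F : ι → ℝ) (S : ℕ) (J : ℕ → Finset ι)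
    (B : Finset ι) : Prop where
  abs_lt (x : ι) : |F x| < 2 * dyadicLevel S
  le_two_mul_abs {s : ℕ} (hs : s ≤ S) {x : ι} (hx : x ∈ J s) : dyadicLevel s ≤ 2 * |F x|
  mem {s : ℕ} (hs : s ≤ S) {x : ι} (hx : x ∉ B) (hle : dyadicLevel s ≤ |F x|)
    (hlt : |F x| < 2 * dyadicLevel s) : x ∈ J s
  sum_exceptional_le : ∑ x ∈ B, π x * |F x| ^ p ≤ 1 / 4

namespace ApproxLevelSets

variable {F : ι → ℝ} {J : ℕ → Finset ι} {B : Finset ι}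

theorem sum_rpow_mul_card_le [DecidableEq ι] (h : ApproxLevelSets π p F S J B) (hp : 1 ≤ p)
    {M : ℕ} (ξ : Fin M → ι) :
    ∑ s ∈ Finset.range (S + 1), dyadicLevel s ^ p * #{i | ξ i ∈ J s} ≤
      2 * 2 ^ p * ∑ i, |F (ξ i)| ^ p := by
  simp_rw [Finset.natCast_card_filter, Finset.mul_sum]
  rw [Finset.sum_comm]
  refine Finset.sum_le_sum fun i _ => ?_
  calc _ ≤ ∑ s ∈ Finset.range (S + 1),
        (if dyadicLevel s ≤ 2 * |F (ξ i)| then dyadicLevel s ^ p else 0) := by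
        refine Finset.sum_le_sum fun s hs => ?_
        by_cases hmem : ξ i ∈ J s
        · rw [if_pos hmem, if_pos (h.le_two_mul_abs (Finset.mem_range_succ_iff.1 hs) hmem), mul_one]
        · rw [if_neg hmem, mul_zero]
          split_ifs
          exacts [Real.rpow_nonneg (dyadicLevel_pos s).le p, le_rfl]
    _ ≤ 2 * (2 * |F (ξ i)|) ^ p := sum_ite_dyadicLevel_le_rpow_le hp S (by positivity)
    _ = _ := by rw [Real.mul_rpow zero_le_two (abs_nonneg _), mul_assoc]

theorem abs_rpow_le [DecidableEq ι] (h : ApproxLevelSets π p F S J B) (hp : 1 ≤ p) {x : ι}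
    (hx : x ∉ B) :
    |F x| ^ p ≤ 1 / 4 +
      2 ^ p * ∑ s ∈ Finset.range (S + 1), dyadicLevel s ^ p * (if x ∈ J s then 1 else 0) := by
  have hterm : ∀ s ∈ Finset.range (S + 1),
      0 ≤ dyadicLevel s ^ p * (if x ∈ J s then (1 : ℝ) else 0) := fun s _ =>
    mul_nonneg (Real.rpow_nonneg (dyadicLevel_pos s).le p) (by split_ifs <;> norm_num)
  rcases lt_or_ge |F x| (dyadicLevel 0) with hsmall | hlarge
  · have : |F x| ^ p ≤ 1 / 4 :=
      calc |F x| ^ p ≤ (1 / 4 : ℝ) ^ p :=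
            Real.rpow_le_rpow (abs_nonneg _) (dyadicLevel_zero ▸ hsmall.le) (by linarith)
        _ ≤ 1 / 4 := Real.rpow_le_self_of_le_one (by norm_num) (by norm_num) hp
    have := Finset.sum_nonneg hterm
    linarith [mul_nonneg (Real.rpow_nonneg zero_le_two p) this]
  · obtain ⟨s, hs, hle, hlt⟩ := exists_dyadicLevel_le_lt hlarge (h.abs_lt x)
    have hsingle := Finset.single_le_sum hterm (Finset.mem_range_succ_iff.2 hs)
    rw [if_pos (h.mem hs hx hle hlt), mul_one] at hsingle
    have hpow : |F x| ^ p ≤ 2 ^ p * dyadicLevel s ^ p := by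
      rw [← Real.mul_rpow zero_le_two (dyadicLevel_pos s).le]
      exact Real.rpow_le_rpow (abs_nonneg _) hlt.le (by linarith)
    linarith [mul_le_mul_of_nonneg_left hsingle (Real.rpow_nonneg zero_le_two p)]

theorem half_le_sum_rpow_mul_sum [Fintype ι] (h : ApproxLevelSets π p F S J B) (hp : 1 ≤ p)
    (hπ : π ∈ stdSimplex ℝ ι) (hF : ∑ x, π x * |F x| ^ p = 1) :
    1 / 2 ≤ 2 ^ p * ∑ s ∈ Finset.range (S + 1), dyadicLevel s ^ p * ∑ x ∈ J s, π x := by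
  classical
  have hpt : ∀ x, π x * |F x| ^ p ≤ (if x ∈ B then π x * |F x| ^ p else 0) + π x * (1 / 4) +
      2 ^ p * ∑ s ∈ Finset.range (S + 1), dyadicLevel s ^ p * (if x ∈ J s then π x else 0) := by
    intro x
    have hsplit : ∀ s, dyadicLevel s ^ p * (if x ∈ J s then π x else 0) =
        π x * (dyadicLevel s ^ p * (if x ∈ J s then 1 else 0)) := fun s => by split_ifs <;> ring
    simp_rw [hsplit, ← Finset.mul_sum]
    by_cases hx : x ∈ B
    · have hsum : 0 ≤ ∑ s ∈ Finset.range (S + 1),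
          dyadicLevel s ^ p * (if x ∈ J s then (1 : ℝ) else 0) := Finset.sum_nonneg fun s _ =>
        mul_nonneg (Real.rpow_nonneg (dyadicLevel_pos s).le p) (by split_ifs <;> norm_num)
      have := hπ.1 x
      rw [if_pos hx, add_assoc]
      exact le_add_of_nonneg_right (by positivity)
    · rw [if_neg hx, zero_add, mul_left_comm, ← mul_add]
      exact mul_le_mul_of_nonneg_left (h.abs_rpow_le hp hx) (hπ.1 x)
  have hsum := Finset.sum_le_sum fun x (_ : x ∈ Finset.univ) => hpt x
  rw [hF, Finset.sum_add_distrib, Finset.sum_add_distrib, ← Finset.sum_mul, hπ.2, ← Finset.mul_sum,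
    Finset.sum_comm, Finset.sum_ite_mem, Finset.univ_inter] at hsum
  simp_rw [← Finset.mul_sum, Finset.sum_ite_mem, Finset.univ_inter] at hsum
  linarith [h.sum_exceptional_le]

theorem le_mul_sum_sample [Fintype ι] [DecidableEq ι] (h : ApproxLevelSets π p F S J B) (hp : 1 ≤ p)
    (hπ : π ∈ stdSimplex ℝ ι) (hF : ∑ x, π x * |F x| ^ p = 1) {M : ℕ} {ξ : Fin M → ι}
    {cost : ℕ → ℝ} (hξ : ∀ s ≤ S, M * (∑ x ∈ J s, π x) / 2 - cost s ≤ #{i | ξ i ∈ J s})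
    (hcost : 8 * 2 ^ p * ∑ s ∈ Finset.range (S + 1), dyadicLevel s ^ p * cost s ≤ M) :
    M ≤ 16 * 4 ^ p * ∑ i, |F (ξ i)| ^ p := by
  have h2p : (0 : ℝ) < 2 ^ p := Real.rpow_pos_of_pos two_pos p
  set mass := ∑ s ∈ Finset.range (S + 1), dyadicLevel s ^ p * ∑ x ∈ J s, π x
  set total := ∑ s ∈ Finset.range (S + 1), dyadicLevel s ^ p * cost s
  have hcount : M / 2 * mass - total ≤ 2 * 2 ^ p * ∑ i, |F (ξ i)| ^ p :=
    calc M / 2 * mass - total = ∑ s ∈ Finset.range (S + 1),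
          dyadicLevel s ^ p * (M * (∑ x ∈ J s, π x) / 2 - cost s) := by
          simp only [mass, total]
          rw [Finset.mul_sum, ← Finset.sum_sub_distrib]
          exact Finset.sum_congr rfl fun s _ => by ring
      _ ≤ ∑ s ∈ Finset.range (S + 1), dyadicLevel s ^ p * #{i | ξ i ∈ J s} :=
          Finset.sum_le_sum fun s hs => mul_le_mul_of_nonneg_left
            (hξ s (Finset.mem_range_succ_iff.1 hs)) (Real.rpow_nonneg (dyadicLevel_pos s).le p)
      _ ≤ _ := h.sum_rpow_mul_card_le hp ξ
  have hmass := mul_le_mul_of_nonneg_left (h.half_le_sum_rpow_mul_sum hp hπ hF) M.cast_nonneg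
  have hscaled := mul_le_mul_of_nonneg_left hcount h2p.le
  have h4p : (4 : ℝ) ^ p = 2 ^ p * 2 ^ p := by
    rw [← Real.mul_rpow zero_le_two zero_le_two]
    norm_num
  rw [h4p]
  linarith

end ApproxLevelSets

theorem exists_sample_forall_list_le [Fintype ι] [DecidableEq ι] {E : Type*} [Fintype E]
    (hπ : π ∈ stdSimplex ℝ ι) {g : ι → ℝ} (hg : ∀ x, 0 ≤ g x) (hg1 : ∑ x, π x * g x ≤ 1) {M : ℕ}
    (hM : 0 < M) {L : ℝ} (hS : 4 * (S + 1) ≤ Real.exp L) (hE : 2 * Fintype.card E ≤ Real.exp L)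
    (J : ℕ → List E → Finset ι) :
    ∃ ξ : Fin M → ι, ∑ i, g (ξ i) ≤ 4 * M ∧ ∀ s ≤ S, ∀ l : List E,
      M * (∑ x ∈ J s l, π x) / 2 - (l.length + 1) * L ≤ #{i | ξ i ∈ J s l} := by
  obtain ⟨ξ, hξg, hξ⟩ := exists_sample_forall_code_le hπ hg hg1 hM
    (fun c : Fin (S + 1) × List E => J c.1 c.2) (fun c => (c.2.length + 1) * L)
    (sum_exp_neg_length_le_half (by exact_mod_cast hS) hE)
  exact ⟨ξ, hξg, fun s hs l => hξ (⟨s, Nat.lt_succ_of_le hs⟩, l)⟩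

end ApproxLevelSets

/-! ### Samples of finite-dimensional function systems -/

section LpSample

variable {ι : Type*} [Fintype ι] {d : ℕ} {π : ι → ℝ} {u : ι → Fin d → ℝ} {p : ℝ} {M : ℕ}

/-- The sample `ξ` discretizes, up to the factor `K`, the `p`-th moments under the weights `π` of
the functions `x ↦ a ⬝ᵥ u x`, `a : Fin d → ℝ`. -/
def IsLpSample (π : ι → ℝ) (u : ι → Fin d → ℝ) (p K : ℝ) (ξ : Fin M → ι) : Prop :=
  ∀ a, M * ∑ x, π x * |a ⬝ᵥ u x| ^ p ≤ K * ∑ i, |a ⬝ᵥ u (ξ i)| ^ p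

theorem isLpSample_of_forall_normalized (hp : p ≠ 0) (hπ : ∀ x, 0 ≤ π x) {K : ℝ} (hK : 0 ≤ K)
    {ξ : Fin M → ι}
    (h : ∀ a, ∑ x, π x * |a ⬝ᵥ u x| ^ p = 1 → M ≤ K * ∑ i, |a ⬝ᵥ u (ξ i)| ^ p) :
    IsLpSample π u p K ξ := by
  intro a
  set A := ∑ x, π x * |a ⬝ᵥ u x| ^ p with hA
  have hA0 : 0 ≤ A := Finset.sum_nonneg fun x _ => mul_nonneg (hπ x) (by positivity)
  rcases hA0.eq_or_lt with hzero | hpos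
  · rw [← hzero, mul_zero]
    positivity
  have hscale : ∀ x, |(A ^ (-1 / p) • a) ⬝ᵥ u x| ^ p = A⁻¹ * |a ⬝ᵥ u x| ^ p := fun x => by
    rw [smul_dotProduct, smul_eq_mul, abs_mul, Real.mul_rpow (abs_nonneg _) (abs_nonneg _),
      abs_of_pos (Real.rpow_pos_of_pos hpos _), ← Real.rpow_mul hpos.le, div_mul_cancel₀ _ hp,
      Real.rpow_neg_one]
  have hnormalized : ∑ x, π x * |(A ^ (-1 / p) • a) ⬝ᵥ u x| ^ p = 1 := by
    simp_rw [hscale, mul_left_comm _ A⁻¹]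
    rw [← Finset.mul_sum, ← hA, inv_mul_cancel₀ hpos.ne']
  have hle := h _ hnormalized
  simp_rw [hscale] at hle
  rw [← Finset.mul_sum, mul_left_comm, inv_mul_eq_div, le_div_iff₀ hpos] at hle
  exact hle

variable {E : Type*} [Fintype E] {g : ι → ℝ} {S : ℕ} {L : ℝ}

theorem exists_isLpSample_of_level_codes (hπ : π ∈ stdSimplex ℝ ι) (hg : ∀ x, 0 ≤ g x)
    (hg1 : ∑ x, π x * g x ≤ 1) (hp : 1 ≤ p) (hM : 0 < M) (hS : 4 * (S + 1) ≤ Real.exp L)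
    (hE : 2 * Fintype.card E ≤ Real.exp L) (J : ℕ → List E → Finset ι)
    (hcode : ∀ a, ∑ x, π x * |a ⬝ᵥ u x| ^ p = 1 → ∃ (c : ℕ → List E) (B : Finset ι),
      ApproxLevelSets π p (fun x => a ⬝ᵥ u x) S (fun s => J s (c s)) B ∧
      8 * 2 ^ p * ∑ s ∈ Finset.range (S + 1), dyadicLevel s ^ p * (((c s).length + 1) * L) ≤ M) :
    ∃ ξ : Fin M → ι, ∑ i, g (ξ i) ≤ 4 * M ∧ IsLpSample π u p (16 * 4 ^ p) ξ := by
  classical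
  obtain ⟨ξ, hξg, hξ⟩ := exists_sample_forall_list_le hπ hg hg1 hM hS hE J
  refine ⟨ξ, hξg, isLpSample_of_forall_normalized (by linarith) hπ.1 (by positivity) fun a ha => ?_⟩
  obtain ⟨c, B, hJ, hcost⟩ := hcode a ha
  exact hJ.le_mul_sum_sample hp hπ ha (fun s hs => hξ s hs (c s)) hcost

theorem approxLevelSets_of_abs_sub_le {F : ι → ℝ} (hF : ∀ x, |F x| < 2 * dyadicLevel S)
    {h : ℕ → ι → ℝ} (hh : ∀ s ≤ S, ∀ x, |F x - h s x| ≤ dyadicLevel s / 4) :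
    ApproxLevelSets π p F S (fun s => {x | 3 / 4 * dyadicLevel s ≤ |h s x|}) ∅ where
  abs_lt := hF
  le_two_mul_abs {s} hs x hx := by
    have hclose := (abs_sub_abs_le_abs_sub (h s x) (F x)).trans_eq (abs_sub_comm _ _)
    linarith [(Finset.mem_filter_univ x).1 hx, hh s hs x, dyadicLevel_pos s]
  mem {s} hs x _ hle _ := by
    have hclose := abs_sub_abs_le_abs_sub (F x) (h s x)
    exact (Finset.mem_filter_univ x).2 (by linarith [hh s hs x])
  sum_exceptional_le := by simp

theorem exists_isLpSample_of_approx_codes (hπ : π ∈ stdSimplex ℝ ι) (hg : ∀ x, 0 ≤ g x)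
    (hg1 : ∑ x, π x * g x ≤ 1) (hp : 1 ≤ p) (hM : 0 < M) (hL : 0 ≤ L)
    (hS : 4 * (S + 1) ≤ Real.exp L) (hE : 2 * Fintype.card E ≤ Real.exp L)
    (h : ℕ → List E → ι → ℝ) (n : ℕ → ℝ)
    (hn : 8 * 2 ^ p * ∑ s ∈ Finset.range (S + 1), dyadicLevel s ^ p * ((n s + 1) * L) ≤ M)
    (hcode : ∀ a, ∑ x, π x * |a ⬝ᵥ u x| ^ p = 1 → (∀ x, |a ⬝ᵥ u x| < 2 * dyadicLevel S) ∧
      ∀ s ≤ S, ∃ c : List E, c.length ≤ n s ∧ ∀ x, |a ⬝ᵥ u x - h s c x| ≤ dyadicLevel s / 4) :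
    ∃ ξ : Fin M → ι, ∑ i, g (ξ i) ≤ 4 * M ∧ IsLpSample π u p (16 * 4 ^ p) ξ := by
  refine exists_isLpSample_of_level_codes hπ hg hg1 hp hM hS hE
    (fun s c => {x | 3 / 4 * dyadicLevel s ≤ |h s c x|}) fun a ha => ?_
  obtain ⟨hbound, happrox⟩ := hcode a ha
  choose! c hlength hclose using happrox
  refine ⟨c, ∅, approxLevelSets_of_abs_sub_le hbound hclose, le_trans ?_ hn⟩
  gcongr with s hs
  · exact Real.rpow_nonneg (dyadicLevel_pos s).le p
  · exact hlength s (Finset.mem_range_succ_iff.1 hs)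

end LpSample

/-! ### Isotropic frames -/

section IsotropicFrame

variable {ι : Type*} [Fintype ι] {d : ℕ} {π : ι → ℝ} {u : ι → Fin d → ℝ} {p : ℝ}

/-- The vectors `u x`, taken with the probability weights `π`, have constant Euclidean norm `√d`
and identity covariance: the coordinate functions `x ↦ u x j` are orthonormal in `L₂(π)` and the
square function of this basis is constant. -/
structure IsotropicFrame (π : ι → ℝ) (u : ι → Fin d → ℝ) : Prop where
  mem_stdSimplex : π ∈ stdSimplex ℝ ι
  dotProduct_self (x : ι) : u x ⬝ᵥ u x = d
  orthonormal (i j : Fin d) : ∑ x, π x * (u x i * u x j) = if i = j then 1 else 0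

namespace IsotropicFrame

theorem sum_mul_dotProduct_mul_dotProduct (h : IsotropicFrame π u) (a b : Fin d → ℝ) :
    ∑ x, π x * ((a ⬝ᵥ u x) * (b ⬝ᵥ u x)) = a ⬝ᵥ b := by
  calc _ = ∑ x, ∑ i, ∑ j, a i * b j * (π x * (u x i * u x j)) := by
        refine Finset.sum_congr rfl fun x _ => ?_
        rw [dotProduct, dotProduct, Finset.sum_mul_sum, Finset.mul_sum]
        refine Finset.sum_congr rfl fun i _ => ?_
        rw [Finset.mul_sum]
        exact Finset.sum_congr rfl fun j _ => by ring
    _ = ∑ i, ∑ j, a i * b j * ∑ x, π x * (u x i * u x j) := by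
        rw [Finset.sum_comm]
        refine Finset.sum_congr rfl fun i _ => ?_
        rw [Finset.sum_comm]
        simp_rw [Finset.mul_sum]
    _ = _ := by simp [h.orthonormal, dotProduct]

theorem sum_mul_dotProduct_sq (h : IsotropicFrame π u) (a : Fin d → ℝ) :
    ∑ x, π x * (a ⬝ᵥ u x) ^ 2 = a ⬝ᵥ a := by
  simpa only [sq] using h.sum_mul_dotProduct_mul_dotProduct a a

theorem dotProduct_sq_le (h : IsotropicFrame π u) (a : Fin d → ℝ) (x : ι) :
    (a ⬝ᵥ u x) ^ 2 ≤ d * (a ⬝ᵥ a) := by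
  have hcs := Finset.sum_mul_sq_le_sq_mul_sq Finset.univ a (u x)
  have hu := h.dotProduct_self x
  simp only [dotProduct, ← sq] at hu ⊢
  rwa [hu, mul_comm] at hcs

theorem abs_dotProduct_le (h : IsotropicFrame π u) {a : Fin d → ℝ} {R : ℝ} (hR : 0 ≤ R)
    (ha : d * (a ⬝ᵥ a) ≤ R ^ 2) (x : ι) : |a ⬝ᵥ u x| ≤ R :=
  abs_le_of_sq_le_sq ((h.dotProduct_sq_le a x).trans ha) hR

theorem dotProduct_self_le_one (h : IsotropicFrame π u) (hp : 2 ≤ p) {a : Fin d → ℝ}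
    (ha : ∑ x, π x * |a ⬝ᵥ u x| ^ p = 1) : a ⬝ᵥ a ≤ 1 := by
  have hsq : ∀ x, ((a ⬝ᵥ u x) ^ 2) ^ (p / 2) = |a ⬝ᵥ u x| ^ p := fun x => by
    rw [← sq_abs, ← Real.rpow_natCast, ← Real.rpow_mul (abs_nonneg _)]
    congr 1
    push_cast
    ring
  have hjensen := Real.rpow_arith_mean_le_arith_mean_rpow Finset.univ π
    (fun x => (a ⬝ᵥ u x) ^ 2) (fun x _ => h.mem_stdSimplex.1 x) h.mem_stdSimplex.2
    (fun x _ => sq_nonneg _) (show 1 ≤ p / 2 by linarith)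
  simp_rw [hsq, h.sum_mul_dotProduct_sq, ha] at hjensen
  by_contra! hlt
  exact absurd (Real.one_lt_rpow hlt (show 0 < p / 2 by linarith)) hjensen.not_gt

theorem dotProduct_self_le_rpow (h : IsotropicFrame π u) (hp : 0 < p) (hp2 : p ≤ 2)
    {a : Fin d → ℝ} (ha : ∑ x, π x * |a ⬝ᵥ u x| ^ p = 1) {m : ℝ} (hm : ∀ x, |a ⬝ᵥ u x| ≤ m) :
    a ⬝ᵥ a ≤ m ^ (2 - p) := by
  calc a ⬝ᵥ a = ∑ x, π x * (a ⬝ᵥ u x) ^ 2 := (h.sum_mul_dotProduct_sq a).symm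
    _ ≤ ∑ x, π x * (m ^ (2 - p) * |a ⬝ᵥ u x| ^ p) := by
        gcongr with x _
        · exact h.mem_stdSimplex.1 x
        have hsplit : (a ⬝ᵥ u x) ^ 2 = |a ⬝ᵥ u x| ^ (2 - p) * |a ⬝ᵥ u x| ^ p := by
          rw [← Real.rpow_add_of_nonneg (abs_nonneg _) (by linarith) hp.le, sub_add_cancel,
            Real.rpow_two, sq_abs]
        rw [hsplit]
        gcongr
        exact hm x
    _ = m ^ (2 - p) := by
        simp_rw [mul_left_comm (π _)]
        rw [← Finset.mul_sum, ha, mul_one]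

theorem exists_abs_le_and_rpow_le (h : IsotropicFrame π u) (hp : 0 < p) (hp2 : p ≤ 2)
    {a : Fin d → ℝ} (ha : ∑ x, π x * |a ⬝ᵥ u x| ^ p = 1) :
    ∃ m : ℝ, 0 ≤ m ∧ (∀ x, |a ⬝ᵥ u x| ≤ m) ∧ m ^ p ≤ d := by
  have := nonempty_of_mem_stdSimplex h.mem_stdSimplex
  obtain ⟨y, hy⟩ := Finite.exists_max fun x => |a ⬝ᵥ u x|
  refine ⟨|a ⬝ᵥ u y|, abs_nonneg _, hy, ?_⟩
  rcases (abs_nonneg (a ⬝ᵥ u y)).eq_or_lt with hzero | hpos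
  · rw [← hzero, Real.zero_rpow hp.ne']
    positivity
  refine le_of_mul_le_mul_right ?_ (Real.rpow_pos_of_pos hpos (2 - p))
  calc |a ⬝ᵥ u y| ^ p * |a ⬝ᵥ u y| ^ (2 - p) = (a ⬝ᵥ u y) ^ 2 := by
        rw [← Real.rpow_add hpos, add_sub_cancel, Real.rpow_two, sq_abs]
    _ ≤ d * (a ⬝ᵥ a) := h.dotProduct_sq_le a y
    _ ≤ _ := by
        gcongr
        exact h.dotProduct_self_le_rpow hp hp2 ha hy

theorem abs_dotProduct_rpow_le (h : IsotropicFrame π u) (hp : 0 < p) (hp2 : p ≤ 2)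
    {a : Fin d → ℝ} (ha : ∑ x, π x * |a ⬝ᵥ u x| ^ p = 1) (x : ι) : |a ⬝ᵥ u x| ^ p ≤ d := by
  obtain ⟨m, -, hm, hmd⟩ := h.exists_abs_le_and_rpow_le hp hp2 ha
  exact (Real.rpow_le_rpow (abs_nonneg _) (hm x) hp.le).trans hmd

theorem dotProduct_self_le (h : IsotropicFrame π u) (hp : 1 ≤ p) (hd : 1 ≤ d) {a : Fin d → ℝ}
    (ha : ∑ x, π x * |a ⬝ᵥ u x| ^ p = 1) : a ⬝ᵥ a ≤ d := by
  have hd1 : (1 : ℝ) ≤ d := by exact_mod_cast hd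
  rcases le_total 2 p with hp2 | hp2
  · exact (h.dotProduct_self_le_one hp2 ha).trans hd1
  obtain ⟨m, hm0, hm, hmd⟩ := h.exists_abs_le_and_rpow_le (by linarith) hp2 ha
  refine (h.dotProduct_self_le_rpow (by linarith) hp2 ha hm).trans ?_
  rcases le_total m 1 with hm1 | hm1
  · exact (Real.rpow_le_one hm0 hm1 (by linarith)).trans hd1
  · exact (Real.rpow_le_rpow_of_exponent_le hm1 (by linarith)).trans hmd

end IsotropicFrame

end IsotropicFrame

/-- Every isotropic frame of `n` points in `ℝ^d` admits samples of every size `M ≥ Φ n d` that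
discretize the `p`-th moments up to the factor `K`. The samples can be chosen so that the average
over them of a prescribed function of mean at most `1` is at most `4`; it will be the
ratio of two densities. -/
def FrameSampling (p K : ℝ) (Φ : ℕ → ℕ → ℝ) : Prop :=
  ∀ ⦃ι : Type⦄ [Fintype ι] ⦃d : ℕ⦄ ⦃π : ι → ℝ⦄ ⦃u : ι → Fin d → ℝ⦄ ⦃g : ι → ℝ⦄, 1 ≤ d →
    IsotropicFrame π u → (∀ x, 0 ≤ g x) → ∑ x, π x * g x ≤ 1 →
    ∀ ⦃M : ℕ⦄, Φ (Fintype.card ι) d ≤ M →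
      ∃ ξ : Fin M → ι, ∑ i, g (ξ i) ≤ 4 * M ∧ IsLpSample π u p K ξ

/-! ### Polynomially many samples from a grid of coefficients -/

section GridSampling

theorem exists_fin_abs_sub_le {R n : ℕ} (hn : 0 < n) {y : ℝ} (hy : |y| ≤ R) :
    ∃ k : Fin (2 * R * n + 1), |y - (k / n - R)| ≤ 1 / n := by
  obtain ⟨hlo, hhi⟩ := abs_le.1 hy
  have hnr : (0 : ℝ) < n := by exact_mod_cast hn
  have hz : 0 ≤ (y + R) * n := mul_nonneg (by linarith) hnr.le
  have hfloor := Nat.floor_le hz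
  refine ⟨⟨⌊(y + R) * n⌋₊, Nat.lt_succ_of_le ?_⟩, ?_⟩
  · have : (y + R) * n ≤ 2 * R * n := by gcongr; linarith
    exact_mod_cast hfloor.trans this
  · have hsplit : y - (⌊(y + R) * n⌋₊ / n - R) = ((y + R) * n - ⌊(y + R) * n⌋₊) / n := by
      field_simp
      ring
    rw [hsplit, abs_of_nonneg (div_nonneg (by linarith) hnr.le)]
    gcongr
    linarith [Nat.lt_floor_add_one ((y + R) * n)]

/-- The vector with entries in `(16 d)⁻¹ ℤ ∩ [-d, d]` coded by a list of grid indices. -/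
noncomputable def gridVector (d : ℕ) (c : List (Fin (2 * d * (16 * d) + 1))) (j : Fin d) : ℝ :=
  (c.getD j 0 : ℕ) / (16 * d : ℕ) - d

theorem IsotropicFrame.exists_gridVector_abs_sub_le {ι : Type*} [Fintype ι] {d : ℕ} {π : ι → ℝ}
    {u : ι → Fin d → ℝ} (h : IsotropicFrame π u) (hd : 1 ≤ d) {a : Fin d → ℝ} (ha : a ⬝ᵥ a ≤ d) :
    ∃ c : List (Fin (2 * d * (16 * d) + 1)), c.length = d ∧
      ∀ x, |a ⬝ᵥ u x - gridVector d c ⬝ᵥ u x| ≤ 1 / 16 := by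
  have hd1 : (1 : ℝ) ≤ d := by exact_mod_cast hd
  have hentry : ∀ j, |a j| ≤ d := fun j => by
    have := Finset.single_le_sum (f := fun j => a j * a j) (fun j _ => mul_self_nonneg _)
      (Finset.mem_univ j)
    exact abs_le_of_sq_le_sq (by simp only [dotProduct] at ha; nlinarith) (by linarith)
  choose k hk using fun j => exists_fin_abs_sub_le (n := 16 * d) (by lia) (hentry j)
  refine ⟨List.ofFn k, by simp, fun x => ?_⟩
  have hgrid : ∀ j, |(a - gridVector d (List.ofFn k)) j| ≤ 1 / (16 * d) := fun j => by
    simpa [gridVector] using hk j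
  rw [← sub_dotProduct]
  refine h.abs_dotProduct_le (by norm_num) ?_ x
  calc (d : ℝ) * _ ≤ d * ∑ _j : Fin d, (1 / (16 * d : ℝ)) ^ 2 := by
        simp_rw [dotProduct, ← sq, ← sq_abs ((a - gridVector d (List.ofFn k)) _)]
        gcongr with j _
        exact hgrid j
    _ = (1 / 16) ^ 2 := by
        simp only [Finset.sum_const, Finset.card_univ, Fintype.card_fin, nsmul_eq_mul]
        field_simp

theorem frameSampling_grid {p : ℝ} (hp : 1 ≤ p) :
    FrameSampling p (16 * 4 ^ p) fun _ d => 2112 * 2 ^ p * (d ^ p * d ^ 3) := by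
  intro ι _ d π u g hd hu hg hg1 M hM
  have hd1 : (1 : ℝ) ≤ d := by exact_mod_cast hd
  obtain ⟨S, hSd, hdS, hS⟩ := exists_top_dyadicLevel hd1
  have hMpos : 0 < M := by
    have : (0 : ℝ) < M := lt_of_lt_of_le (by positivity) hM
    exact_mod_cast this
  have hexp : 66 * (d : ℝ) ^ 2 + 1 ≤ Real.exp (66 * d ^ 2) := Real.add_one_le_exp _
  refine exists_isLpSample_of_approx_codes hu.mem_stdSimplex hg hg1 hp hMpos (by positivity)
    (S := S) (L := 66 * d ^ 2) (by nlinarith) ?_ (fun _ c x => gridVector d c ⬝ᵥ u x) (fun _ => d)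
    ?_ fun a ha => ?_
  · rw [Fintype.card_fin]
    push_cast
    nlinarith
  · have hsum : ∑ s ∈ Finset.range (S + 1), dyadicLevel s ^ p ≤ 2 * d ^ p :=
      (sum_dyadicLevel_rpow_le_two_mul hp S).trans <| mul_le_mul_of_nonneg_left
        (Real.rpow_le_rpow (dyadicLevel_pos S).le hSd (by linarith)) zero_le_two
    rw [← Finset.sum_mul]
    calc _ ≤ 8 * 2 ^ p * (2 * (d : ℝ) ^ p * ((d + d) * (66 * d ^ 2))) := by gcongr
      _ = 2112 * 2 ^ p * (d ^ p * d ^ 3) := by ring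
      _ ≤ M := hM
  · have haa := hu.dotProduct_self_le hp hd ha
    refine ⟨fun x => (hu.abs_dotProduct_le (by linarith) (by nlinarith) x).trans_lt hdS,
      fun s _ => ?_⟩
    obtain ⟨c, hc, happrox⟩ := hu.exists_gridVector_abs_sub_le hd haa
    refine ⟨c, by rw [hc], fun x => (happrox x).trans ?_⟩
    linarith [dyadicLevel_mono (Nat.zero_le s), dyadicLevel_zero]

end GridSampling

/-! ### Greedy codes and the range `p > 2` -/

section Greedy

/-- The sign `±1` coded by a Boolean. -/
def boolSign (b : Bool) : ℝ := if b then 1 else -1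

theorem boolSign_sq (b : Bool) : boolSign b ^ 2 = 1 := by
  cases b <;> norm_num [boolSign]

theorem exists_boolSign_mul_eq_abs (y : ℝ) : ∃ b, boolSign b * y = |y| := by
  rcases le_total 0 y with hy | hy
  · exact ⟨true, by simp [boolSign, abs_of_nonneg hy]⟩
  · exact ⟨false, by simp [boolSign, abs_of_nonpos hy]⟩

theorem exists_list_of_potential_drop {E : Type*} {good : List E → Prop} {P : List E → ℝ} {κ m : ℝ}
    (hκ : 0 < κ) (hm : ∀ l, m ≤ P l) (hdrop : ∀ l, ¬good l → ∃ e, P (e :: l) + κ ≤ P l)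
    (l : List E) :
    ∃ l', good l' ∧ l.length ≤ l'.length ∧ P l' + κ * (l'.length - l.length) ≤ P l := by
  obtain ⟨n, hn⟩ := exists_nat_gt ((P l - m) / κ)
  rw [div_lt_iff₀ hκ] at hn
  induction n generalizing l with
  | zero =>
    rw [Nat.cast_zero, zero_mul] at hn
    linarith [hm l]
  | succ n ih =>
    by_cases hl : good l
    · exact ⟨l, hl, le_rfl, by simp⟩
    obtain ⟨e, he⟩ := hdrop l hl
    push_cast at hn
    obtain ⟨l', hgood, hlength, hl'⟩ := ih (e :: l) (by linarith)
    rw [List.length_cons] at hlength hl'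
    refine ⟨l', hgood, by lia, ?_⟩
    push_cast at hl'
    linarith

variable {ι : Type*} {d : ℕ} {u : ι → Fin d → ℝ} {η : ℝ}

/-- The vector reached by perceptron steps of size `η / d` along a list of signed points. -/
noncomputable def perceptronVector (u : ι → Fin d → ℝ) (η : ℝ) (l : List (ι × Bool)) : Fin d → ℝ :=
  (l.map fun e => (boolSign e.2 * (η / d)) • u e.1).sum

theorem sub_perceptronVector_cons (a : Fin d → ℝ) (e : ι × Bool) (l : List (ι × Bool)) :
    a - perceptronVector u η (e :: l) =
      (a - perceptronVector u η l) - (boolSign e.2 * (η / d)) • u e.1 := by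
  simp only [perceptronVector, List.map_cons, List.sum_cons]
  abel

variable [Fintype ι] {π : ι → ℝ}

theorem IsotropicFrame.dotProduct_self_sub_smul (h : IsotropicFrame π u) (v : Fin d → ℝ) (c : ℝ)
    (x : ι) : (v - c • u x) ⬝ᵥ (v - c • u x) = v ⬝ᵥ v - 2 * c * (v ⬝ᵥ u x) + c ^ 2 * d := by
  rw [← h.dotProduct_self x]
  simp only [sub_dotProduct, dotProduct_sub, smul_dotProduct, dotProduct_smul, smul_eq_mul,
    dotProduct_comm (u x) v]
  ring

theorem IsotropicFrame.exists_perceptronVector_abs_sub_le (h : IsotropicFrame π u) (hd : 1 ≤ d)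
    {a : Fin d → ℝ} (ha : a ⬝ᵥ a ≤ 1) (hη : 0 < η) :
    ∃ l : List (ι × Bool), l.length ≤ d / η ^ 2 ∧
      ∀ x, |a ⬝ᵥ u x - perceptronVector u η l ⬝ᵥ u x| ≤ η := by
  have hd0 : (0 : ℝ) < d := by exact_mod_cast hd
  set residual : List (ι × Bool) → Fin d → ℝ := fun l => a - perceptronVector u η l
  have hnonneg : ∀ l, 0 ≤ residual l ⬝ᵥ residual l := fun l =>
    Finset.sum_nonneg fun j _ => mul_self_nonneg _
  have hdrop : ∀ l, ¬(∀ x, |residual l ⬝ᵥ u x| ≤ η) →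
      ∃ e, residual (e :: l) ⬝ᵥ residual (e :: l) + η ^ 2 / d ≤ residual l ⬝ᵥ residual l := by
    intro l hl
    push Not at hl
    obtain ⟨x, hx⟩ := hl
    obtain ⟨b, hb⟩ := exists_boolSign_mul_eq_abs (residual l ⬝ᵥ u x)
    refine ⟨(x, b), ?_⟩
    simp only [residual] at hb hx ⊢
    have hcross := mul_le_mul_of_nonneg_left hx.le (show 0 ≤ η / d by positivity)
    rw [sub_perceptronVector_cons, h.dotProduct_self_sub_smul, mul_pow, boolSign_sq,
      show 2 * (boolSign b * (η / d)) * ((a - perceptronVector u η l) ⬝ᵥ u x) =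
        2 * (η / d * |(a - perceptronVector u η l) ⬝ᵥ u x|) by rw [← hb]; ring,
      show 1 * (η / d) ^ 2 * (d : ℝ) = η ^ 2 / d by field_simp]
    linarith [show η / d * η = η ^ 2 / d by ring]
  obtain ⟨l, hgood, -, hl⟩ := exists_list_of_potential_drop (by positivity) hnonneg hdrop []
  refine ⟨l, ?_, fun x => by simpa only [residual, sub_dotProduct] using hgood x⟩
  have hstart : residual [] ⬝ᵥ residual [] ≤ 1 := by simpa [residual, perceptronVector] using ha
  have hle : η ^ 2 / d * l.length ≤ 1 := by
    simp only [List.length_nil, Nat.cast_zero, sub_zero] at hl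
    linarith [hnonneg l]
  rw [le_div_iff₀ (by positivity)]
  rwa [div_mul_eq_mul_div, div_le_one hd0, mul_comm] at hle

end Greedy

section LargeExponent

theorem sixteen_mul_mul_le_exp {n d : ℕ} (hn : 1 ≤ n) (hd : 1 ≤ d) :
    16 * (d : ℝ) * n ≤ Real.exp (4 * Real.log (n + d + 2)) := by
  have hn1 : (1 : ℝ) ≤ n := by exact_mod_cast hn
  have hd1 : (1 : ℝ) ≤ d := by exact_mod_cast hd
  set X : ℝ := n + d + 2
  have hX : Real.exp (4 * Real.log X) = X ^ 4 := by
    rw [mul_comm, Real.exp_mul, Real.exp_log (by positivity)]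
    norm_cast
  rw [hX]
  calc 16 * (d : ℝ) * n = 4 ^ 2 * (d * n) := by ring
    _ ≤ X ^ 2 * (X * X) := by
        gcongr <;> simp only [X] <;> linarith
    _ = X ^ 4 := by ring

theorem sum_dyadicLevel_rpow_mul_inv_sq_le {p : ℝ} (hp : 2 < p) {d S : ℕ} (hd : 1 ≤ d)
    (hS : dyadicLevel S ≤ √d) :
    ∑ s ∈ Finset.range (S + 1), dyadicLevel s ^ p * (16 * d / dyadicLevel s ^ 2 + 1) ≤
      (16 * (2 ^ (p - 2) / (2 ^ (p - 2) - 1)) + 2) * (d : ℝ) ^ (p / 2) := by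
  have hd0 : (0 : ℝ) < d := by exact_mod_cast hd
  have hgt : (0 : ℝ) < 2 ^ (p - 2) - 1 := sub_pos.2 (Real.one_lt_rpow one_lt_two (by linarith))
  have htop : ∀ q : ℝ, 0 ≤ q → dyadicLevel S ^ q ≤ (d : ℝ) ^ (q / 2) := fun q hq =>
    (Real.rpow_le_rpow (dyadicLevel_pos S).le hS hq).trans_eq
      (Real.rpow_div_two_eq_sqrt q hd0.le).symm
  have hmul : (d : ℝ) * d ^ ((p - 2) / 2) = d ^ (p / 2) := by
    rw [sub_div, div_self two_ne_zero, Real.rpow_sub hd0, Real.rpow_one]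
    field_simp
  calc _ = 16 * d * ∑ s ∈ Finset.range (S + 1), dyadicLevel s ^ (p - 2) +
          ∑ s ∈ Finset.range (S + 1), dyadicLevel s ^ p := by
        rw [Finset.mul_sum, ← Finset.sum_add_distrib]
        refine Finset.sum_congr rfl fun s _ => ?_
        rw [Real.rpow_sub (dyadicLevel_pos s), Real.rpow_two]
        ring
    _ ≤ 16 * d * (2 ^ (p - 2) / (2 ^ (p - 2) - 1) * (d : ℝ) ^ ((p - 2) / 2)) +
          2 * (d : ℝ) ^ (p / 2) := by
        gcongr
        · refine (sum_dyadicLevel_rpow_le (by linarith) S).trans ?_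
          gcongr
          exact htop _ (by linarith)
        · refine (sum_dyadicLevel_rpow_le_two_mul (by linarith) S).trans ?_
          gcongr
          exact htop _ (by linarith)
    _ = _ := by
        rw [← hmul]
        ring

theorem exists_frameSampling_of_two_lt {p : ℝ} (hp : 2 < p) : ∃ C : ℝ, 0 < C ∧
    FrameSampling p (16 * 4 ^ p) fun n d => C * (d ^ (p / 2) * Real.log (n + d + 2)) := by
  have hgt : (0 : ℝ) < 2 ^ (p - 2) - 1 := sub_pos.2 (Real.one_lt_rpow one_lt_two (by linarith))
  set C₀ : ℝ := 16 * (2 ^ (p - 2) / (2 ^ (p - 2) - 1)) + 2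
  refine ⟨8 * 2 ^ p * 4 * C₀, by positivity, ?_⟩
  intro ι _ d π u g hd hu hg hg1 M hM
  have := nonempty_of_mem_stdSimplex hu.mem_stdSimplex
  have hd1 : (1 : ℝ) ≤ d := by exact_mod_cast hd
  have hn : 1 ≤ Fintype.card ι := Fintype.card_pos
  have hn1 : (1 : ℝ) ≤ Fintype.card ι := by exact_mod_cast hn
  have hexp := sixteen_mul_mul_le_exp hn hd
  have hlog : 0 < Real.log (Fintype.card ι + d + 2) := Real.log_pos (by linarith)
  obtain ⟨S, hSd, hdS, hS⟩ := exists_top_dyadicLevel (Real.one_le_sqrt.2 hd1)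
  have hMpos : 0 < M := by
    have : (0 : ℝ) < M := lt_of_lt_of_le (by positivity) hM
    exact_mod_cast this
  refine exists_isLpSample_of_approx_codes hu.mem_stdSimplex hg hg1 (by linarith) hMpos
    (S := S) (E := ι × Bool) (L := 4 * Real.log (Fintype.card ι + d + 2)) (by positivity) ?_ ?_
    (fun s c x => perceptronVector u (dyadicLevel s / 4) c ⬝ᵥ u x)
    (fun s => 16 * d / dyadicLevel s ^ 2) ?_ fun a ha => ⟨fun x => ?_, fun s _ => ?_⟩
  · have : √d ≤ d := Real.sqrt_le_self_iff.2 (Or.inr hd1)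
    nlinarith
  · rw [Fintype.card_prod, Fintype.card_bool]
    push_cast
    nlinarith
  · simp_rw [← mul_assoc, ← Finset.sum_mul]
    calc _ = 8 * 2 ^ p * 4 * (∑ s ∈ Finset.range (S + 1), dyadicLevel s ^ p *
            (16 * d / dyadicLevel s ^ 2 + 1)) * Real.log (Fintype.card ι + d + 2) := by ring
      _ ≤ 8 * 2 ^ p * 4 * (C₀ * d ^ (p / 2)) * Real.log (Fintype.card ι + d + 2) := by
          gcongr
          exact sum_dyadicLevel_rpow_mul_inv_sq_le hp hd hSd
      _ ≤ M := by linarith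
  · refine (hu.abs_dotProduct_le (Real.sqrt_nonneg _) ?_ x).trans_lt hdS
    rw [Real.sq_sqrt d.cast_nonneg]
    exact mul_le_of_le_one_right d.cast_nonneg (hu.dotProduct_self_le_one hp.le ha)
  · obtain ⟨c, hc, happrox⟩ := hu.exists_perceptronVector_abs_sub_le hd
      (hu.dotProduct_self_le_one hp.le ha) (show 0 < dyadicLevel s / 4 by
        linarith [dyadicLevel_pos s])
    refine ⟨c, hc.trans_eq ?_, happrox⟩
    have := dyadicLevel_pos s
    field_simp
    norm_num

end LargeExponent

/-! ### Uniform convexity of `|·| ^ p` for `1 < p < 2` -/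

section UniformConvexity

variable {p : ℝ}

theorem convexOn_rpow_sub_sq (h1 : 1 < p) (h2 : p < 2) {R : ℝ} :
    ConvexOn ℝ (Set.Icc 0 R) fun y => y ^ p - p * (p - 1) / 2 * R ^ (p - 2) * y ^ 2 := by
  set κ := p * (p - 1) / 2 * R ^ (p - 2) with hκ
  refine convexOn_of_hasDerivWithinAt2_nonneg (convex_Icc 0 R)
    (f' := fun y => p * y ^ (p - 1) - κ * (2 * y))
    (f'' := fun y => p * ((p - 1) * y ^ (p - 2)) - κ * 2) ?_ ?_ ?_ ?_
  · have := Real.continuous_rpow_const (show 0 ≤ p by linarith)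
    fun_prop
  · intro x hx
    rw [interior_Icc] at hx
    have hderiv := (Real.hasDerivAt_rpow_const (p := p) (Or.inl hx.1.ne')).sub
      ((hasDerivAt_pow 2 x).const_mul κ)
    simp only [Nat.cast_ofNat, Nat.add_one_sub_one, pow_one] at hderiv
    exact hderiv.hasDerivWithinAt
  · intro x hx
    rw [interior_Icc] at hx
    have hderiv := ((Real.hasDerivAt_rpow_const (p := p - 1) (Or.inl hx.1.ne')).const_mul p).sub
      (((hasDerivAt_id x).const_mul 2).const_mul κ)
    rw [show p - 1 - 1 = p - 2 by ring, mul_one] at hderiv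
    exact hderiv.hasDerivWithinAt
  · intro x hx
    rw [interior_Icc] at hx
    have hle : R ^ (p - 2) ≤ x ^ (p - 2) :=
      Real.rpow_le_rpow_of_nonpos hx.1 hx.2.le (by linarith)
    have hpp : 0 < p * (p - 1) := by nlinarith
    rw [hκ]
    nlinarith

theorem two_point_gap_of_le (h1 : 1 < p) (h2 : p < 2) {m t : ℝ} (ht : 0 ≤ t) (htm : t ≤ m) :
    p * (p - 1) * t ^ 2 * (m + t) ^ (p - 2) ≤ (m + t) ^ p + (m - t) ^ p - 2 * m ^ p := by
  have hconv := (convexOn_rpow_sub_sq h1 h2 (R := m + t)).2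
    (show m + t ∈ Set.Icc 0 (m + t) from ⟨by linarith, le_rfl⟩)
    (show m - t ∈ Set.Icc 0 (m + t) from ⟨by linarith, by linarith⟩)
    one_half_pos.le one_half_pos.le (add_halves 1)
  simp only [smul_eq_mul] at hconv
  rw [show 1 / 2 * (m + t) + 1 / 2 * (m - t) = m by ring] at hconv
  linarith

theorem le_rpow_sub_rpow_of_le (h1 : 1 < p) (h2 : p < 2) {m t : ℝ} (hm : 0 ≤ m) (hmt : m ≤ t) :
    p * (p - 1) / 2 * (m + t) ^ (p - 2) * (t ^ 2 - m ^ 2) ≤ t ^ p - m ^ p := by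
  rcases hmt.eq_or_lt with rfl | hlt
  · simp
  have ht : 0 < t := by linarith
  set κ := p * (p - 1) / 2 * (m + t) ^ (p - 2) with hκ
  have hconv := (convexOn_rpow_sub_sq h1 h2 (R := m + t)).2
    (show 0 ∈ Set.Icc 0 (m + t) from ⟨le_rfl, by linarith⟩)
    (show t ∈ Set.Icc 0 (m + t) from ⟨ht.le, by linarith⟩)
    (sub_nonneg.2 (div_le_one_of_le₀ hmt ht.le)) (div_nonneg hm ht.le) (sub_add_cancel 1 (m / t))
  simp only [smul_eq_mul, mul_zero, zero_add, div_mul_cancel₀ _ ht.ne', ← hκ,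
    Real.zero_rpow (show p ≠ 0 by linarith), zero_pow two_ne_zero, sub_zero] at hconv
  have hnonneg : 0 ≤ t ^ p - κ * t ^ 2 := by
    have hsplit : t ^ p = t ^ (p - 2) * t ^ 2 := by
      rw [← Real.rpow_two, ← Real.rpow_add ht, sub_add_cancel]
    have hle : (m + t) ^ (p - 2) ≤ t ^ (p - 2) :=
      Real.rpow_le_rpow_of_nonpos ht (by linarith) (by linarith)
    have hpos : 0 < (m + t) ^ (p - 2) := Real.rpow_pos_of_pos (by linarith) _
    rw [hsplit, ← sub_mul]
    have hκle : κ ≤ (m + t) ^ (p - 2) := mul_le_of_le_one_left hpos.le (by nlinarith)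
    exact mul_nonneg (by linarith) (sq_nonneg _)
  have := mul_le_of_le_one_left hnonneg (div_le_one_of_le₀ hmt ht.le)
  linarith

theorem two_point_gap_of_nonneg (h1 : 1 < p) (h2 : p < 2) {m t : ℝ} (hm : 0 ≤ m) (ht : 0 ≤ t) :
    p * (p - 1) * t ^ 2 * (m + t) ^ (p - 2) ≤ (m + t) ^ p + |m - t| ^ p - 2 * m ^ p := by
  rcases le_total t m with hle | hle
  · rw [abs_of_nonneg (sub_nonneg.2 hle)]
    exact two_point_gap_of_le h1 h2 ht hle
  · rw [abs_sub_comm, abs_of_nonneg (sub_nonneg.2 hle)]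
    have hswap := two_point_gap_of_le h1 h2 hm hle
    rw [add_comm t m] at hswap
    linarith [le_rpow_sub_rpow_of_le h1 h2 hm hle]

theorem two_point_gap (h1 : 1 < p) (h2 : p < 2) (m t : ℝ) :
    p * (p - 1) * t ^ 2 * (|m| + |t|) ^ (p - 2) ≤ |m + t| ^ p + |m - t| ^ p - 2 * |m| ^ p := by
  have hgap := two_point_gap_of_nonneg h1 h2 (abs_nonneg m) (abs_nonneg t)
  rw [sq_abs] at hgap
  suffices hsymm : (|m| + |t|) ^ p + |(|m| - |t|)| ^ p = |m + t| ^ p + |m - t| ^ p by linarith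
  rw [← abs_of_nonneg (add_nonneg (abs_nonneg m) (abs_nonneg t))]
  rcases abs_choice m with hm | hm <;> rcases abs_choice t with ht | ht <;>
    simp only [hm, ht, sub_neg_eq_add, ← sub_eq_add_neg, neg_add_eq_sub, ← neg_add', abs_neg,
      abs_sub_comm t m, add_comm (|m - t| ^ p)]

theorem midpoint_gap (h1 : 1 < p) (h2 : p < 2) (y y' : ℝ) :
    p * (p - 1) / 4 * (y' - y) ^ 2 * (|y| + |y' - y|) ^ (p - 2) ≤
      |y| ^ p + |y'| ^ p - 2 * |1 / 2 * (y + y')| ^ p := by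
  have hgap := two_point_gap h1 h2 (1 / 2 * (y + y')) ((y' - y) / 2)
  rw [show 1 / 2 * (y + y') + (y' - y) / 2 = y' by ring,
    show 1 / 2 * (y + y') - (y' - y) / 2 = y by ring] at hgap
  rcases eq_or_ne (y' - y) 0 with hzero | hne
  · rw [hzero] at hgap ⊢
    simp only [zero_div, ne_eq, OfNat.ofNat_ne_zero, not_false_eq_true, zero_pow, mul_zero,
      zero_mul] at hgap ⊢
    linarith
  have habs : |(y' - y) / 2| = |y' - y| / 2 := by rw [abs_div, abs_two]
  have hpos : 0 < |1 / 2 * (y + y')| + |(y' - y) / 2| := by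
    have := abs_pos.2 hne
    rw [habs]
    positivity
  have hle : |1 / 2 * (y + y')| + |(y' - y) / 2| ≤ |y| + |y' - y| := by
    have := abs_add_le y ((y' - y) / 2)
    rw [show 1 / 2 * (y + y') = y + (y' - y) / 2 by ring]
    rw [habs] at this ⊢
    linarith
  have hcoef : 0 ≤ p * (p - 1) / 4 * (y' - y) ^ 2 :=
    mul_nonneg (by nlinarith) (sq_nonneg _)
  have := mul_le_mul_of_nonneg_left
    (Real.rpow_le_rpow_of_nonpos hpos hle (show p - 2 ≤ 0 by linarith)) hcoef
  linarith

/-- The dual form of the uniform convexity of `|·| ^ p` at `y`: the conjugate of the gap in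
`midpoint_gap` grows quadratically for small slopes `k` and like `|k| ^ (p / (p - 1))` for
large ones. -/
def GapConjugateBound (p C : ℝ) : Prop :=
  ∀ k y D : ℝ, k * D - p * (p - 1) / 4 * D ^ 2 * (|y| + |D|) ^ (p - 2) ≤
    C * (k ^ 2 * |y| ^ (2 - p) + |k| ^ (p / (p - 1)))

theorem half_mul_rpow_le (h1 : 1 < p) (h2 : p < 2) {A B : ℝ} (hA : 0 ≤ A) (hB : 0 < B)
    (hAB : A ≤ B) : 1 / 2 * B ^ (p - 2) ≤ (A + B) ^ (p - 2) := by
  calc 1 / 2 * B ^ (p - 2) ≤ 2 ^ (p - 2) * B ^ (p - 2) := by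
        gcongr
        rw [one_div, ← Real.rpow_neg_one]
        exact Real.rpow_le_rpow_of_exponent_le one_le_two (by linarith)
    _ = (2 * B) ^ (p - 2) := (Real.mul_rpow zero_le_two hB.le).symm
    _ ≤ _ := Real.rpow_le_rpow_of_nonpos (by positivity) (by linarith) (by linarith)

theorem mul_sub_gap_le_of_abs_le (h1 : 1 < p) (h2 : p < 2) {c : ℝ} (hc : 0 < c) {k y D : ℝ}
    (hy : y ≠ 0) (hD : |D| ≤ |y|) :
    k * D - c * D ^ 2 * (|y| + |D|) ^ (p - 2) ≤ 1 / (2 * c) * (k ^ 2 * |y| ^ (2 - p)) := by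
  have hy0 : 0 < |y| := abs_pos.2 hy
  have hlow := half_mul_rpow_le h1 h2 (abs_nonneg D) hy0 hD
  rw [add_comm, ← neg_sub 2 p, Real.rpow_neg hy0.le] at hlow
  set B := |y| ^ (2 - p)
  have hB : 0 < B := Real.rpow_pos_of_pos hy0 _
  have hsquare : (c * D - k * B) ^ 2 / (2 * c * B) =
      c * D ^ 2 * (1 / 2 * B⁻¹) - k * D + 1 / (2 * c) * (k ^ 2 * B) := by
    field_simp
    ring
  have hnonneg : 0 ≤ (c * D - k * B) ^ 2 / (2 * c * B) := by positivity
  have := mul_le_mul_of_nonneg_left hlow (show 0 ≤ c * D ^ 2 by positivity)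
  rw [← neg_sub 2 p]
  linarith

theorem mul_sub_rpow_le (h1 : 1 < p) {c k D : ℝ} (hc : 0 < c) (hk : 0 ≤ k) (hD : 0 ≤ D) :
    k * D - c / 2 * D ^ p ≤ (2 / c) ^ (1 / (p - 1)) * k ^ (p / (p - 1)) := by
  have hp1 : 0 < p - 1 := by linarith
  have hDp : D ^ p = D ^ (p - 1) * D := by
    rw [← Real.rpow_add_one' hD (by linarith), sub_add_cancel]
  rcases le_or_gt k (c / 2 * D ^ (p - 1)) with hsmall | hlarge
  · have := mul_le_mul_of_nonneg_right hsmall hD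
    have : 0 ≤ (2 / c) ^ (1 / (p - 1)) * k ^ (p / (p - 1)) := by positivity
    rw [hDp]
    linarith
  have hroot : D ≤ (2 / c) ^ (1 / (p - 1)) * k ^ (1 / (p - 1)) := by
    rw [← Real.mul_rpow (by positivity) hk, one_div,
      Real.le_rpow_inv_iff_of_pos hD (by positivity) hp1, div_mul_eq_mul_div, le_div_iff₀ hc]
    linarith
  have hkq : k * k ^ (1 / (p - 1)) = k ^ (p / (p - 1)) := by
    rw [← Real.rpow_one_add' hk (by positivity)]
    congr 1
    field_simp
    ring
  have hpow : 0 ≤ c / 2 * D ^ p := by positivity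
  calc k * D - c / 2 * D ^ p ≤ k * ((2 / c) ^ (1 / (p - 1)) * k ^ (1 / (p - 1))) := by
        linarith [mul_le_mul_of_nonneg_left hroot hk]
    _ = _ := by rw [← hkq]; ring

theorem mul_sub_gap_le_of_abs_ge (h1 : 1 < p) (h2 : p < 2) {c : ℝ} (hc : 0 < c) {k y D : ℝ}
    (hD0 : D ≠ 0) (hD : |y| ≤ |D|) :
    k * D - c * D ^ 2 * (|y| + |D|) ^ (p - 2) ≤
      (2 / c) ^ (1 / (p - 1)) * |k| ^ (p / (p - 1)) := by
  have hDpos : 0 < |D| := abs_pos.2 hD0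
  have hlow := half_mul_rpow_le h1 h2 (abs_nonneg y) hDpos hD
  have hDp : D ^ 2 * |D| ^ (p - 2) = |D| ^ p := by
    rw [← sq_abs, ← Real.rpow_two, ← Real.rpow_add hDpos, add_sub_cancel]
  have hmul : k * D ≤ |k| * |D| := (le_abs_self _).trans_eq (abs_mul k D)
  have := mul_le_mul_of_nonneg_left hlow (show 0 ≤ c * D ^ 2 by positivity)
  have := mul_sub_rpow_le h1 hc (abs_nonneg k) hDpos.le
  rw [← hDp] at this
  linarith

theorem exists_gapConjugateBound (h1 : 1 < p) (h2 : p < 2) :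
    ∃ C : ℝ, 1 ≤ C ∧ GapConjugateBound p C := by
  set c := p * (p - 1) / 4 with hc
  have hc0 : 0 < c := by rw [hc]; nlinarith
  set A := (2 / c) ^ (1 / (p - 1))
  have hA : 0 ≤ A := by positivity
  have hB : 0 < 1 / (2 * c) := by positivity
  refine ⟨1 + 1 / (2 * c) + A, by linarith, fun k y D => ?_⟩
  have hsq : 0 ≤ k ^ 2 * |y| ^ (2 - p) := by positivity
  have hpow : 0 ≤ |k| ^ (p / (p - 1)) := by positivity
  rcases eq_or_ne D 0 with rfl | hD
  · have : 0 ≤ (1 + 1 / (2 * c) + A) * (k ^ 2 * |y| ^ (2 - p) + |k| ^ (p / (p - 1))) := by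
      positivity
    simpa using this
  rcases le_or_gt |D| |y| with hle | hlt
  · have hy : y ≠ 0 := abs_pos.1 ((abs_pos.2 hD).trans_le hle)
    exact (mul_sub_gap_le_of_abs_le h1 h2 hc0 hy hle).trans
      (mul_le_mul (by linarith) (by linarith) hsq (by positivity))
  · exact (mul_sub_gap_le_of_abs_ge h1 h2 hc0 hD hlt.le).trans
      (mul_le_mul (by linarith) (by linarith) hpow (by positivity))

end UniformConvexity

/-! ### The dual potential -/

section DualPotential

variable {ι : Type*} [Fintype ι] {d : ℕ} {π : ι → ℝ} {u : ι → Fin d → ℝ} {p : ℝ}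

/-- The `p`-energy `E b` of a coefficient vector. -/
noncomputable def pEnergy (π : ι → ℝ) (u : ι → Fin d → ℝ) (p : ℝ) (b : Fin d → ℝ) : ℝ :=
  ∑ x, π x * |b ⬝ᵥ u x| ^ p

theorem pEnergy_nonneg (hπ : ∀ x, 0 ≤ π x) (b : Fin d → ℝ) : 0 ≤ pEnergy π u p b :=
  Finset.sum_nonneg fun x _ => mul_nonneg (hπ x) (Real.rpow_nonneg (abs_nonneg _) _)

/-- The vector `b` maximizes `z ⬝ᵥ b - E b` over the ball of radius `√d`. -/
def IsDualMaximizer (π : ι → ℝ) (u : ι → Fin d → ℝ) (p : ℝ) (z b : Fin d → ℝ) : Prop :=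
  b ⬝ᵥ b ≤ d ∧ ∀ b' : Fin d → ℝ, b' ⬝ᵥ b' ≤ d →
    z ⬝ᵥ b' - pEnergy π u p b' ≤ z ⬝ᵥ b - pEnergy π u p b

theorem isCompact_dotProduct_self_le (d : ℕ) : IsCompact {b : Fin d → ℝ | b ⬝ᵥ b ≤ d} := by
  refine (isCompact_univ_pi fun _ => isCompact_Icc (a := -(d : ℝ)) (b := d)).of_isClosed_subset
    (isClosed_le (by unfold dotProduct; fun_prop) continuous_const) fun b hb j _ => ?_
  have hd : (1 : ℝ) ≤ d := by exact_mod_cast Fin.pos j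
  have hj := Finset.single_le_sum (f := fun i => b i * b i) (fun i _ => mul_self_nonneg _)
    (Finset.mem_univ j)
  have hb : ∑ i, b i * b i ≤ d := hb
  exact abs_le_of_sq_le_sq' (by nlinarith) (by linarith)

theorem exists_isDualMaximizer (π : ι → ℝ) (u : ι → Fin d → ℝ) (hp : 0 ≤ p) (z : Fin d → ℝ) :
    ∃ b, IsDualMaximizer π u p z b := by
  have hcont : Continuous fun b => z ⬝ᵥ b - pEnergy π u p b := by
    have := Real.continuous_rpow_const hp
    unfold pEnergy dotProduct
    fun_prop
  obtain ⟨b, hb, hmax⟩ := (isCompact_dotProduct_self_le d).exists_isMaxOn ⟨0, by simp⟩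
    hcont.continuousOn
  exact ⟨b, hb, fun b' hb' => hmax hb'⟩

/-- A vector maximizing `z ⬝ᵥ b - E b` over the ball of radius `√d`. -/
noncomputable def dualMaximizer (π : ι → ℝ) (u : ι → Fin d → ℝ) (p : ℝ) (z : Fin d → ℝ) :
    Fin d → ℝ :=
  Classical.epsilon (IsDualMaximizer π u p z)

theorem isDualMaximizer_dualMaximizer (hp : 0 ≤ p) (z : Fin d → ℝ) :
    IsDualMaximizer π u p z (dualMaximizer π u p z) :=
  Classical.epsilon_spec (exists_isDualMaximizer π u hp z)

/-- The convex conjugate at `z` of the energy restricted to the ball of radius `√d`. -/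
noncomputable def dualPotential (π : ι → ℝ) (u : ι → Fin d → ℝ) (p : ℝ) (z : Fin d → ℝ) : ℝ :=
  z ⬝ᵥ dualMaximizer π u p z - pEnergy π u p (dualMaximizer π u p z)

theorem dotProduct_sub_pEnergy_le_dualPotential (hp : 0 ≤ p) (z : Fin d → ℝ) {b : Fin d → ℝ}
    (hb : b ⬝ᵥ b ≤ d) : z ⬝ᵥ b - pEnergy π u p b ≤ dualPotential π u p z :=
  (isDualMaximizer_dualMaximizer hp z).2 b hb

theorem dualPotential_zero_le (hπ : ∀ x, 0 ≤ π x) : dualPotential π u p 0 ≤ 0 := by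
  simpa [dualPotential] using pEnergy_nonneg hπ _

theorem midpoint_dotProduct_self_le {b b' : Fin d → ℝ} {r : ℝ} (hb : b ⬝ᵥ b ≤ r)
    (hb' : b' ⬝ᵥ b' ≤ r) : ((1 / 2 : ℝ) • (b + b')) ⬝ᵥ ((1 / 2 : ℝ) • (b + b')) ≤ r := by
  have hdiff : 0 ≤ (b - b') ⬝ᵥ (b - b') := Finset.sum_nonneg fun j _ => mul_self_nonneg _
  simp only [smul_dotProduct, dotProduct_smul, add_dotProduct, dotProduct_add, sub_dotProduct,
    dotProduct_sub, smul_eq_mul] at hdiff ⊢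
  linarith

theorem pEnergy_midpoint_gap (hπ : ∀ x, 0 ≤ π x) (h1 : 1 < p) (h2 : p < 2) (b b' : Fin d → ℝ) :
    ∑ x, π x * (p * (p - 1) / 4 * ((b' - b) ⬝ᵥ u x) ^ 2 *
        (|b ⬝ᵥ u x| + |(b' - b) ⬝ᵥ u x|) ^ (p - 2)) ≤
      pEnergy π u p b + pEnergy π u p b' - 2 * pEnergy π u p ((1 / 2 : ℝ) • (b + b')) := by
  unfold pEnergy
  rw [Finset.mul_sum, ← Finset.sum_add_distrib, ← Finset.sum_sub_distrib]
  refine Finset.sum_le_sum fun x _ => ?_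
  have := mul_le_mul_of_nonneg_left (midpoint_gap h1 h2 (b ⬝ᵥ u x) (b' ⬝ᵥ u x)) (hπ x)
  simp only [sub_dotProduct, smul_dotProduct, add_dotProduct, smul_eq_mul] at this ⊢
  linarith

-- The maximizer at `z` is compared with its midpoint with the maximizer at `z + w`; the
-- convexity gap gained at the midpoint pays for the linear term.
theorem dualPotential_add_le (hu : IsotropicFrame π u) (h1 : 1 < p) (h2 : p < 2) {C : ℝ}
    (hC : GapConjugateBound p C) (z w : Fin d → ℝ) :
    dualPotential π u p (z + w) ≤ dualPotential π u p z + w ⬝ᵥ dualMaximizer π u p z +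
      C * ∑ y, π y * ((w ⬝ᵥ u y) ^ 2 * |dualMaximizer π u p z ⬝ᵥ u y| ^ (2 - p) +
        |w ⬝ᵥ u y| ^ (p / (p - 1))) := by
  set b := dualMaximizer π u p z with hb
  set b' := dualMaximizer π u p (z + w) with hb'
  have hmax : IsDualMaximizer π u p z b := isDualMaximizer_dualMaximizer (by linarith) z
  have hmax' : IsDualMaximizer π u p (z + w) b' := isDualMaximizer_dualMaximizer (by linarith) _
  have hmid := hmax.2 _ (midpoint_dotProduct_self_le hmax.1 hmax'.1)
  have hgap := pEnergy_midpoint_gap (u := u) hu.mem_stdSimplex.1 h1 h2 b b'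
  have hconj : w ⬝ᵥ (b' - b) - ∑ x, π x * (p * (p - 1) / 4 * ((b' - b) ⬝ᵥ u x) ^ 2 *
      (|b ⬝ᵥ u x| + |(b' - b) ⬝ᵥ u x|) ^ (p - 2)) ≤
      C * ∑ y, π y * ((w ⬝ᵥ u y) ^ 2 * |b ⬝ᵥ u y| ^ (2 - p) + |w ⬝ᵥ u y| ^ (p / (p - 1))) := by
    rw [← hu.sum_mul_dotProduct_mul_dotProduct, ← Finset.sum_sub_distrib, Finset.mul_sum]
    refine Finset.sum_le_sum fun x _ => ?_
    have := mul_le_mul_of_nonneg_left (hC (w ⬝ᵥ u x) (b ⬝ᵥ u x) ((b' - b) ⬝ᵥ u x))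
      (hu.mem_stdSimplex.1 x)
    linarith
  rw [dualPotential, dualPotential, ← hb, ← hb', add_dotProduct]
  simp only [dotProduct_smul, dotProduct_add, dotProduct_sub, smul_eq_mul] at hmid hconj
  linarith

end DualPotential

/-! ### Greedy descent of the dual potential -/

section DualDescent

variable {ι : Type*} [Fintype ι] {d : ℕ} {π : ι → ℝ} {u : ι → Fin d → ℝ} {p : ℝ}

/-- A Markov kernel `W` on a finite type with stationary weights `π`. -/
structure StationaryKernel (π : ι → ℝ) (W : ι → ι → ℝ) : Prop where
  nonneg : ∀ x y, 0 ≤ W x y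
  sum_right : ∀ x, ∑ y, W x y = 1
  sum_mul_left : ∀ y, ∑ x, π x * W x y = π y

/-- The transition kernel `W(x, y) = π(y) ⟨u(x), u(y)⟩² / d` of a frame. -/
noncomputable def frameKernel (π : ι → ℝ) (u : ι → Fin d → ℝ) (x y : ι) : ℝ :=
  π y * (u x ⬝ᵥ u y) ^ 2 / d

theorem IsotropicFrame.stationaryKernel (hu : IsotropicFrame π u) (hd : 1 ≤ d) :
    StationaryKernel π (frameKernel π u) where
  nonneg x y := div_nonneg (mul_nonneg (hu.mem_stdSimplex.1 y) (sq_nonneg _)) d.cast_nonneg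
  sum_right x := by
    simp only [frameKernel]
    rw [← Finset.sum_div, hu.sum_mul_dotProduct_sq, hu.dotProduct_self, div_self]
    positivity
  sum_mul_left y := by
    have hd0 : (d : ℝ) ≠ 0 := by positivity
    calc ∑ x, π x * frameKernel π u x y = π y / d * ∑ x, π x * (u y ⬝ᵥ u x) ^ 2 := by
          rw [Finset.mul_sum]
          refine Finset.sum_congr rfl fun x _ => ?_
          rw [frameKernel, dotProduct_comm (u x)]
          ring
      _ = π y := by rw [hu.sum_mul_dotProduct_sq, hu.dotProduct_self, div_mul_cancel₀ _ hd0]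

theorem IsotropicFrame.abs_dotProduct_frame_le (hu : IsotropicFrame π u) (x y : ι) :
    |u x ⬝ᵥ u y| ≤ d :=
  hu.abs_dotProduct_le d.cast_nonneg (by rw [hu.dotProduct_self, sq]) y

theorem IsotropicFrame.sum_mul_abs_rpow_le (hu : IsotropicFrame π u) (hd : 1 ≤ d) {q : ℝ}
    (hq : 2 ≤ q) (x : ι) : ∑ y, π y * |u x ⬝ᵥ u y| ^ q ≤ (d : ℝ) ^ (q - 1) := by
  have hd0 : (0 : ℝ) < d := by exact_mod_cast hd
  calc ∑ y, π y * |u x ⬝ᵥ u y| ^ q ≤ ∑ y, π y * ((d : ℝ) ^ (q - 2) * (u x ⬝ᵥ u y) ^ 2) := by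
        gcongr with y _
        · exact hu.mem_stdSimplex.1 y
        rw [← sq_abs, ← Real.rpow_two, show q = q - 2 + 2 by ring,
          Real.rpow_add_of_nonneg (abs_nonneg _) (by linarith) (by norm_num), add_sub_cancel_right]
        gcongr
        exact hu.abs_dotProduct_frame_le x y
    _ = (d : ℝ) ^ (q - 1) := by
        simp_rw [mul_left_comm (π _)]
        rw [← Finset.mul_sum, hu.sum_mul_dotProduct_sq, hu.dotProduct_self,
          ← Real.rpow_add_one hd0.ne']
        ring_nf

theorem IsotropicFrame.sum_smul_penalty_le (hu : IsotropicFrame π u) (hd : 1 ≤ d) {q : ℝ}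
    (hq : 2 ≤ q) (f : ι → ℝ) (c : ℝ) (x : ι) :
    ∑ y, π y * (((c • u x) ⬝ᵥ u y) ^ 2 * f y + |(c • u x) ⬝ᵥ u y| ^ q) ≤
      c ^ 2 * (d * ∑ y, frameKernel π u x y * f y) + |c| ^ q * (d : ℝ) ^ (q - 1) := by
  have hd0 : (d : ℝ) ≠ 0 := by positivity
  calc _ = c ^ 2 * (d * ∑ y, frameKernel π u x y * f y) +
          |c| ^ q * ∑ y, π y * |u x ⬝ᵥ u y| ^ q := by
        simp only [Finset.mul_sum, ← Finset.sum_add_distrib]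
        refine Finset.sum_congr rfl fun y _ => ?_
        rw [smul_dotProduct, smul_eq_mul, abs_mul, Real.mul_rpow (abs_nonneg _) (abs_nonneg _),
          frameKernel]
        field_simp
    _ ≤ _ := by
        gcongr
        exact hu.sum_mul_abs_rpow_le hd hq x

theorem descent_penalty_le (h1 : 1 < p) (h2 : p < 2) {C η ρ D A : ℝ} (hC : 1 ≤ C)
    (hη : 1024 * C * η = 1) (hρ : 0 < ρ) (hD : 0 < D) (hA : A ≤ 256 * ρ ^ (2 - p)) :
    C * ((η * ρ ^ (p - 1) / D) ^ 2 * (D * A) +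
        (η * ρ ^ (p - 1) / D) ^ (p / (p - 1)) * D ^ (p / (p - 1) - 1)) ≤
      η / 2 * ρ ^ p / D := by
  have hp1 : 0 < p - 1 := by linarith
  have hη0 : 0 < η := pos_of_mul_pos_right (hη.symm ▸ one_pos) (by positivity)
  have hη1 : η ≤ 1 := by nlinarith
  have hquad : (η * ρ ^ (p - 1) / D) ^ 2 * (D * A) ≤ 256 * η ^ 2 * (ρ ^ p / D) := by
    calc _ ≤ (η * ρ ^ (p - 1) / D) ^ 2 * (D * (256 * ρ ^ (2 - p))) := by gcongr
      _ = 256 * η ^ 2 * (ρ ^ (p - 1) * ρ ^ (p - 1) * ρ ^ (2 - p) / D) := by field_simp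
      _ = _ := by
          rw [← Real.rpow_add hρ, ← Real.rpow_add hρ]
          ring_nf
  have htail : (η * ρ ^ (p - 1) / D) ^ (p / (p - 1)) * D ^ (p / (p - 1) - 1) ≤
      η ^ 2 * (ρ ^ p / D) := by
    have hq : (2 : ℝ) ≤ p / (p - 1) := by rw [le_div_iff₀ hp1]; linarith
    calc _ = η ^ (p / (p - 1)) * (ρ ^ p / D) := by
          rw [Real.div_rpow (by positivity) hD.le, Real.mul_rpow hη0.le (by positivity),
            ← Real.rpow_mul hρ.le, mul_div_cancel₀ _ hp1.ne', Real.rpow_sub hD, Real.rpow_one]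
          field_simp
      _ ≤ η ^ (2 : ℝ) * (ρ ^ p / D) := by
          exact mul_le_mul_of_nonneg_right (Real.rpow_le_rpow_of_exponent_ge hη0 hη1 hq)
            (by positivity)
      _ = _ := by rw [Real.rpow_two]
  calc _ ≤ C * (256 * η ^ 2 * (ρ ^ p / D) + η ^ 2 * (ρ ^ p / D)) := by gcongr
    _ = 257 / 1024 * (1024 * C * η) * (η * (ρ ^ p / D)) := by ring
    _ ≤ 1 / 2 * (η * (ρ ^ p / D)) := by
        rw [hη]
        gcongr
        norm_num
    _ = _ := by ring

theorem dualPotential_sub_drop (hu : IsotropicFrame π u) (hd : 1 ≤ d) (h1 : 1 < p) (h2 : p < 2)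
    {C η ρ : ℝ} (hC : GapConjugateBound p C) (hC1 : 1 ≤ C) (hη : 1024 * C * η = 1) (hρ : 0 < ρ)
    {z a : Fin d → ℝ} {x : ι} {σ : Bool}
    (hmean : ∑ y, frameKernel π u x y * |dualMaximizer π u p z ⬝ᵥ u y| ^ (2 - p) ≤
      256 * ρ ^ (2 - p))
    (hgap : ρ ≤ boolSign σ * ((a - dualMaximizer π u p z) ⬝ᵥ u x)) :
    dualPotential π u p (z + (boolSign σ * (η * ρ ^ (p - 1) / d)) • u x) -
        (z + (boolSign σ * (η * ρ ^ (p - 1) / d)) • u x) ⬝ᵥ a + η / 2 * ρ ^ p / d ≤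
      dualPotential π u p z - z ⬝ᵥ a := by
  set c := η * ρ ^ (p - 1) / d with hc
  have hd0 : (0 : ℝ) < d := by exact_mod_cast hd
  have hη0 : 0 < η := pos_of_mul_pos_right (hη.symm ▸ one_pos) (by positivity)
  have hc0 : 0 < c := by positivity
  have hstep := dualPotential_add_le hu h1 h2 hC z ((boolSign σ * c) • u x)
  have hq : 2 ≤ p / (p - 1) := by rw [le_div_iff₀ (by linarith)]; linarith
  have hpenalty := mul_le_mul_of_nonneg_left (hu.sum_smul_penalty_le hd hq
    (fun y => |dualMaximizer π u p z ⬝ᵥ u y| ^ (2 - p)) (boolSign σ * c) x)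
    (zero_le_one.trans hC1)
  have habs : |boolSign σ * c| = c := by
    cases σ <;> simp [boolSign, abs_of_pos hc0]
  rw [habs, mul_pow, boolSign_sq, one_mul] at hpenalty
  have hdescent := hstep.trans (add_le_add_right
    (hpenalty.trans (descent_penalty_le h1 h2 hC1 hη hρ hd0 hmean)) _)
  have hgain : η * ρ ^ p / d ≤ c * (boolSign σ * ((a - dualMaximizer π u p z) ⬝ᵥ u x)) := by
    calc η * ρ ^ p / d = c * ρ := by
          rw [hc, show p = p - 1 + 1 by ring, Real.rpow_add_one hρ.ne', add_sub_cancel_right]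
          ring
      _ ≤ _ := by gcongr
  simp only [add_dotProduct, smul_dotProduct, sub_dotProduct, smul_eq_mul,
    dotProduct_comm (u x)] at hdescent hgain ⊢
  linarith [show η / 2 * ρ ^ p / d = η * ρ ^ p / d / 2 by ring]

/-- The radius to which a coded vector `b` approximates at `x`: the base radius `r`, or the local
size of `b` around `x` if that is larger. -/
noncomputable def localRadius (π : ι → ℝ) (u : ι → Fin d → ℝ) (p r : ℝ) (b : Fin d → ℝ) (x : ι) :
    ℝ :=
  max r (((∑ y, frameKernel π u x y * |b ⬝ᵥ u y| ^ (2 - p)) / 256) ^ (1 / (2 - p)))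

theorem localRadius_rpow (hu : IsotropicFrame π u) (hd : 1 ≤ d) (h2 : p < 2) {r : ℝ} (hr : 0 ≤ r)
    (b : Fin d → ℝ) (x : ι) :
    localRadius π u p r b x ^ (2 - p) =
      max (r ^ (2 - p)) ((∑ y, frameKernel π u x y * |b ⬝ᵥ u y| ^ (2 - p)) / 256) := by
  have hmean : 0 ≤ (∑ y, frameKernel π u x y * |b ⬝ᵥ u y| ^ (2 - p)) / 256 :=
    div_nonneg (Finset.sum_nonneg fun y _ => mul_nonneg ((hu.stationaryKernel hd).nonneg x y)
      (Real.rpow_nonneg (abs_nonneg _) _)) (by norm_num)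
  have hmono := Real.monotoneOn_rpow_Ici_of_exponent_nonneg (show 0 ≤ 2 - p by linarith)
  rw [localRadius, hmono.map_max hr (Real.rpow_nonneg hmean _), ← Real.rpow_mul hmean,
    one_div_mul_cancel (by linarith), Real.rpow_one]

/-- The dual vector coded by a list: each letter, a signed point with a scale, moves the vector
along the frame by an amount set by the local radius, at that scale, of the current maximizer. -/
noncomputable def codedDual {σ : Type*} (π : ι → ℝ) (u : ι → Fin d → ℝ) (p η : ℝ) (r : σ → ℝ) :
    List ((ι × Bool) × σ) → Fin d → ℝ
  | [] => 0
  | e :: l => codedDual π u p η r l + (boolSign e.1.2 * (η * localRadius π u p (r e.2)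
      (dualMaximizer π u p (codedDual π u p η r l)) e.1.1 ^ (p - 1) / d)) • u e.1.1

theorem exists_list_abs_sub_le_localRadius {σ : Type*} {r : σ → ℝ} (hu : IsotropicFrame π u)
    (hd : 1 ≤ d) (h1 : 1 < p) (h2 : p < 2) {C η : ℝ} (hC : GapConjugateBound p C) (hC1 : 1 ≤ C)
    (hη : 1024 * C * η = 1) {a : Fin d → ℝ} (ha : a ⬝ᵥ a ≤ d) {s : σ} (hr : 0 < r s)
    (l : List ((ι × Bool) × σ)) :
    ∃ l' : List ((ι × Bool) × σ),
      (∀ x, |a ⬝ᵥ u x - dualMaximizer π u p (codedDual π u p η r l') ⬝ᵥ u x| ≤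
        localRadius π u p (r s) (dualMaximizer π u p (codedDual π u p η r l')) x) ∧
      l.length ≤ l'.length ∧
      dualPotential π u p (codedDual π u p η r l') - codedDual π u p η r l' ⬝ᵥ a +
          η / 2 * r s ^ p / d * (l'.length - l.length) ≤
        dualPotential π u p (codedDual π u p η r l) - codedDual π u p η r l ⬝ᵥ a := by
  have hη0 : 0 < η := pos_of_mul_pos_right (hη.symm ▸ one_pos) (by positivity)
  have : (0 : ℝ) < d := by exact_mod_cast hd
  refine exists_list_of_potential_drop (m := -pEnergy π u p a)
    (P := fun l => dualPotential π u p (codedDual π u p η r l) - codedDual π u p η r l ⬝ᵥ a)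
    (by positivity) (fun l => ?_) (fun l hl => ?_) l
  · linarith [dotProduct_sub_pEnergy_le_dualPotential (π := π) (u := u) (show 0 ≤ p by linarith)
      (codedDual π u p η r l) ha]
  push Not at hl
  obtain ⟨x, hx⟩ := hl
  set z := codedDual π u p η r l
  set ρ := localRadius π u p (r s) (dualMaximizer π u p z) x with hρ
  have hle : r s ≤ ρ := le_max_left _ _
  have hρ0 : 0 < ρ := hr.trans_le hle
  have hmean : ∑ y, frameKernel π u x y * |dualMaximizer π u p z ⬝ᵥ u y| ^ (2 - p) ≤
      256 * ρ ^ (2 - p) := by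
    rw [hρ, localRadius_rpow hu hd h2 hr.le, ← div_le_iff₀' (by norm_num)]
    exact le_max_right _ _
  obtain ⟨b, hb⟩ := exists_boolSign_mul_eq_abs ((a - dualMaximizer π u p z) ⬝ᵥ u x)
  have hdrop := dualPotential_sub_drop hu hd h1 h2 hC hC1 hη hρ0 hmean (σ := b) (a := a)
    (by rw [hb, sub_dotProduct]; exact hx.le)
  refine ⟨((x, b), s), le_trans ?_ hdrop⟩
  rw [codedDual]
  gcongr

end DualDescent

theorem exists_codes_of_scale_steps {E : Type*} {P : List E → ℝ} {good : ℕ → List E → Prop}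
    {w : ℕ → ℝ} {κ m : ℝ} (hκ : 0 < κ) (hm : ∀ l, m ≤ P l)
    (hw : ∀ n, ∑ s ∈ Finset.range (n + 1), w s ≤ 2 * w n) {n : ℕ}
    (hstep : ∀ s < n, ∀ l, ∃ l', good s l' ∧ l.length ≤ l'.length ∧
      P l' + κ * w s * (l'.length - l.length) ≤ P l) (l : List E) :
    ∃ c : ℕ → List E, (∀ s < n, good s (c s)) ∧
      ∑ s ∈ Finset.range n, w s * (c s).length ≤
        (∑ s ∈ Finset.range n, w s) * l.length + 2 / κ * (P l - m) := by
  induction n generalizing l with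
  | zero =>
    refine ⟨fun _ => [], by simp, ?_⟩
    have := mul_nonneg (show 0 ≤ 2 / κ by positivity) (sub_nonneg.2 (hm l))
    simpa using this
  | succ n ih =>
    obtain ⟨l', hgood, hlength, hl'⟩ := hstep n n.lt_succ_self l
    obtain ⟨c, hc, hsum⟩ := ih (fun s hs => hstep s (hs.trans n.lt_succ_self)) l'
    refine ⟨Function.update c n l', fun s hs => ?_, ?_⟩
    · rcases (Nat.lt_succ_iff.1 hs).eq_or_lt with rfl | hs
      · simpa using hgood
      · simpa [hs.ne] using hc s hs
    have hrest : ∑ s ∈ Finset.range n, w s * ((Function.update c n l' s).length : ℝ) =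
        ∑ s ∈ Finset.range n, w s * (c s).length :=
      Finset.sum_congr rfl fun s hs => by
        rw [Function.update_of_ne (Finset.mem_range.1 hs).ne]
    have hlength : (0 : ℝ) ≤ l'.length - l.length := sub_nonneg.2 (by exact_mod_cast hlength)
    have hdrop : 2 / κ * (P l' - m) + 2 * w n * (l'.length - l.length) ≤ 2 / κ * (P l - m) := by
      calc _ = 2 / κ * (P l' + κ * w n * (l'.length - l.length) - m) := by
            field_simp
            ring
        _ ≤ _ := by gcongr
    have hgeom := mul_le_mul_of_nonneg_right (hw n) hlength
    rw [Finset.sum_range_succ] at hgeom ⊢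
    rw [hrest, Function.update_self, Finset.sum_range_succ]
    linarith

/-! ### Samples for `1 < p < 2` -/

section SelfImprovement

variable {ι : Type*} [Fintype ι] {π : ι → ℝ} {W : ι → ι → ℝ}

theorem half_add_rpow_le {r φ Y : ℝ} (hr : 0 ≤ r) (hφ : 0 ≤ φ) (hY : 0 ≤ Y) :
    ((φ + Y) / 2) ^ r ≤ φ ^ r + Y ^ r := by
  rcases le_total φ Y with hle | hle
  · exact (Real.rpow_le_rpow (by positivity) (by linarith) hr).trans
      (le_add_of_nonneg_left (Real.rpow_nonneg hφ r))
  · exact (Real.rpow_le_rpow (by positivity) (by linarith) hr).trans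
      (le_add_of_nonneg_right (Real.rpow_nonneg hY r))

theorem StationaryKernel.rpow_le_sum (hW : StationaryKernel π W) {r : ℝ} (hr : 1 ≤ r)
    {φ Y : ι → ℝ} (hφ : ∀ x, 0 ≤ φ x) (hY : ∀ x, 0 ≤ Y x) {x : ι}
    (hx : Y x ≤ 1 / 256 * ∑ y, W x y * (φ y + Y y)) :
    Y x ^ r ≤ (1 / 128) ^ r * ∑ y, W x y * (φ y ^ r + Y y ^ r) := by
  have hhalf : ∀ y, 0 ≤ (φ y + Y y) / 2 := fun y => by linarith [hφ y, hY y]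
  calc Y x ^ r ≤ (1 / 128 * ∑ y, W x y * ((φ y + Y y) / 2)) ^ r := by
        refine Real.rpow_le_rpow (hY x) (hx.trans_eq ?_) (by linarith)
        simp_rw [← mul_div_assoc, ← Finset.sum_div]
        ring
    _ = (1 / 128) ^ r * (∑ y, W x y * ((φ y + Y y) / 2)) ^ r :=
        Real.mul_rpow (by norm_num) (Finset.sum_nonneg fun y _ =>
          mul_nonneg (hW.nonneg x y) (hhalf y))
    _ ≤ (1 / 128) ^ r * ∑ y, W x y * ((φ y + Y y) / 2) ^ r := by
        gcongr
        exact Real.rpow_arith_mean_le_arith_mean_rpow Finset.univ (W x) _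
          (fun y _ => hW.nonneg x y) (hW.sum_right x) (fun y _ => hhalf y) hr
    _ ≤ _ := by
        gcongr with y _
        · exact hW.nonneg x y
        exact half_add_rpow_le (by linarith) (hφ y) (hY y)

theorem StationaryKernel.sum_mul_sum (hW : StationaryKernel π W) (f : ι → ℝ) :
    ∑ x, π x * ∑ y, W x y * f y = ∑ y, π y * f y := by
  simp_rw [Finset.mul_sum, ← mul_assoc]
  rw [Finset.sum_comm]
  simp_rw [← Finset.sum_mul, hW.sum_mul_left]

theorem StationaryKernel.sum_mul_rpow_le (hW : StationaryKernel π W) (hπ : ∀ x, 0 ≤ π x) {r : ℝ}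
    (hr : 1 ≤ r) {φ Y : ι → ℝ} (hφ : ∀ x, 0 ≤ φ x) (hφ1 : ∑ x, π x * φ x ^ r = 1)
    (hY : ∀ x, 0 ≤ Y x) (hle : ∀ x, Y x ≤ 1 / 256 * ∑ y, W x y * (φ y + Y y)) :
    ∑ x, π x * Y x ^ r ≤ 2 * (1 / 128) ^ r := by
  have hself : ∑ x, π x * Y x ^ r ≤ (1 / 128) ^ r * (1 + ∑ x, π x * Y x ^ r) := by
    calc ∑ x, π x * Y x ^ r
        ≤ ∑ x, π x * ((1 / 128) ^ r * ∑ y, W x y * (φ y ^ r + Y y ^ r)) := by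
          gcongr with x _
          · exact hπ x
          exact hW.rpow_le_sum hr hφ hY (hle x)
      _ = _ := by
          simp_rw [mul_left_comm (π _)]
          rw [← Finset.mul_sum, hW.sum_mul_sum]
          simp_rw [mul_add (π _), Finset.sum_add_distrib, hφ1]
  have hsmall : (1 / 128 : ℝ) ^ r ≤ 1 / 128 := by
    simpa using Real.rpow_le_rpow_of_exponent_ge (show (0 : ℝ) < 1 / 128 by norm_num)
      (by norm_num) hr
  have hnonneg : 0 ≤ ∑ x, π x * Y x ^ r :=
    Finset.sum_nonneg fun x _ => mul_nonneg (hπ x) (Real.rpow_nonneg (hY x) r)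
  nlinarith

theorem StationaryKernel.exists_common_excess (hW : StationaryKernel π W) {σ : Type*} [Finite σ]
    [Nonempty σ] {φ : ι → ℝ} (hφ : ∀ x, 0 ≤ φ x) {q : σ → ι → ℝ} {e : σ → ℝ} (he : ∀ s, 0 ≤ e s)
    (hq : ∀ s x, q s x ≤ e s + 1 / 256 * ∑ y, W x y * (φ y + q s y)) :
    ∃ Y : ι → ℝ, (∀ x, 0 ≤ Y x) ∧ (∀ s x, q s x ≤ Y x + 2 * e s) ∧
      ∀ x, Y x ≤ 1 / 256 * ∑ y, W x y * (φ y + Y y) := by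
  set excess : σ → ι → ℝ := fun s x => max 0 (q s x - 2 * e s)
  set Y : ι → ℝ := fun x => ⨆ s, excess s x
  have hle : ∀ s x, excess s x ≤ Y x := fun s x =>
    le_ciSup (f := fun s => excess s x) (Set.finite_range _).bddAbove s
  have hY : ∀ x, 0 ≤ Y x := fun x =>
    (le_max_left _ _).trans (hle (Classical.arbitrary σ) x)
  have hqY : ∀ s x, q s x ≤ Y x + 2 * e s := fun s x =>
    sub_le_iff_le_add.1 ((le_max_right _ _).trans (hle s x))
  refine ⟨Y, hY, hqY, fun x => ciSup_le fun s => max_le ?_ ?_⟩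
  · exact mul_nonneg (by norm_num) (Finset.sum_nonneg fun y _ =>
      mul_nonneg (hW.nonneg x y) (add_nonneg (hφ y) (hY y)))
  have hsum : ∑ y, W x y * (φ y + q s y) ≤ ∑ y, W x y * (φ y + Y y) + 2 * e s := by
    calc ∑ y, W x y * (φ y + q s y) ≤ ∑ y, W x y * (φ y + Y y + 2 * e s) :=
          Finset.sum_le_sum fun y _ => mul_le_mul_of_nonneg_left (by linarith [hqY s y])
            (hW.nonneg x y)
      _ = _ := by
          simp_rw [mul_add _ (_ + _) (2 * e s), Finset.sum_add_distrib, ← Finset.sum_mul,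
            hW.sum_right, one_mul]
  linarith [hq s x, he s]

theorem StationaryKernel.exists_radius_excess (hW : StationaryKernel π W) (hπ : ∀ x, 0 ≤ π x)
    {α r : ℝ} (hα : 0 < α) (hα1 : α ≤ 1) (hr : 1 ≤ r) {F : ι → ℝ}
    (hF : ∑ x, π x * |F x| ^ (α * r) = 1) {σ : Type*} [Finite σ] [Nonempty σ] {h ρ : σ → ι → ℝ}
    {e : σ → ℝ} (he : ∀ s, 0 ≤ e s) (hFh : ∀ s x, |F x - h s x| ≤ ρ s x)
    (hρ : ∀ s x, ρ s x ^ α ≤ e s + 1 / 256 * ∑ y, W x y * |h s y| ^ α) :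
    ∃ Y : ι → ℝ, (∀ x, 0 ≤ Y x) ∧ (∀ s x, ρ s x ^ α ≤ Y x + 2 * e s) ∧
      ∑ x, π x * Y x ^ r ≤ 2 * (1 / 128) ^ r := by
  have hpow : ∀ x, 0 ≤ |F x| ^ α := fun x => Real.rpow_nonneg (abs_nonneg _) α
  obtain ⟨Y, hY, hρY, hle⟩ := hW.exists_common_excess hpow (q := fun s x => ρ s x ^ α) he
    fun s x => (hρ s x).trans (by
      gcongr with y _
      · exact hW.nonneg x y
      have habs : |h s y| ≤ |F y| + ρ s y := by
        linarith [abs_sub_abs_le_abs_sub (h s y) (F y), hFh s y, abs_sub_comm (F y) (h s y)]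
      exact (Real.rpow_le_rpow (abs_nonneg _) habs hα.le).trans
        (Real.rpow_add_le_add_rpow (abs_nonneg _) ((abs_nonneg _).trans (hFh s y)) hα.le hα1))
  refine ⟨Y, hY, hρY, hW.sum_mul_rpow_le hπ hr hpow ?_ hY hle⟩
  simpa only [← Real.rpow_mul (abs_nonneg _)] using hF

end SelfImprovement

section SmallExponent

variable {ι : Type*} [Fintype ι] {π : ι → ℝ} {p : ℝ}

theorem sum_exceptional_le_quarter (hπ : ∀ x, 0 ≤ π x) {α r : ℝ} (hα1 : α ≤ 1) (hr : 1 ≤ r)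
    {F Y : ι → ℝ} (hY : ∀ x, 0 ≤ Y x) (hYr : ∑ x, π x * Y x ^ r ≤ 2 * (1 / 128) ^ r) :
    ∑ x with |F x| ^ α ≤ 2 * 8 ^ α * Y x, π x * |F x| ^ (α * r) ≤ 1 / 4 := by
  have h8 : (8 : ℝ) ^ α ≤ 8 := by
    simpa using Real.rpow_le_rpow_of_exponent_le (show (1 : ℝ) ≤ 8 by norm_num) hα1
  calc ∑ x with |F x| ^ α ≤ 2 * 8 ^ α * Y x, π x * |F x| ^ (α * r)
      ≤ ∑ x with |F x| ^ α ≤ 2 * 8 ^ α * Y x, π x * (16 ^ r * Y x ^ r) := by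
        gcongr with x hx
        · exact hπ x
        have hx16 : |F x| ^ α ≤ 16 * Y x := by nlinarith [(Finset.mem_filter_univ x).1 hx, hY x]
        rw [Real.rpow_mul (abs_nonneg _), ← Real.mul_rpow (by norm_num) (hY x)]
        gcongr
    _ ≤ ∑ x, π x * (16 ^ r * Y x ^ r) :=
        Finset.sum_le_sum_of_subset_of_nonneg (Finset.filter_subset _ _) fun x _ _ =>
          mul_nonneg (hπ x) (mul_nonneg (by positivity) (Real.rpow_nonneg (hY x) r))
    _ ≤ 16 ^ r * (2 * (1 / 128) ^ r) := by
        simp_rw [mul_left_comm (π _)]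
        rw [← Finset.mul_sum]
        gcongr
    _ = 2 * (1 / 8) ^ r := by
        rw [mul_left_comm, ← Real.mul_rpow (by norm_num) (by norm_num)]
        norm_num
    _ ≤ 2 * (1 / 8) ^ (1 : ℝ) :=
        mul_le_mul_of_nonneg_left (Real.rpow_le_rpow_of_exponent_ge (by norm_num) (by norm_num) hr)
          zero_le_two
    _ = 1 / 4 := by norm_num

theorem StationaryKernel.exists_approxLevelSets {W : ι → ι → ℝ} (hW : StationaryKernel π W)
    (hπ : ∀ x, 0 ≤ π x) {α r : ℝ} (hα : 0 < α) (hα1 : α ≤ 1) (hr : 1 ≤ r) {F : ι → ℝ}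
    (hF : ∑ x, π x * |F x| ^ (α * r) = 1) {S : ℕ} (hFS : ∀ x, |F x| < 2 * dyadicLevel S)
    {h ρ : ℕ → ι → ℝ} (hFh : ∀ s ≤ S, ∀ x, |F x - h s x| ≤ ρ s x)
    (hρ : ∀ s ≤ S, ∀ x, ρ s x ^ α ≤
      1 / 4 * (dyadicLevel s / 4) ^ α + 1 / 256 * ∑ y, W x y * |h s y| ^ α) :
    ∃ B, ApproxLevelSets π (α * r) F S
      (fun s => {x | 3 / 4 * dyadicLevel s ≤ |h s x| ∧ ρ s x ≤ dyadicLevel s / 4}) B := by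
  have hlevel : ∀ s, 0 < dyadicLevel s / 4 := fun s => by linarith [dyadicLevel_pos s]
  obtain ⟨Y, hY, hρY, hYr⟩ := hW.exists_radius_excess hπ hα hα1 hr hF
    (h := fun s : Fin (S + 1) => h s) (ρ := fun s => ρ s)
    (fun s => mul_nonneg (by norm_num) (Real.rpow_nonneg (hlevel s).le α))
    (fun s => hFh s (Fin.is_le s)) (fun s => hρ s (Fin.is_le s))
  refine ⟨({x | |F x| ^ α ≤ 2 * 8 ^ α * Y x} : Finset ι), hFS, ?_, ?_,
    sum_exceptional_le_quarter hπ hα1 hr hY hYr⟩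
  · intro s hs x hx
    obtain ⟨hlow, hsmall⟩ := (Finset.mem_filter_univ x).1 hx
    have hclose := (abs_sub_abs_le_abs_sub (h s x) (F x)).trans_eq (abs_sub_comm _ _)
    linarith [hFh s hs x, hlevel s]
  · intro s hs x hx hle hlt
    replace hx : 2 * 8 ^ α * Y x < |F x| ^ α := by simpa using hx
    have hFx : |F x| ^ α ≤ 8 ^ α * (dyadicLevel s / 4) ^ α := by
      rw [← Real.mul_rpow (by norm_num) (hlevel s).le]
      exact Real.rpow_le_rpow (abs_nonneg _) (by linarith) hα.le
    have hYx : 2 * Y x ≤ (dyadicLevel s / 4) ^ α :=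
      le_of_mul_le_mul_left (show (8 : ℝ) ^ α * (2 * Y x) ≤ 8 ^ α * (dyadicLevel s / 4) ^ α by
        linarith) (by positivity)
    have hρs : ρ s x ≤ dyadicLevel s / 4 := by
      have := hρY ⟨s, Nat.lt_succ_of_le hs⟩ x
      exact (Real.rpow_le_rpow_iff ((abs_nonneg _).trans (hFh s hs x)) (hlevel s).le hα).1
        (by linarith)
    have hclose := abs_sub_abs_le_abs_sub (F x) (h s x)
    exact (Finset.mem_filter_univ x).2 ⟨by linarith [hFh s hs x], hρs⟩

variable {d : ℕ} {u : ι → Fin d → ℝ}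

theorem exists_codes_abs_sub_le_localRadius (hu : IsotropicFrame π u) (hd : 1 ≤ d) (h1 : 1 < p)
    (h2 : p < 2) {C η lam : ℝ} (hC : GapConjugateBound p C) (hC1 : 1 ≤ C) (hη : 1024 * C * η = 1)
    (hlam : 0 < lam) {a : Fin d → ℝ} (ha : ∑ x, π x * |a ⬝ᵥ u x| ^ p = 1) (S : ℕ)
    {b : List ((ι × Bool) × Fin (S + 1)) → Fin d → ℝ} (hb : b = fun l => dualMaximizer π u p
      (codedDual π u p η (fun s : Fin (S + 1) => lam * dyadicLevel s) l)) :
    ∃ c : ℕ → List ((ι × Bool) × Fin (S + 1)),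
      (∀ s < S + 1, ∀ x, |a ⬝ᵥ u x - b (c s) ⬝ᵥ u x| ≤
        localRadius π u p (lam * dyadicLevel s) (b (c s)) x) ∧
      ∑ s ∈ Finset.range (S + 1), dyadicLevel s ^ p * (c s).length ≤ 4 / (η * lam ^ p) * d := by
  have hη0 : 0 < η := pos_of_mul_pos_right (hη.symm ▸ one_pos) (by positivity)
  have : (0 : ℝ) < d := by exact_mod_cast hd
  have had := hu.dotProduct_self_le h1.le hd ha
  set z := codedDual π u p η fun s : Fin (S + 1) => lam * dyadicLevel s
  have hstep : ∀ s < S + 1, ∀ l, ∃ l' : List ((ι × Bool) × Fin (S + 1)),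
      (∀ x, |a ⬝ᵥ u x - b l' ⬝ᵥ u x| ≤ localRadius π u p (lam * dyadicLevel s) (b l') x) ∧
      l.length ≤ l'.length ∧ dualPotential π u p (z l') - z l' ⬝ᵥ a +
        η / 2 * lam ^ p / d * dyadicLevel s ^ p * (l'.length - l.length) ≤
          dualPotential π u p (z l) - z l ⬝ᵥ a := by
    intro s hs l
    have hr : 0 < lam * dyadicLevel s := mul_pos hlam (dyadicLevel_pos s)
    have := exists_list_abs_sub_le_localRadius hu hd h1 h2 hC hC1 hη had (s := ⟨s, hs⟩)
      (r := fun s : Fin (S + 1) => lam * dyadicLevel s) hr l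
    rw [Real.mul_rpow hlam.le (dyadicLevel_pos s).le, ← mul_assoc, mul_div_right_comm] at this
    rwa [hb]
  have hbound : ∀ l, -1 ≤ dualPotential π u p (z l) - z l ⬝ᵥ a := fun l => by
    have := dotProduct_sub_pEnergy_le_dualPotential (π := π) (u := u) (p := p) (by linarith)
      (z l) had
    rw [pEnergy, ha] at this
    linarith
  obtain ⟨c, hc, hlength⟩ := exists_codes_of_scale_steps (by positivity) hbound
    (sum_dyadicLevel_rpow_le_two_mul h1.le) hstep []
  refine ⟨c, hc, hlength.trans ?_⟩
  have hstart : dualPotential π u p (z []) - z [] ⬝ᵥ a ≤ 0 := by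
    simpa [z, codedDual] using dualPotential_zero_le hu.mem_stdSimplex.1
  calc _ ≤ 2 / (η / 2 * lam ^ p / d) * 1 := by
        rw [List.length_nil, Nat.cast_zero, mul_zero, zero_add]
        gcongr
        linarith
    _ = _ := by
        field_simp
        norm_num

theorem exists_codes_approxLevelSets_localRadius (hu : IsotropicFrame π u) (hd : 1 ≤ d)
    (h1 : 1 < p) (h2 : p < 2) {C η lam : ℝ} (hC : GapConjugateBound p C) (hC1 : 1 ≤ C)
    (hη : 1024 * C * η = 1) (hlam : 0 < lam) (hlam' : lam ^ (2 - p) = 1 / 4 * (1 / 4) ^ (2 - p))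
    {a : Fin d → ℝ} (ha : ∑ x, π x * |a ⬝ᵥ u x| ^ p = 1) {S : ℕ}
    (hS : ∀ x, |a ⬝ᵥ u x| < 2 * dyadicLevel S)
    {b : List ((ι × Bool) × Fin (S + 1)) → Fin d → ℝ} (hb : b = fun l => dualMaximizer π u p
      (codedDual π u p η (fun s : Fin (S + 1) => lam * dyadicLevel s) l)) :
    ∃ (c : ℕ → List ((ι × Bool) × Fin (S + 1))) (B : Finset ι),
      ApproxLevelSets π p (fun x => a ⬝ᵥ u x) S (fun s => {x | 3 / 4 * dyadicLevel s ≤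
        |b (c s) ⬝ᵥ u x| ∧
        localRadius π u p (lam * dyadicLevel s) (b (c s)) x ≤ dyadicLevel s / 4}) B ∧
      ∑ s ∈ Finset.range (S + 1), dyadicLevel s ^ p * (c s).length ≤ 4 / (η * lam ^ p) * d := by
  obtain ⟨c, hclose, hlength⟩ := exists_codes_abs_sub_le_localRadius hu hd h1 h2 hC hC1 hη hlam ha
    S hb
  have hα : 0 < 2 - p := by linarith
  have hexponent : (2 - p) * (p / (2 - p)) = p := mul_div_cancel₀ p hα.ne'
  have hkernel := hu.stationaryKernel hd
  have hradius : ∀ s ≤ S, ∀ x, localRadius π u p (lam * dyadicLevel s) (b (c s)) x ^ (2 - p) ≤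
      1 / 4 * (dyadicLevel s / 4) ^ (2 - p) +
        1 / 256 * ∑ y, frameKernel π u x y * |b (c s) ⬝ᵥ u y| ^ (2 - p) := by
    intro s _ x
    have ht := dyadicLevel_pos s
    have hbase : (lam * dyadicLevel s) ^ (2 - p) = 1 / 4 * (dyadicLevel s / 4) ^ (2 - p) := by
      rw [Real.mul_rpow hlam.le ht.le, hlam', div_eq_mul_one_div (dyadicLevel s),
        Real.mul_rpow ht.le (by norm_num)]
      ring
    have hmean : 0 ≤ ∑ y, frameKernel π u x y * |b (c s) ⬝ᵥ u y| ^ (2 - p) :=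
      Finset.sum_nonneg fun y _ => mul_nonneg (hkernel.nonneg x y) (by positivity)
    have hlevel : 0 ≤ 1 / 4 * (dyadicLevel s / 4) ^ (2 - p) := by positivity
    rw [localRadius_rpow hu hd h2 (by positivity), hbase]
    exact max_le (by linarith) (by linarith)
  obtain ⟨B, hB⟩ := hkernel.exists_approxLevelSets hu.mem_stdSimplex.1 hα
    (show 2 - p ≤ 1 by linarith) ((one_le_div hα).2 (show 2 - p ≤ p by linarith))
    (by rwa [hexponent]) hS (h := fun s x => b (c s) ⬝ᵥ u x)
    (fun s hs => hclose s (Nat.lt_succ_of_le hs)) hradius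
  rw [hexponent] at hB
  exact ⟨c, B, hB, hlength⟩

theorem IsotropicFrame.exists_dyadicLevel_bound (hu : IsotropicFrame π u) (hd : 1 ≤ d)
    (h1 : 1 ≤ p) (h2 : p ≤ 2) : ∃ S : ℕ, dyadicLevel S ^ p ≤ d ∧ (S : ℝ) + 1 ≤ 4 * d ∧
      ∀ a, ∑ x, π x * |a ⬝ᵥ u x| ^ p = 1 → ∀ x, |a ⬝ᵥ u x| < 2 * dyadicLevel S := by
  have hp0 : 0 < p := by linarith
  have hd1 : (1 : ℝ) ≤ d := by exact_mod_cast hd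
  have hroot : ((d : ℝ) ^ p⁻¹) ^ p = d := Real.rpow_inv_rpow d.cast_nonneg hp0.ne'
  have hrootd : (d : ℝ) ^ p⁻¹ ≤ d := by
    simpa using Real.rpow_le_rpow_of_exponent_le hd1 (inv_le_one_of_one_le₀ h1)
  obtain ⟨S, hSd, hdS, hS⟩ := exists_top_dyadicLevel (Real.one_le_rpow hd1 (inv_nonneg.2 hp0.le))
  refine ⟨S, (Real.rpow_le_rpow (dyadicLevel_pos S).le hSd hp0.le).trans_eq hroot, by linarith,
    fun a ha x => lt_of_le_of_lt ?_ hdS⟩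
  exact (Real.rpow_le_rpow_iff (abs_nonneg _) (by positivity) hp0).1
    ((hu.abs_dotProduct_rpow_le hp0 h2 ha x).trans_eq hroot.symm)

theorem exists_frameSampling_of_lt_two (h1 : 1 < p) (h2 : p < 2) : ∃ C : ℝ, 0 < C ∧
    FrameSampling p (16 * 4 ^ p) fun n d => C * (d * Real.log (n + d + 2)) := by
  obtain ⟨C, hC1, hC⟩ := exists_gapConjugateBound h1 h2
  obtain ⟨η, hη0, hη⟩ : ∃ η : ℝ, 0 < η ∧ 1024 * C * η = 1 :=
    ⟨1 / (1024 * C), by positivity, mul_one_div_cancel (by positivity)⟩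
  obtain ⟨lam, hlam, hlam'⟩ : ∃ lam : ℝ, 0 < lam ∧ lam ^ (2 - p) = 1 / 4 * (1 / 4) ^ (2 - p) :=
    ⟨(1 / 4 * (1 / 4) ^ (2 - p)) ^ (2 - p)⁻¹, by positivity,
      Real.rpow_inv_rpow (by positivity) (by linarith)⟩
  set C₀ : ℝ := 4 / (η * lam ^ p) + 2
  refine ⟨8 * 2 ^ p * 4 * C₀, by positivity, ?_⟩
  intro ι _ d π u g hd hu hg hg1 M hM
  have := nonempty_of_mem_stdSimplex hu.mem_stdSimplex
  have hd1 : (1 : ℝ) ≤ d := by exact_mod_cast hd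
  have hn1 : (1 : ℝ) ≤ Fintype.card ι := by exact_mod_cast Fintype.card_pos
  have hexp := sixteen_mul_mul_le_exp (Fintype.card_pos (α := ι)) hd
  have hlog : 0 < Real.log (Fintype.card ι + d + 2) := Real.log_pos (by linarith)
  obtain ⟨S, hSd, hS, hbound⟩ := hu.exists_dyadicLevel_bound hd h1.le h2.le
  have hMpos : (0 : ℝ) < M := lt_of_lt_of_le (by positivity) hM
  set b := fun l => dualMaximizer π u p
    (codedDual π u p η (fun s : Fin (S + 1) => lam * dyadicLevel s) l) with hb
  refine exists_isLpSample_of_level_codes hu.mem_stdSimplex hg hg1 h1.le (by exact_mod_cast hMpos)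
    (S := S) (L := 4 * Real.log (Fintype.card ι + d + 2)) ?_ ?_ (fun s l => {x | 3 / 4 *
      dyadicLevel s ≤ |b l ⬝ᵥ u x| ∧ localRadius π u p (lam * dyadicLevel s) (b l) x ≤
        dyadicLevel s / 4}) fun a ha => ?_
  · nlinarith
  · rw [Fintype.card_prod, Fintype.card_prod, Fintype.card_bool, Fintype.card_fin]
    push_cast
    nlinarith
  obtain ⟨c, B, hlevels, hlength⟩ := exists_codes_approxLevelSets_localRadius hu hd h1 h2 hC hC1
    hη hlam hlam' ha (hbound a ha) hb
  refine ⟨c, B, hlevels, ?_⟩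
  have hpowers := sum_dyadicLevel_rpow_le_two_mul h1.le S
  simp_rw [← mul_assoc, ← Finset.sum_mul, mul_add, mul_one, Finset.sum_add_distrib]
  calc 8 * 2 ^ p * ((_ + _) * 4 * Real.log (Fintype.card ι + d + 2))
      ≤ 8 * 2 ^ p * ((4 / (η * lam ^ p) * d + 2 * d) * 4 *
          Real.log (Fintype.card ι + d + 2)) := by
        refine mul_le_mul_of_nonneg_left ?_ (by positivity)
        gcongr
        linarith
    _ ≤ M := by linarith

end SmallExponent

/-! ### Symmetrization and the exponent one -/

section Symmetrization

variable {ι T : Type*} [Fintype ι] [Finite T] [Nonempty T] {π : ι → ℝ}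

theorem iSup_add_abs_add_iSup_sub_abs_le (R φ : T → ℝ) :
    (⨆ t, (R t + |φ t|)) + ⨆ t, (R t - |φ t|) ≤ (⨆ t, (R t + φ t)) + ⨆ t, (R t - φ t) := by
  refine ciSup_add_ciSup_le fun t s => ?_
  have hplus := Finite.le_ciSup fun t => R t + φ t
  have hminus := Finite.le_ciSup fun t => R t - φ t
  have htri := abs_sub_abs_le_abs_sub (φ t) (φ s)
  rcases abs_cases (φ t - φ s) with h | h <;> linarith [h.1, hplus t, hplus s, hminus t, hminus s]

theorem sum_mul_iSup_add_mean_sub_abs_le (hπ : π ∈ stdSimplex ℝ ι) (f : T → ι → ℝ) (R : T → ℝ) :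
    ∑ x, π x * ⨆ t, (R t + (∑ y, π y * |f t y| - |f t x|)) ≤
      ∑ x, π x * (((⨆ t, (R t + 2 * f t x)) + ⨆ t, (R t - 2 * f t x)) / 2) := by
  set P := fun x => ⨆ t, (R t + |2 * f t x|)
  set Q := fun x => ⨆ t, (R t - |2 * f t x|)
  have hmean : ∀ t, R t + 2 * ∑ y, π y * |f t y| ≤ ∑ y, π y * P y := fun t => by
    calc _ = ∑ y, π y * (R t + |2 * f t y|) := by
          simp_rw [mul_add, Finset.sum_add_distrib, ← Finset.sum_mul, hπ.2, one_mul, abs_mul,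
            abs_two, mul_left_comm (π _), ← Finset.mul_sum]
      _ ≤ _ := Finset.sum_le_sum fun y _ => mul_le_mul_of_nonneg_left
          (Finite.le_ciSup (fun t => R t + |2 * f t y|) t) (hπ.1 y)
  have hpoint : ∀ x, ⨆ t, (R t + (∑ y, π y * |f t y| - |f t x|)) ≤
      (∑ y, π y * P y + Q x) / 2 := fun x => by
    refine ciSup_le fun t => ?_
    have hQ := Finite.le_ciSup (fun t => R t - |2 * f t x|) t
    rw [abs_mul, abs_two] at hQ
    linarith [hmean t]
  calc _ ≤ ∑ x, π x * ((∑ y, π y * P y + Q x) / 2) :=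
        Finset.sum_le_sum fun x _ => mul_le_mul_of_nonneg_left (hpoint x) (hπ.1 x)
    _ = ∑ x, π x * ((P x + Q x) / 2) := by
        simp_rw [add_div, mul_add, Finset.sum_add_distrib, ← Finset.sum_mul, hπ.2, one_mul,
          Finset.sum_div, mul_div_assoc]
    _ ≤ _ := Finset.sum_le_sum fun x _ => mul_le_mul_of_nonneg_left
        (div_le_div_of_nonneg_right (iSup_add_abs_add_iSup_sub_abs_le R _) zero_le_two) (hπ.1 x)

/-- The law of a `π`-random point together with an independent fair sign. -/
noncomputable def signedWeight (π : ι → ℝ) (z : ι × Bool) : ℝ := π z.1 / 2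

theorem sum_signedWeight_mul (π : ι → ℝ) (h : ι × Bool → ℝ) :
    ∑ z, signedWeight π z * h z = ∑ x, π x * ((h (x, true) + h (x, false)) / 2) := by
  simp only [Fintype.sum_prod_type, Fintype.sum_bool, signedWeight]
  exact Finset.sum_congr rfl fun x _ => by ring

theorem signedWeight_mem_stdSimplex (hπ : π ∈ stdSimplex ℝ ι) :
    signedWeight π ∈ stdSimplex ℝ (ι × Bool) :=
  ⟨fun z => div_nonneg (hπ.1 z.1) zero_le_two,
    by simpa [hπ.2] using sum_signedWeight_mul π fun _ => 1⟩

theorem sum_iidWeight_mul_iSup_le_signed (hπ : π ∈ stdSimplex ℝ ι) (f : T → ι → ℝ) (n : ℕ)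
    (R : T → ℝ) :
    ∑ ξ, iidWeight π n ξ * ⨆ t, (R t + ∑ i, (∑ y, π y * |f t y| - |f t (ξ i)|)) ≤
      ∑ ζ, iidWeight (signedWeight π) n ζ *
        ⨆ t, (R t + ∑ i, 2 * (boolSign (ζ i).2 * f t (ζ i).1)) := by
  induction n generalizing R with
  | zero => simp [iidWeight]
  | succ n ih =>
    simp only [sum_iidWeight_succ, Fin.sum_univ_succ, Fin.cons_zero, Fin.cons_succ, ← add_assoc]
    set V : (Fin n → ι × Bool) → T → ℝ := fun ζ t => R t + ∑ i, 2 * (boolSign (ζ i).2 * f t (ζ i).1)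
    calc _ ≤ ∑ x, π x * ∑ ζ, iidWeight (signedWeight π) n ζ *
          ⨆ t, (V ζ t + (∑ y, π y * |f t y| - |f t x|)) := by
          refine Finset.sum_le_sum fun x _ => mul_le_mul_of_nonneg_left
            ((ih fun t => R t + (∑ y, π y * |f t y| - |f t x|)).trans_eq ?_) (hπ.1 x)
          simp only [V, add_right_comm]
      _ = ∑ ζ, iidWeight (signedWeight π) n ζ * ∑ x, π x *
          ⨆ t, (V ζ t + (∑ y, π y * |f t y| - |f t x|)) := by
          simp_rw [Finset.mul_sum]
          rw [Finset.sum_comm]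
          simp_rw [mul_left_comm (π _)]
      _ ≤ ∑ ζ, iidWeight (signedWeight π) n ζ * ∑ x, π x *
          (((⨆ t, (V ζ t + 2 * f t x)) + ⨆ t, (V ζ t - 2 * f t x)) / 2) :=
          Finset.sum_le_sum fun ζ _ => mul_le_mul_of_nonneg_left
            (sum_mul_iSup_add_mean_sub_abs_le hπ f (V ζ))
            ((iidWeight_mem_stdSimplex (signedWeight_mem_stdSimplex hπ) n).1 ζ)
      _ = ∑ ζ, iidWeight (signedWeight π) n ζ * ∑ z, signedWeight π z *
          ⨆ t, (V ζ t + 2 * (boolSign z.2 * f t z.1)) := by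
          simp [sum_signedWeight_mul, boolSign, sub_eq_add_neg]
      _ = _ := by
          simp_rw [Finset.mul_sum]
          rw [Finset.sum_comm]
          simp only [mul_left_comm (signedWeight π _), V, add_right_comm]

end Symmetrization

section ExponentOne

variable {ι : Type*} {d M : ℕ} {π : ι → ℝ} {u : ι → Fin d → ℝ}

/-- The signed sum `∑ ± u x` over a sample of signed points. -/
def signedSum (u : ι → Fin d → ℝ) (ζ : Fin M → ι × Bool) : Fin d → ℝ :=
  ∑ i, boolSign (ζ i).2 • u (ζ i).1

theorem dotProduct_signedSum (u : ι → Fin d → ℝ) (a : Fin d → ℝ) (ζ : Fin M → ι × Bool) :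
    a ⬝ᵥ signedSum u ζ = ∑ i, boolSign (ζ i).2 * (a ⬝ᵥ u (ζ i).1) := by
  simp only [signedSum, dotProduct_sum, dotProduct_smul, smul_eq_mul]

theorem exp_add_exp_neg_le {k : ℝ} (hk : |k| ≤ 1) :
    (Real.exp k + Real.exp (-k)) / 2 ≤ 1 + k ^ 2 := by
  have hk2 : k ^ 2 ≤ 1 := by rwa [sq_le_one_iff_abs_le_one]
  have habs : |k ^ 2 / 2| = k ^ 2 / 2 := abs_of_nonneg (by positivity)
  have hexp := Real.abs_exp_sub_one_le (x := k ^ 2 / 2) (by rw [habs]; linarith)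
  rw [habs] at hexp
  rw [← Real.cosh_eq]
  linarith [Real.cosh_le_exp_half_sq k, le_of_abs_le hexp]

variable [Fintype ι]

theorem IsotropicFrame.sum_iidWeight_mul_exp_signedSum_le (hu : IsotropicFrame π u) {lam : ℝ}
    (hlam : |lam| * d ≤ 1) (M : ℕ) (y : ι) :
    ∑ ζ : Fin M → ι × Bool, iidWeight (signedWeight π) M ζ *
      Real.exp (lam * (u y ⬝ᵥ signedSum u ζ)) ≤ Real.exp (lam ^ 2 * d * M) := by
  have hstep : ∑ z, signedWeight π z * Real.exp (lam * (boolSign z.2 * (u y ⬝ᵥ u z.1))) ≤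
      Real.exp (lam ^ 2 * d) := by
    calc _ = ∑ x, π x *
          ((Real.exp (lam * (u y ⬝ᵥ u x)) + Real.exp (-(lam * (u y ⬝ᵥ u x)))) / 2) := by
          simp [sum_signedWeight_mul, boolSign]
      _ ≤ ∑ x, π x * (1 + (lam * (u y ⬝ᵥ u x)) ^ 2) := by
          refine Finset.sum_le_sum fun x _ => mul_le_mul_of_nonneg_left
            (exp_add_exp_neg_le ?_) (hu.mem_stdSimplex.1 x)
          rw [abs_mul]
          exact (mul_le_mul_of_nonneg_left (hu.abs_dotProduct_frame_le y x)
            (abs_nonneg _)).trans hlam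
      _ = lam ^ 2 * d + 1 := by
          simp_rw [mul_add, mul_pow, mul_left_comm (π _), Finset.sum_add_distrib, ← Finset.mul_sum,
            hu.sum_mul_dotProduct_sq, hu.dotProduct_self, mul_one, hu.mem_stdSimplex.2]
          ring
      _ ≤ _ := Real.add_one_le_exp _
  calc _ = (∑ z, signedWeight π z * Real.exp (lam * (boolSign z.2 * (u y ⬝ᵥ u z.1)))) ^ M := by
        rw [← sum_iidWeight_mul_prod]
        simp_rw [dotProduct_signedSum, Finset.mul_sum, Real.exp_sum]
    _ ≤ Real.exp (lam ^ 2 * d) ^ M := pow_le_pow_left₀ (Finset.sum_nonneg fun z _ => mul_nonneg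
        ((signedWeight_mem_stdSimplex hu.mem_stdSimplex).1 z) (Real.exp_pos _).le) hstep M
    _ = _ := by rw [← Real.exp_nat_mul, mul_comm]

theorem abs_le_add_sum_exp {lam : ℝ} (hlam : 0 < lam) (A : ℝ) (Q : ι → ℝ) (y : ι) :
    |Q y| ≤ A + Real.exp (-(lam * A)) / lam *
      ∑ x, (Real.exp (lam * Q x) + Real.exp (-lam * Q x)) := by
  have hexp : Real.exp (lam * |Q y|) ≤ ∑ x, (Real.exp (lam * Q x) + Real.exp (-lam * Q x)) := by
    calc _ = Real.exp |lam * Q y| := by rw [abs_mul, abs_of_pos hlam]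
      _ ≤ Real.exp (lam * Q y) + Real.exp (-lam * Q y) := by
          simpa only [neg_mul] using Real.exp_abs_le (lam * Q y)
      _ ≤ _ := Finset.single_le_sum
          (f := fun x => Real.exp (lam * Q x) + Real.exp (-lam * Q x))
          (fun x _ => by positivity) (Finset.mem_univ y)
  have hlin : lam * (|Q y| - A) ≤ Real.exp (-(lam * A)) * Real.exp (lam * |Q y|) := by
    rw [← Real.exp_add, show -(lam * A) + lam * |Q y| = lam * (|Q y| - A) by ring]
    linarith [Real.add_one_le_exp (lam * (|Q y| - A))]
  rw [← sub_le_iff_le_add', div_mul_eq_mul_div, le_div_iff₀' hlam]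
  exact hlin.trans (mul_le_mul_of_nonneg_left hexp (Real.exp_pos _).le)

theorem IsotropicFrame.dotProduct_le_of_forall_abs_le (hu : IsotropicFrame π u) {a s : Fin d → ℝ}
    {B : ℝ} (ha : ∑ x, π x * |a ⬝ᵥ u x| ≤ 1) (hs : ∀ y, |u y ⬝ᵥ s| ≤ B) : a ⬝ᵥ s ≤ B := by
  have hB : 0 ≤ B := (abs_nonneg _).trans (hs (nonempty_of_mem_stdSimplex hu.mem_stdSimplex).some)
  calc a ⬝ᵥ s = ∑ y, π y * ((a ⬝ᵥ u y) * (s ⬝ᵥ u y)) :=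
        (hu.sum_mul_dotProduct_mul_dotProduct a s).symm
    _ ≤ ∑ y, π y * (|a ⬝ᵥ u y| * B) := by
        refine Finset.sum_le_sum fun y _ => mul_le_mul_of_nonneg_left ?_ (hu.mem_stdSimplex.1 y)
        rw [dotProduct_comm s]
        exact (le_abs_self _).trans
          ((abs_mul _ _).trans_le (mul_le_mul_of_nonneg_left (hs y) (abs_nonneg _)))
    _ = (∑ y, π y * |a ⬝ᵥ u y|) * B := by simp_rw [Finset.sum_mul, mul_assoc]
    _ ≤ B := mul_le_of_le_one_left hB ha

variable {T : Type*} [Finite T] [Nonempty T] {a : T → Fin d → ℝ}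

theorem IsotropicFrame.sum_iidWeight_mul_iSup_deficit_le (hu : IsotropicFrame π u)
    (ha : ∀ t, ∑ x, π x * |a t ⬝ᵥ u x| ≤ 1) {lam : ℝ} (hlam : 0 < lam) (hlamd : lam * d ≤ 1)
    (A : ℝ) (M : ℕ) :
    ∑ ξ, iidWeight π M ξ * ⨆ t, ∑ i, (∑ y, π y * |a t ⬝ᵥ u y| - |a t ⬝ᵥ u (ξ i)|) ≤
      2 * (A + Real.exp (-(lam * A)) / lam *
        (Fintype.card ι * (2 * Real.exp (lam ^ 2 * d * M)))) := by
  have hweight := iidWeight_mem_stdSimplex (signedWeight_mem_stdSimplex hu.mem_stdSimplex) M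
  set w := iidWeight (signedWeight π) M
  set G : (Fin M → ι × Bool) → ι → ℝ := fun ζ y =>
    Real.exp (lam * (u y ⬝ᵥ signedSum u ζ)) + Real.exp (-lam * (u y ⬝ᵥ signedSum u ζ)) with hG
  have hpoint : ∀ ζ : Fin M → ι × Bool,
      ⨆ t, ∑ i, 2 * (boolSign (ζ i).2 * (a t ⬝ᵥ u (ζ i).1)) ≤
        2 * (A + Real.exp (-(lam * A)) / lam * ∑ y, G ζ y) := fun ζ => by
    refine ciSup_le fun t => ?_
    rw [← Finset.mul_sum, ← dotProduct_signedSum]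
    exact mul_le_mul_of_nonneg_left (hu.dotProduct_le_of_forall_abs_le (ha t)
      (abs_le_add_sum_exp hlam A fun y => u y ⬝ᵥ signedSum u ζ)) zero_le_two
  have hmean : ∀ y, ∑ ζ, w ζ * G ζ y ≤ 2 * Real.exp (lam ^ 2 * d * M) := by
    intro y
    have hpos := hu.sum_iidWeight_mul_exp_signedSum_le (by rwa [abs_of_pos hlam]) M y
    have hneg := hu.sum_iidWeight_mul_exp_signedSum_le (lam := -lam)
      (by rwa [abs_neg, abs_of_pos hlam]) M y
    rw [neg_sq] at hneg
    simp_rw [hG, mul_add, Finset.sum_add_distrib]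
    linarith
  calc _ ≤ ∑ ζ, w ζ * ⨆ t, ∑ i, 2 * (boolSign (ζ i).2 * (a t ⬝ᵥ u (ζ i).1)) := by
        simpa only [zero_add] using sum_iidWeight_mul_iSup_le_signed hu.mem_stdSimplex
          (fun t x => a t ⬝ᵥ u x) M fun _ => 0
    _ ≤ ∑ ζ, w ζ * (2 * (A + Real.exp (-(lam * A)) / lam * ∑ y, G ζ y)) :=
        Finset.sum_le_sum fun ζ _ => mul_le_mul_of_nonneg_left (hpoint ζ) (hweight.1 ζ)
    _ = 2 * (A + Real.exp (-(lam * A)) / lam * ∑ y, ∑ ζ, w ζ * G ζ y) := by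
        rw [Finset.sum_comm]
        simp_rw [← Finset.mul_sum, mul_left_comm (w _), ← Finset.mul_sum, mul_add,
          Finset.sum_add_distrib, ← Finset.sum_mul, hweight.2, one_mul, mul_left_comm (w _),
          ← Finset.mul_sum]
        ring
    _ ≤ _ := by
        gcongr
        refine (Finset.sum_le_card_nsmul _ _ _ fun y _ => hmean y).trans_eq ?_
        rw [Finset.card_univ, nsmul_eq_mul]

theorem IsotropicFrame.sum_iidWeight_mul_iSup_deficit_le_half (hu : IsotropicFrame π u)
    (hd : 1 ≤ d) (ha : ∀ t, ∑ x, π x * |a t ⬝ᵥ u x| ≤ 1)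
    (hM : 512 * (d * Real.log (Fintype.card ι + d + 2)) ≤ M) :
    ∑ ξ : Fin M → ι, iidWeight π M ξ *
      ⨆ t, ∑ i, (∑ y, π y * |a t ⬝ᵥ u y| - |a t ⬝ᵥ u (ξ i)|) ≤ M / 2 := by
  have := nonempty_of_mem_stdSimplex hu.mem_stdSimplex
  have hd1 : (1 : ℝ) ≤ d := by exact_mod_cast hd
  have hn1 : (1 : ℝ) ≤ Fintype.card ι := by exact_mod_cast Fintype.card_pos
  set n : ℝ := (Fintype.card ι : ℝ)
  have hlog : 1 ≤ Real.log (n + d + 2) := by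
    rw [Real.le_log_iff_exp_le (by positivity)]
    linarith [Real.exp_one_lt_d9]
  have hlogM : 2 * Real.log (n + d + 2) ≤ M / (256 * d) := by
    rw [le_div_iff₀ (by positivity)]
    linarith
  have hcard : 2 * n ≤ Real.exp (M / (256 * d)) := by
    calc 2 * n ≤ (n + d + 2) ^ 2 := by nlinarith
      _ = Real.exp (2 * Real.log (n + d + 2)) := by
          rw [← Nat.cast_ofNat (n := 2), Real.exp_nat_mul, Real.exp_log (by positivity)]
      _ ≤ _ := Real.exp_le_exp.2 hlogM
  refine (hu.sum_iidWeight_mul_iSup_deficit_le ha (lam := 1 / (16 * d)) (by positivity)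
    (by field_simp; norm_num) (M / 8) M).trans ?_
  have hexponent : 1 / (16 * (d : ℝ)) * (M / 8) = M / (256 * d) + M / (256 * d) := by
    field_simp
    ring
  have hvariance : (1 / (16 * (d : ℝ))) ^ 2 * d * M = M / (256 * d) := by
    field_simp
    ring
  rw [hexponent, hvariance, neg_add, Real.exp_add]
  calc _ = M / 4 + 32 * d * (2 * n * (Real.exp (-(M / (256 * d))) *
          (Real.exp (-(M / (256 * d))) * Real.exp (M / (256 * d))))) := by
        field_simp
        ring
    _ ≤ M / 4 + 32 * d * 1 := by
        rw [← Real.exp_add, neg_add_cancel, Real.exp_zero, mul_one, Real.exp_neg]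
        gcongr
        exact mul_inv_le_one_of_le₀ hcard (Real.exp_pos _).le
    _ ≤ M / 2 := by nlinarith

theorem frameSampling_one :
    FrameSampling 1 8 fun n d => 512 * (d * Real.log (n + d + 2)) := by
  classical
  intro ι _ d π u g hd hu hg hg1 M hM
  have := nonempty_of_mem_stdSimplex hu.mem_stdSimplex
  set deficit : (Fin d → ℝ) → (Fin M → ι) → ℝ := fun a ξ =>
    ∑ i, (∑ y, π y * |a ⬝ᵥ u y| - |a ⬝ᵥ u (ξ i)|) with hdeficit
  have hlog : 0 < Real.log (Fintype.card ι + d + 2) := Real.log_pos (by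
    have : (1 : ℝ) ≤ d := by exact_mod_cast hd
    linarith [(Fintype.card ι).cast_nonneg (α := ℝ)])
  have hMr : (0 : ℝ) < M := lt_of_lt_of_le (by positivity) hM
  -- Each sample only has to be tested against one worst vector, so the supremum below is finite.
  have hworst : ∀ ξ : Fin M → ι, ∃ a, ∑ x, π x * |a ⬝ᵥ u x| ≤ 1 ∧ 0 ≤ deficit a ξ ∧
      (deficit a ξ < 7 / 8 * M →
        ∀ b, ∑ x, π x * |b ⬝ᵥ u x| = 1 → deficit b ξ < 7 / 8 * M) := by
    intro ξ
    by_cases! hbad : ∃ b, ∑ x, π x * |b ⬝ᵥ u x| = 1 ∧ 7 / 8 * M ≤ deficit b ξ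
    · obtain ⟨b, hb, hbξ⟩ := hbad
      exact ⟨b, hb.le, by linarith, fun h => absurd hbξ h.not_ge⟩
    · exact ⟨0, by simp, by simp [hdeficit], fun _ => hbad⟩
  choose worst hnorm hnonneg hworst using hworst
  set Z : (Fin M → ι) → ℝ := fun ξ => ⨆ η, deficit (worst η) ξ
  have hle : ∀ ξ, deficit (worst ξ) ξ ≤ Z ξ := fun ξ =>
    Finite.le_ciSup (fun η => deficit (worst η) ξ) ξ
  obtain ⟨ξ, hξg, hξ⟩ := exists_sample_lt_one hu.mem_stdSimplex hg hg1 (by exact_mod_cast hMr)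
    (Z := fun ξ => Z ξ / (7 / 8 * M))
    (fun ξ => div_nonneg ((hnonneg ξ).trans (hle ξ)) (by positivity)) (by
      simp_rw [← mul_div_assoc, ← Finset.sum_div]
      rw [div_lt_iff₀ (by positivity)]
      linarith [hu.sum_iidWeight_mul_iSup_deficit_le_half hd hnorm hM])
  refine ⟨ξ, hξg, isLpSample_of_forall_normalized one_ne_zero hu.mem_stdSimplex.1 (by norm_num)
    fun a ha => ?_⟩
  simp only [Real.rpow_one] at ha ⊢
  have hsmall := hworst ξ ((hle ξ).trans_lt ((div_lt_one (by positivity)).1 hξ)) a ha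
  simp only [hdeficit, ha, Finset.sum_sub_distrib, Finset.sum_const, Finset.card_univ,
    Fintype.card_fin, nsmul_eq_mul, mul_one] at hsmall
  linarith

end ExponentOne

/-! ### Lewis position -/

section MulVecFamily

variable {ι : Type*} {d : ℕ} {e : ι → Fin d → ℝ}

theorem dotProduct_self_nonneg_real (v : Fin d → ℝ) : 0 ≤ v ⬝ᵥ v :=
  Finset.sum_nonneg fun i _ => mul_self_nonneg (v i)

theorem dotProduct_self_pos_real {v : Fin d → ℝ} (hv : v ≠ 0) :
    0 < v ⬝ᵥ v :=
  (dotProduct_self_nonneg_real v).lt_of_ne' (mt dotProduct_self_eq_zero.1 hv)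

theorem det_one_add_single (i j : Fin d) (s : ℝ) :
    (1 + Matrix.single i j s).det = 1 + if i = j then s else 0 := by
  split_ifs with hij
  · subst hij
    rw [← Matrix.diagonal_single, ← Matrix.diagonal_one, Matrix.diagonal_add,
      Matrix.det_diagonal, Fintype.prod_eq_single i fun k hk => by simp [hk], Pi.single_eq_same]
  · rw [add_zero]
    exact Matrix.det_transvection_of_ne i j hij s

theorem dotProduct_self_one_add_single_mulVec (i j : Fin d) (s : ℝ) (v : Fin d → ℝ) :
    ((1 + Matrix.single i j s) *ᵥ v) ⬝ᵥ ((1 + Matrix.single i j s) *ᵥ v) =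
      v ⬝ᵥ v + s * (2 * (v i * v j)) + s ^ 2 * v j ^ 2 := by
  rw [Matrix.add_mulVec, Matrix.one_mulVec, Matrix.single_mulVec_eq]
  simp only [add_dotProduct, dotProduct_add, smul_dotProduct, dotProduct_smul, smul_eq_mul,
    single_one_dotProduct, dotProduct_single_one, Pi.add_apply, Pi.smul_apply,
    Pi.single_eq_same]
  ring

/-- The linear map taking a matrix to the family of images of the vectors `e x` under it. -/
def mulVecFamily (e : ι → Fin d → ℝ) : Matrix (Fin d) (Fin d) ℝ →ₗ[ℝ] ι → Fin d → ℝ where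
  toFun B x := B *ᵥ e x
  map_add' A B := funext fun x => Matrix.add_mulVec A B (e x)
  map_smul' c A := funext fun x => Matrix.smul_mulVec c A (e x)

theorem ker_mulVecFamily (he : ∀ a, (∀ x, a ⬝ᵥ e x = 0) → a = 0) :
    LinearMap.ker (mulVecFamily e) = ⊥ :=
  LinearMap.ker_eq_bot'.2 fun B hB => funext fun i =>
    he (B i) fun x => congrFun (congrFun hB x) i

theorem mulVecFamily_mul (A B : Matrix (Fin d) (Fin d) ℝ) :
    mulVecFamily e (A * B) = mulVecFamily (mulVecFamily e B) A :=
  funext fun x => (Matrix.mulVec_mulVec (e x) A B).symm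

theorem mulVecFamily_ne_zero {B : Matrix (Fin d) (Fin d) ℝ} (hB : B.det ≠ 0)
    (he0 : ∀ x, e x ≠ 0) (x : ι) : mulVecFamily e B x ≠ 0 :=
  fun h => he0 x (Matrix.eq_zero_of_mulVec_eq_zero hB h)

end MulVecFamily

section Lewis

variable {ι : Type*} [Fintype ι] {d : ℕ} {ν : ι → ℝ} {e φ : ι → Fin d → ℝ} {p : ℝ}

/-- The `p`-th power of the `L_p(ν)`-norm of the square function `x ↦ |φ x|₂` of a family of
vectors. -/
noncomputable def squareEnergy (ν : ι → ℝ) (p : ℝ) (φ : ι → Fin d → ℝ) : ℝ :=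
  ∑ x, ν x * (φ x ⬝ᵥ φ x) ^ (p / 2)

theorem squareEnergy_nonneg (hν : ∀ x, 0 ≤ ν x) : 0 ≤ squareEnergy ν p φ :=
  Finset.sum_nonneg fun x _ =>
    mul_nonneg (hν x) (Real.rpow_nonneg (dotProduct_self_nonneg_real _) _)

theorem squareEnergy_pos [Nonempty ι] (hν : ∀ x, 0 < ν x) (hφ : ∀ x, φ x ≠ 0) :
    0 < squareEnergy ν p φ :=
  Finset.sum_pos
    (fun x _ => mul_pos (hν x) (Real.rpow_pos_of_pos (dotProduct_self_pos_real (hφ x)) _))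
    Finset.univ_nonempty

theorem squareEnergy_smul {c : ℝ} (hc : 0 ≤ c) :
    squareEnergy ν p (c • φ) = c ^ p * squareEnergy ν p φ := by
  rw [squareEnergy, squareEnergy, Finset.mul_sum]
  refine Finset.sum_congr rfl fun x _ => ?_
  rw [Pi.smul_apply, smul_dotProduct, dotProduct_smul, smul_smul, smul_eq_mul,
    Real.mul_rpow (mul_self_nonneg c) (dotProduct_self_nonneg_real _), ← sq, ← Real.rpow_two,
    ← Real.rpow_mul hc, mul_div_cancel₀ p two_ne_zero]
  ring

theorem continuous_squareEnergy (hp : 0 < p) :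
    Continuous (squareEnergy ν p : (ι → Fin d → ℝ) → ℝ) := by
  refine continuous_finsetSum _ fun x _ => continuous_const.mul ?_
  have hdot : Continuous fun φ : ι → Fin d → ℝ => φ x ⬝ᵥ φ x := by
    simp only [dotProduct]
    fun_prop
  exact (Real.continuous_rpow_const (by positivity)).comp hdot

theorem isCompact_squareEnergy_le_one (hν : ∀ x, 0 < ν x) (hp : 0 < p) :
    IsCompact {φ : ι → Fin d → ℝ | squareEnergy ν p φ ≤ 1} := by
  have hclosed : IsClosed {φ : ι → Fin d → ℝ | squareEnergy ν p φ ≤ 1} :=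
    isClosed_le (continuous_squareEnergy hp) continuous_const
  refine IsCompact.of_isClosed_subset
    (isCompact_univ_pi fun x : ι => isCompact_univ_pi fun _ : Fin d =>
      isCompact_Icc (a := -((ν x)⁻¹ ^ p⁻¹)) (b := (ν x)⁻¹ ^ p⁻¹)) hclosed ?_
  intro φ hφ x _ i _
  have hterm : ν x * (φ x ⬝ᵥ φ x) ^ (p / 2) ≤ 1 :=
    (Finset.single_le_sum (f := fun x => ν x * (φ x ⬝ᵥ φ x) ^ (p / 2))
      (fun x _ => mul_nonneg (hν x).le (Real.rpow_nonneg (dotProduct_self_nonneg_real _) _))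
      (Finset.mem_univ x)).trans hφ
  have hcoord : |φ x i| ^ (2 : ℝ) ≤ φ x ⬝ᵥ φ x := by
    rw [Real.rpow_two, sq_abs, sq]
    exact Finset.single_le_sum (f := fun i => φ x i * φ x i) (fun i _ => mul_self_nonneg _)
      (Finset.mem_univ i)
  have hpow : |φ x i| ^ p ≤ (ν x)⁻¹ := by
    rw [← mul_one (ν x)⁻¹, le_inv_mul_iff₀ (hν x), ← mul_div_cancel₀ p two_ne_zero,
      Real.rpow_mul (abs_nonneg _)]
    refine le_trans (mul_le_mul_of_nonneg_left ?_ (hν x).le) hterm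
    exact Real.rpow_le_rpow (by positivity) hcoord (by positivity)
  exact abs_le.1 ((Real.le_rpow_inv_iff_of_pos (abs_nonneg _) (inv_pos.2 (hν x)).le hp).2 hpow)

theorem exists_det_max_of_squareEnergy_le_one (hν : ∀ x, 0 < ν x) (hp : 0 < p)
    (he : ∀ a, (∀ x, a ⬝ᵥ e x = 0) → a = 0) :
    ∃ B, squareEnergy ν p (mulVecFamily e B) ≤ 1 ∧
      ∀ A, squareEnergy ν p (mulVecFamily e A) ≤ 1 → A.det ≤ B.det := by
  have hembedding := LinearMap.isClosedEmbedding_of_injective (ker_mulVecFamily he)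
  have hcompact := hembedding.isCompact_preimage (isCompact_squareEnergy_le_one hν hp)
  have hzero : squareEnergy ν p (mulVecFamily e 0) ≤ 1 := by
    simp [squareEnergy, Real.zero_rpow (show p / 2 ≠ 0 by positivity)]
  obtain ⟨B, hB, hmax⟩ := hcompact.exists_isMaxOn ⟨0, hzero⟩
    (continuous_id.matrix_det).continuousOn
  exact ⟨B, hB, fun A hA => hmax hA⟩

theorem det_le_det_mul_squareEnergy_rpow (hp : 0 < p) {A B : Matrix (Fin d) (Fin d) ℝ}
    (hA : 0 < squareEnergy ν p (mulVecFamily e A))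
    (hmax : ∀ A, squareEnergy ν p (mulVecFamily e A) ≤ 1 → A.det ≤ B.det) :
    A.det ≤ B.det * squareEnergy ν p (mulVecFamily e A) ^ (d / p : ℝ) := by
  set E := squareEnergy ν p (mulVecFamily e A)
  have hscaled : squareEnergy ν p (mulVecFamily e (E ^ (-p⁻¹) • A)) = 1 := by
    rw [map_smul, squareEnergy_smul (by positivity), ← Real.rpow_mul hA.le, neg_mul,
      inv_mul_cancel₀ hp.ne', Real.rpow_neg_one, inv_mul_cancel₀ hA.ne']
  have hpow : (E ^ (-p⁻¹)) ^ d * E ^ (d / p : ℝ) = 1 := by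
    rw [← Real.rpow_natCast, ← Real.rpow_mul hA.le, ← Real.rpow_add hA,
      show -p⁻¹ * (d : ℝ) + d / p = 0 by ring, Real.rpow_zero]
  calc A.det = (E ^ (-p⁻¹)) ^ d * A.det * E ^ (d / p : ℝ) := by
        rw [mul_right_comm, hpow, one_mul]
    _ = (E ^ (-p⁻¹) • A).det * E ^ (d / p : ℝ) := by rw [Matrix.det_smul, Fintype.card_fin]
    _ ≤ _ := by
        gcongr
        exact hmax _ hscaled.le

/-- A family of unit energy for which no linear change of coordinates can increase the volume
without increasing the energy accordingly. -/
structure IsLewisPosition (ν : ι → ℝ) (p : ℝ) (φ : ι → Fin d → ℝ) : Prop where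
  squareEnergy_eq_one : squareEnergy ν p φ = 1
  det_le (T : Matrix (Fin d) (Fin d) ℝ) (hT : 0 < T.det) :
    T.det ≤ squareEnergy ν p (mulVecFamily φ T) ^ (d / p : ℝ)

theorem exists_isLewisPosition [Nonempty ι] (hd : 0 < d) (hν : ∀ x, 0 < ν x) (hp : 0 < p)
    (he0 : ∀ x, e x ≠ 0) (he : ∀ a, (∀ x, a ⬝ᵥ e x = 0) → a = 0) :
    ∃ B : Matrix (Fin d) (Fin d) ℝ, 0 < B.det ∧ IsLewisPosition ν p (mulVecFamily e B) := by
  have hpos (A : Matrix (Fin d) (Fin d) ℝ) (hA : A.det ≠ 0) :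
      0 < squareEnergy ν p (mulVecFamily e A) :=
    squareEnergy_pos hν (mulVecFamily_ne_zero hA he0)
  obtain ⟨B, hB, hmax⟩ := exists_det_max_of_squareEnergy_le_one hν hp he
  have hscale (A : Matrix (Fin d) (Fin d) ℝ) (hA : A.det ≠ 0) :=
    det_le_det_mul_squareEnergy_rpow hp (hpos A hA) hmax
  have hdet : 0 < B.det := by
    have hone := hscale 1 (by simp)
    rw [Matrix.det_one] at hone
    exact pos_of_mul_pos_left (one_pos.trans_le hone) (Real.rpow_nonneg (hpos 1 (by simp)).le _)
  refine ⟨B, hdet, hB.antisymm ?_, fun T hT => ?_⟩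
  · have hle := hscale B hdet.ne'
    by_contra! hlt
    have hrpow := Real.rpow_lt_one (hpos B hdet.ne').le hlt (show 0 < (d / p : ℝ) by positivity)
    exact hle.not_gt (mul_lt_of_lt_one_right hdet hrpow)
  · have hle := hscale (T * B) (by rw [Matrix.det_mul]; positivity)
    rw [Matrix.det_mul, mul_comm, mulVecFamily_mul] at hle
    exact le_of_mul_le_mul_left hle hdet

theorem hasDerivAt_squareEnergy_one_add_single (hφ : ∀ x, φ x ≠ 0) (i j : Fin d) :
    HasDerivAt (fun s => squareEnergy ν p (mulVecFamily φ (1 + Matrix.single i j s)))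
      (p * ∑ x, ν x * (φ x ⬝ᵥ φ x) ^ (p / 2 - 1) * (φ x i * φ x j)) 0 := by
  simp only [squareEnergy, mulVecFamily, LinearMap.coe_mk, AddHom.coe_mk,
    dotProduct_self_one_add_single_mulVec]
  rw [Finset.mul_sum]
  refine HasDerivAt.fun_sum fun x _ => ?_
  have hquad : HasDerivAt
      (fun s : ℝ => φ x ⬝ᵥ φ x + s * (2 * (φ x i * φ x j)) + s ^ 2 * φ x j ^ 2)
      (2 * (φ x i * φ x j)) 0 := by
    have hid := hasDerivAt_id (0 : ℝ)
    exact (((hid.mul_const _).const_add _).add ((hid.pow 2).mul_const _)).congr_deriv (by simp)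
  have hbase : φ x ⬝ᵥ φ x + 0 * (2 * (φ x i * φ x j)) + 0 ^ 2 * φ x j ^ 2 ≠ 0 := by
    simpa using (dotProduct_self_pos_real (hφ x)).ne'
  refine ((hquad.rpow_const (p := p / 2) (Or.inl hbase)).const_mul (ν x)).congr_deriv ?_
  simp only [zero_mul, add_zero, ne_eq, OfNat.ofNat_ne_zero, not_false_eq_true, zero_pow]
  ring

namespace IsLewisPosition

theorem det_rpow_le (h : IsLewisPosition ν p φ) (hd : 0 < d) (hν : ∀ x, 0 ≤ ν x)
    (hp : 0 < p) {T : Matrix (Fin d) (Fin d) ℝ} (hT : 0 < T.det) :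
    T.det ^ (p / d : ℝ) ≤ squareEnergy ν p (mulVecFamily φ T) := by
  have hle := Real.rpow_le_rpow hT.le (h.det_le T hT) (show 0 ≤ (p / d : ℝ) by positivity)
  rwa [← Real.rpow_mul (squareEnergy_nonneg hν), div_mul_div_cancel₀ hp.ne',
    div_self (by positivity), Real.rpow_one] at hle

-- The energy of `(1 + s E_ij) φ` minus `det (1 + s E_ij) ^ (p / d)` is minimal at `s = 0`.
theorem sum_mul_mul_eq (h : IsLewisPosition ν p φ) (hd : 0 < d) (hν : ∀ x, 0 ≤ ν x)
    (hp : 0 < p) (hφ : ∀ x, φ x ≠ 0) (i j : Fin d) :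
    ∑ x, ν x * (φ x ⬝ᵥ φ x) ^ (p / 2 - 1) * (φ x i * φ x j) = if i = j then (d : ℝ)⁻¹ else 0 := by
  set δ : ℝ := if i = j then 1 else 0 with hδ
  have hdet (s : ℝ) : (1 + Matrix.single i j s).det = 1 + s * δ := by
    rw [det_one_add_single, hδ, mul_ite, mul_one, mul_zero]
  set gap : ℝ → ℝ := fun s =>
    squareEnergy ν p (mulVecFamily φ (1 + Matrix.single i j s)) - (1 + s * δ) ^ (p / d : ℝ)
  have hderiv_det : HasDerivAt (fun s : ℝ => (1 + s * δ) ^ (p / d : ℝ)) (p * (δ / d)) 0 := by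
    have hlinear := ((hasDerivAt_id (0 : ℝ)).mul_const δ).const_add 1
    refine (hlinear.rpow_const (p := (p / d : ℝ)) (Or.inl (by simp))).congr_deriv ?_
    simp only [id, zero_mul, add_zero, Real.one_rpow]
    ring
  have hmin : IsLocalMin gap 0 := by
    have hcont : Continuous fun s : ℝ => 1 + s * δ := by fun_prop
    have hpos : ∀ᶠ s in nhds (0 : ℝ), 0 < 1 + s * δ :=
      hcont.continuousAt.eventually (lt_mem_nhds (by simp))
    have hzero : gap 0 = 0 := by
      have hid : mulVecFamily φ 1 = φ := funext fun x => Matrix.one_mulVec (φ x)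
      simp [gap, hid, h.squareEnergy_eq_one]
    filter_upwards [hpos] with s hs
    rw [← hdet] at hs
    have hle := h.det_rpow_le hd hν hp hs
    rw [hdet] at hle
    rw [hzero]
    exact sub_nonneg.2 hle
  have hcritical := hmin.hasDerivAt_eq_zero
    ((hasDerivAt_squareEnergy_one_add_single hφ i j).sub hderiv_det)
  rw [mul_left_cancel₀ hp.ne' (sub_eq_zero.1 hcritical), hδ, ite_div, one_div, zero_div]

theorem isotropicFrame (h : IsLewisPosition ν p φ) (hd : 0 < d) (hν : ∀ x, 0 ≤ ν x)
    (hp : 0 < p) (hφ : ∀ x, φ x ≠ 0) :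
    IsotropicFrame (fun x => ν x * (φ x ⬝ᵥ φ x) ^ (p / 2))
      fun x => √(d / (φ x ⬝ᵥ φ x)) • φ x where
  mem_stdSimplex := ⟨fun x => mul_nonneg (hν x)
    (Real.rpow_nonneg (dotProduct_self_nonneg_real _) _), h.squareEnergy_eq_one⟩
  dotProduct_self x := by
    have hpos := dotProduct_self_pos_real (hφ x)
    rw [smul_dotProduct, dotProduct_smul, smul_smul, smul_eq_mul,
      Real.mul_self_sqrt (by positivity), div_mul_cancel₀ _ hpos.ne']
  orthonormal i j := by
    have hterm (x : ι) : ν x * (φ x ⬝ᵥ φ x) ^ (p / 2) *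
        ((√(d / (φ x ⬝ᵥ φ x)) • φ x) i * (√(d / (φ x ⬝ᵥ φ x)) • φ x) j) =
        d * (ν x * (φ x ⬝ᵥ φ x) ^ (p / 2 - 1) * (φ x i * φ x j)) := by
      have hpos := dotProduct_self_pos_real (hφ x)
      rw [Pi.smul_apply, Pi.smul_apply, smul_eq_mul, smul_eq_mul, mul_mul_mul_comm (√_),
        Real.mul_self_sqrt (by positivity), Real.rpow_sub_one hpos.ne']
      ring
    simp_rw [hterm]
    rw [← Finset.mul_sum, h.sum_mul_mul_eq hd hν hp hφ, mul_ite, mul_zero,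
      mul_inv_cancel₀ (by positivity)]

end IsLewisPosition

theorem exists_isotropicFrame (hd : 0 < d) (hν : ∀ x, 0 < ν x) (hp : 0 < p)
    (he0 : ∀ x, e x ≠ 0) (he : ∀ a, (∀ x, a ⬝ᵥ e x = 0) → a = 0) :
    ∃ (τ : ι → ℝ) (u : ι → Fin d → ℝ), (∀ x, 0 < τ x) ∧
      IsotropicFrame (fun x => ν x * τ x ^ p) u ∧
      ∀ a : Fin d → ℝ, ∃ b : Fin d → ℝ, ∀ x, a ⬝ᵥ e x = τ x * (b ⬝ᵥ u x) := by
  have : Nonempty ι := by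
    by_contra! hempty
    simpa using congrFun (he 1 fun x => hempty.elim x) ⟨0, hd⟩
  obtain ⟨B, hB, hlewis⟩ := exists_isLewisPosition hd hν hp he0 he
  set φ := mulVecFamily e B
  have hφ0 : ∀ x, φ x ≠ 0 := mulVecFamily_ne_zero hB.ne' he0
  have hpos (x : ι) : 0 < φ x ⬝ᵥ φ x := dotProduct_self_pos_real (hφ0 x)
  have hframe := hlewis.isotropicFrame hd (fun x => (hν x).le) hp hφ0
  refine ⟨fun x => √(φ x ⬝ᵥ φ x), fun x => √(d / (φ x ⬝ᵥ φ x)) • φ x,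
    fun x => Real.sqrt_pos.2 (hpos x), ?_, fun a => ?_⟩
  · convert hframe using 3 with x
    dsimp only
    rw [Real.sqrt_eq_rpow, ← Real.rpow_mul (hpos x).le, one_div_mul_eq_div]
  · refine ⟨(√d)⁻¹ • (a ᵥ* B⁻¹), fun x => ?_⟩
    have hsolve : a ⬝ᵥ e x = (a ᵥ* B⁻¹) ⬝ᵥ φ x := by
      change a ⬝ᵥ e x = (a ᵥ* B⁻¹) ⬝ᵥ (B *ᵥ e x)
      rw [Matrix.dotProduct_mulVec, Matrix.vecMul_vecMul,
        Matrix.nonsing_inv_mul _ hB.ne'.isUnit, Matrix.vecMul_one]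
    have hsqrt : 0 < √(φ x ⬝ᵥ φ x) := Real.sqrt_pos.2 (hpos x)
    rw [hsolve, smul_dotProduct, dotProduct_smul, smul_eq_mul, smul_eq_mul,
      Real.sqrt_div (Nat.cast_nonneg d)]
    field_simp

end Lewis

/-! ### Weighted samples -/

section Coordinates

variable {ι : Type*} {N : ℕ}

theorem exists_injective_coordinates (e : ι → Fin N → ℝ) :
    ∃ d ≤ N, ∃ e' : ι → Fin d → ℝ, (∀ x, e x ≠ 0 → e' x ≠ 0) ∧
      (∀ b, (∀ x, b ⬝ᵥ e' x = 0) → b = 0) ∧ ∀ a, ∃ b, ∀ x, a ⬝ᵥ e x = b ⬝ᵥ e' x := by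
  let V := LinearMap.range (Matrix.mulVecLin (Matrix.of e))
  let c := Module.finBasis ℝ V
  have hcoord : ∀ (b : Fin (Module.finrank ℝ V) → ℝ) x,
      b ⬝ᵥ (fun k => (c k : ι → ℝ) x) = ((∑ k, b k • c k : V) : ι → ℝ) x := fun b x => by
    simp [dotProduct]
  have hrep : ∀ a, ∃ b, ∀ x, a ⬝ᵥ e x = b ⬝ᵥ (fun k => (c k : ι → ℝ) x) := fun a => by
    refine ⟨c.repr ⟨Matrix.of e *ᵥ a, LinearMap.mem_range_self _ a⟩, fun x => ?_⟩
    rw [hcoord, c.sum_repr]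
    exact dotProduct_comm _ _
  refine ⟨Module.finrank ℝ V, by simpa using LinearMap.finrank_range_le (Matrix.of e).mulVecLin,
    fun x k => (c k : ι → ℝ) x, fun x hx hzero => ?_, fun b hb => ?_, hrep⟩
  · obtain ⟨b, hb⟩ := hrep (e x)
    refine hx (dotProduct_self_eq_zero.1 ?_)
    exact (hb x).trans ((congrArg (b ⬝ᵥ ·) hzero).trans (dotProduct_zero b))
  · have hsum : ∑ k, b k • c k = 0 := Subtype.ext (funext fun x => (hcoord b x).symm.trans (hb x))
    exact funext (Fintype.linearIndependent_iff.1 c.linearIndependent b hsum)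

end Coordinates

section WeightedLpSample

variable {ι : Type*} [Fintype ι] {N m : ℕ} {ν : ι → ℝ} {e : ι → Fin N → ℝ} {p K W : ℝ}
  {ξ : Fin m → ι} {w : Fin m → ℝ}

/-- The points `ξ` with the nonnegative weights `w`, of total mass at most `W`, discretize from
below, up to the factor `K`, the `p`-th moments under `ν` of the functions `x ↦ a ⬝ᵥ e x`. -/
structure IsWeightedLpSample (ν : ι → ℝ) (e : ι → Fin N → ℝ) (p K W : ℝ) (ξ : Fin m → ι)
    (w : Fin m → ℝ) : Prop where
  nonneg (i : Fin m) : 0 ≤ w i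
  sum_le : ∑ i, w i ≤ W
  le_sum (a : Fin N → ℝ) :
    ∑ x, ν x * |a ⬝ᵥ e x| ^ p ≤ K * ∑ i, w i * |a ⬝ᵥ e (ξ i)| ^ p

namespace IsWeightedLpSample

theorem trans {K' W' : ℝ} {m' : ℕ} {ξ' : Fin m' → Fin m} {w' : Fin m' → ℝ}
    (h : IsWeightedLpSample ν e p K W ξ w) (hK : 0 ≤ K)
    (h' : IsWeightedLpSample w (e ∘ ξ) p K' W' ξ' w') :
    IsWeightedLpSample ν e p (K * K') W' (ξ ∘ ξ') w' where
  nonneg := h'.nonneg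
  sum_le := h'.sum_le
  le_sum a := by
    rw [mul_assoc]
    exact (h.le_sum a).trans (mul_le_mul_of_nonneg_left (h'.le_sum a) hK)

theorem of_support (hν : ∀ x, 0 ≤ ν x) (hp : p ≠ 0) {d : ℕ}
    {e' : {x // 0 < ν x ∧ e x ≠ 0} → Fin d → ℝ} {ξ : Fin m → {x // 0 < ν x ∧ e x ≠ 0}}
    (he' : ∀ a, ∃ b, ∀ x, a ⬝ᵥ e x.1 = b ⬝ᵥ e' x)
    [Fintype {x // 0 < ν x ∧ e x ≠ 0}]
    (h : IsWeightedLpSample (fun x : {x // 0 < ν x ∧ e x ≠ 0} => ν x) e' p K W ξ w) :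
    IsWeightedLpSample ν e p K W (fun i => ξ i) w where
  nonneg := h.nonneg
  sum_le := h.sum_le
  le_sum a := by
    classical
    obtain ⟨b, hb⟩ := he' a
    have hvanish : ∀ x, ν x * |a ⬝ᵥ e x| ^ p ≠ 0 → 0 < ν x ∧ e x ≠ 0 := fun x hx =>
      ⟨(hν x).lt_of_ne' (left_ne_zero_of_mul hx),
        fun hzero => hx (by simp [hzero, hp])⟩
    calc ∑ x, ν x * |a ⬝ᵥ e x| ^ p
        = ∑ x : {x // 0 < ν x ∧ e x ≠ 0}, ν x * |a ⬝ᵥ e x| ^ p := by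
          rw [← Finset.sum_filter_of_ne fun x _ => hvanish x]
          exact Finset.sum_subtype _ (by simp) _
      _ ≤ K * ∑ i, w i * |a ⬝ᵥ e (ξ i)| ^ p := by simpa only [hb] using h.le_sum b

theorem of_isLpSample {τ : ι → ℝ} (hτ : ∀ x, 0 < τ x) {d : ℕ} {u : ι → Fin d → ℝ} (hm : 0 < m)
    (hW : ∑ i, (τ (ξ i) ^ p)⁻¹ ≤ m * W)
    (h : IsLpSample (fun x => ν x * τ x ^ p) u p K ξ)
    (heu : ∀ a, ∃ b, ∀ x, a ⬝ᵥ e x = τ x * (b ⬝ᵥ u x)) :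
    IsWeightedLpSample ν e p K W ξ (fun i => (τ (ξ i) ^ p)⁻¹ / m) where
  nonneg i := div_nonneg (inv_nonneg.2 (Real.rpow_nonneg (hτ _).le p)) m.cast_nonneg
  sum_le := by
    rwa [← Finset.sum_div, div_le_iff₀' (Nat.cast_pos.2 hm)]
  le_sum a := by
    obtain ⟨b, hb⟩ := heu a
    have hpow : ∀ x, |a ⬝ᵥ e x| ^ p = τ x ^ p * |b ⬝ᵥ u x| ^ p := fun x => by
      rw [hb x, abs_mul, abs_of_pos (hτ x), Real.mul_rpow (hτ x).le (abs_nonneg _)]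
    have hcancel : ∀ i, (τ (ξ i) ^ p)⁻¹ / m * |a ⬝ᵥ e (ξ i)| ^ p = |b ⬝ᵥ u (ξ i)| ^ p / m :=
      fun i => by
        have := (Real.rpow_pos_of_pos (hτ (ξ i)) p).ne'
        rw [hpow]
        field_simp
    simp_rw [hcancel, hpow, ← mul_assoc]
    rw [← Finset.sum_div, mul_div_assoc', le_div_iff₀' (Nat.cast_pos.2 hm)]
    exact h b

end IsWeightedLpSample

end WeightedLpSample

section FrameSampling

variable {ι : Type} [Fintype ι] {N : ℕ} {p K W : ℝ} {Φ : ℕ → ℕ → ℝ} {ν : ι → ℝ} {M : ℕ}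

theorem FrameSampling.exists_isWeightedLpSample_of_injective (h : FrameSampling p K Φ) (hp : 0 < p)
    (hM : 0 < M) (hN : 0 < N) (hΦ : Φ (Fintype.card ι) N ≤ M) (hW : 0 < W) (hν : ∀ x, 0 < ν x)
    (hνW : ∑ x, ν x ≤ W) {e : ι → Fin N → ℝ} (he0 : ∀ x, e x ≠ 0)
    (he : ∀ a, (∀ x, a ⬝ᵥ e x = 0) → a = 0) :
    ∃ (ξ : Fin M → ι) (w : Fin M → ℝ), IsWeightedLpSample ν e p K (4 * W) ξ w := by
  obtain ⟨τ, u, hτ, hu, heu⟩ := exists_isotropicFrame hN hν hp he0 he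
  have hτp : ∀ x, 0 < τ x ^ p := fun x => Real.rpow_pos_of_pos (hτ x) p
  have hmean : ∑ x, ν x * τ x ^ p * ((τ x ^ p)⁻¹ / W) ≤ 1 := by
    have hcancel : ∀ x, ν x * τ x ^ p * ((τ x ^ p)⁻¹ / W) = ν x / W := fun x => by
      have := (hτp x).ne'
      field_simp
    simp_rw [hcancel]
    rwa [← Finset.sum_div, div_le_one hW]
  obtain ⟨ξ, hξW, hξ⟩ := h hN hu (fun x => div_nonneg (inv_nonneg.2 (hτp x).le) hW.le) hmean hΦ
  refine ⟨ξ, _, .of_isLpSample hτ hM ?_ hξ heu⟩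
  rw [← Finset.sum_div, div_le_iff₀ hW] at hξW
  linarith

theorem FrameSampling.exists_isWeightedLpSample (h : FrameSampling p K Φ) (hp : 0 < p)
    (hM : 0 < M) (hΦ : ∀ n ≤ Fintype.card ι, ∀ d ≤ N, Φ n d ≤ M) (hW : 0 < W)
    (hν : ∀ x, 0 ≤ ν x) (hνW : ∑ x, ν x ≤ W) (e : ι → Fin N → ℝ) :
    ∃ m ≤ M, ∃ (ξ : Fin m → ι) (w : Fin m → ℝ), IsWeightedLpSample ν e p K (4 * W) ξ w := by
  classical
  obtain ⟨d, hdN, e', he'0, he', hrep⟩ :=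
    exists_injective_coordinates fun x : {x // 0 < ν x ∧ e x ≠ 0} => e x
  rcases d.eq_zero_or_pos with rfl | hd
  · exact ⟨0, M.zero_le, _, Fin.elim0, .of_support (ξ := Fin.elim0) hν hp.ne' hrep
      ⟨fun i => i.elim0, by simpa using hW.le, fun a => by simp [hp.ne']⟩⟩
  have hsum : ∑ x : {x // 0 < ν x ∧ e x ≠ 0}, ν x ≤ W := by
    rw [← Finset.sum_subtype {x | 0 < ν x ∧ e x ≠ 0} (by simp) ν]
    exact (Finset.sum_le_univ_sum_of_nonneg hν).trans hνW
  obtain ⟨ξ, w, hξ⟩ := h.exists_isWeightedLpSample_of_injective hp hM hd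
    (hΦ _ (Fintype.card_subtype_le _) d hdN) hW (fun x => x.2.1) hsum
    (fun x => he'0 x x.2.2) he'
  exact ⟨M, le_rfl, fun i => ξ i, w, .of_support hν hp.ne' hrep hξ⟩

end FrameSampling

section Rounding

theorem sum_finSigmaFinEquiv_symm_fst {n : ℕ} (k : Fin n → ℕ) (h : Fin n → ℝ) :
    ∑ j : Fin (∑ i, k i), h (finSigmaFinEquiv.symm j).1 = ∑ i, k i * h i := by
  rw [Equiv.sum_comp finSigmaFinEquiv.symm fun y : (i : Fin n) × Fin (k i) => h y.1,
    Fintype.sum_sigma]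
  simp

theorem sum_natCeil_mul_le {n M : ℕ} {w : Fin n → ℝ} (hw : ∀ i, 0 ≤ w i) {A : ℝ}
    (hA : ∑ i, w i ≤ A) (hn : n ≤ M) : ((∑ i, ⌈M * w i⌉₊ : ℕ) : ℝ) ≤ (A + 1) * M := by
  push_cast
  calc ∑ i, (⌈M * w i⌉₊ : ℝ) ≤ ∑ i, (M * w i + 1) :=
        Finset.sum_le_sum fun i _ => (Nat.ceil_lt_add_one (mul_nonneg M.cast_nonneg (hw i))).le
    _ = M * ∑ i, w i + n := by
        rw [Finset.sum_add_distrib, ← Finset.mul_sum, Finset.sum_const, Finset.card_fin,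
          nsmul_one]
    _ ≤ M * A + M :=
        add_le_add (mul_le_mul_of_nonneg_left hA M.cast_nonneg) (Nat.cast_le.2 hn)
    _ = (A + 1) * M := by ring

variable {ι : Type*} [Fintype ι] {N n M : ℕ} {ν : ι → ℝ} {e : ι → Fin N → ℝ} {p K A : ℝ}
  {ξ : Fin n → ι} {w : Fin n → ℝ}

/- Repeating the point `ξ i` about `M * w i` times replaces the weights by multiplicities; rounding
up costs at most one extra point for each of the `n ≤ M` points. -/
theorem IsWeightedLpSample.exists_equalWeight (h : IsWeightedLpSample ν e p K A ξ w) (hK : 0 ≤ K)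
    (hM : 0 < M) (hn : n ≤ M) :
    ∃ (m : ℕ) (η : Fin m → ι), m ≤ (A + 1) * M ∧
      IsWeightedLpSample ν e p (K * (A + 1)) 1 η fun _ => (m : ℝ)⁻¹ := by
  have hM' : (0 : ℝ) < M := Nat.cast_pos.2 hM
  set k : Fin n → ℕ := fun i => ⌈M * w i⌉₊
  set m := ∑ i, k i
  have hmM : (m : ℝ) ≤ (A + 1) * M := sum_natCeil_mul_le h.nonneg h.sum_le hn
  have hk : ∀ i, w i ≤ (A + 1) * ((m : ℝ)⁻¹ * k i) := fun i => by
    rcases (k i).eq_zero_or_pos with hzero | hpos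
    · have : M * w i ≤ 0 := Nat.ceil_eq_zero.1 hzero
      rw [hzero, Nat.cast_zero, mul_zero, mul_zero]
      exact nonpos_of_mul_nonpos_right this hM'
    have hm' : (0 : ℝ) < m :=
      Nat.cast_pos.2 (hpos.trans_le (Finset.single_le_sum_of_canonicallyOrdered
        (Finset.mem_univ i)))
    have hceil : M * w i ≤ k i := Nat.le_ceil _
    rw [inv_mul_eq_div, mul_div_assoc', le_div_iff₀ hm']
    calc w i * m ≤ w i * ((A + 1) * M) := mul_le_mul_of_nonneg_left hmM (h.nonneg i)
      _ = (A + 1) * (M * w i) := by ring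
      _ ≤ (A + 1) * k i := mul_le_mul_of_nonneg_left hceil
          (nonneg_of_mul_nonneg_left ((Nat.cast_nonneg m).trans hmM) hM')
  refine ⟨m, fun j => ξ (finSigmaFinEquiv.symm j).1, hmM, fun _ => by positivity, ?_, fun a => ?_⟩
  · simpa using mul_inv_le_one
  rw [mul_assoc, ← Finset.mul_sum, sum_finSigmaFinEquiv_symm_fst k fun i => |a ⬝ᵥ e (ξ i)| ^ p]
  refine (h.le_sum a).trans (mul_le_mul_of_nonneg_left ?_ hK)
  simp_rw [Finset.mul_sum]
  refine Finset.sum_le_sum fun i _ => ?_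
  calc w i * |a ⬝ᵥ e (ξ i)| ^ p ≤ (A + 1) * ((m : ℝ)⁻¹ * k i) * |a ⬝ᵥ e (ξ i)| ^ p :=
        mul_le_mul_of_nonneg_right (hk i) (by positivity)
    _ = _ := by ring

end Rounding

/-! ### Discretization on finite sets -/

/-- On every finite set carrying nonnegative weights of total mass at most one, the `p`-th moments
of an `N`-parameter family of functions are bounded below, up to a constant, by those of `O(Φ N)`
equally weighted points. -/
def FiniteDiscretization (p : ℝ) (Φ : ℕ → ℝ) : Prop :=
  ∃ C K : ℝ, 0 < C ∧ 0 < K ∧ ∀ ⦃ι : Type⦄ [Fintype ι] ⦃N : ℕ⦄, 3 ≤ N → ∀ ⦃ν : ι → ℝ⦄,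
    (∀ x, 0 ≤ ν x) → ∑ x, ν x ≤ 1 → ∀ e : ι → Fin N → ℝ,
      ∃ (m : ℕ) (η : Fin m → ι), m ≤ C * Φ N ∧ IsWeightedLpSample ν e p K 1 η fun _ => (m : ℝ)⁻¹

section TwoStage

variable {p : ℝ}

theorem one_le_log_natCast {N : ℕ} (hN : 3 ≤ N) : 1 ≤ Real.log N := by
  have hN' : (3 : ℝ) ≤ N := Nat.ofNat_le_cast.2 hN
  rw [Real.le_log_iff_exp_le (by linarith)]
  exact Real.exp_one_lt_three.le.trans hN'

theorem log_add_add_two_le_mul_log {C : ℝ} (hC : 0 ≤ C) (hp : 0 ≤ p) {N n d : ℕ} (hN : 3 ≤ N)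
    (hn : n ≤ C * ((N : ℝ) ^ p * N ^ 3) + 1) (hd : d ≤ N) :
    Real.log (n + d + 2) ≤ (Real.log (C + 4) + (p + 3)) * Real.log N := by
  have hN1 : (1 : ℝ) ≤ N := Nat.one_le_cast.2 (by lia)
  have hd' : (d : ℝ) ≤ N := Nat.cast_le.2 hd
  have hC4 : 0 ≤ Real.log (C + 4) := Real.log_nonneg (by linarith)
  have hNQ : (N : ℝ) ≤ (N : ℝ) ^ p * N ^ 3 :=
    (le_self_pow₀ hN1 three_ne_zero).trans
      (le_mul_of_one_le_left (by positivity) (Real.one_le_rpow hN1 hp))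
  calc Real.log (n + d + 2) ≤ Real.log ((C + 4) * ((N : ℝ) ^ p * N ^ 3)) :=
        Real.log_le_log (by positivity) (by linarith)
    _ = Real.log (C + 4) + (p + 3) * Real.log N := by
        have hN0 : (0 : ℝ) < N := by linarith
        rw [Real.log_mul (by positivity) (by positivity),
          Real.log_mul (by positivity) (by positivity), Real.log_rpow hN0, Real.log_pow]
        push_cast
        ring
    _ ≤ (Real.log (C + 4) + (p + 3)) * Real.log N := by
        linarith [le_mul_of_one_le_right hC4 (one_le_log_natCast hN)]

theorem exists_isWeightedLpSample_card_le (hp : 1 ≤ p) {ι : Type} [Fintype ι] {N : ℕ}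
    (hN : 0 < N) {ν : ι → ℝ} (hν : ∀ x, 0 ≤ ν x) (hν1 : ∑ x, ν x ≤ 1) (e : ι → Fin N → ℝ) :
    ∃ (m : ℕ) (ξ : Fin m → ι) (w : Fin m → ℝ), m ≤ 2112 * 2 ^ p * ((N : ℝ) ^ p * N ^ 3) + 1 ∧
      IsWeightedLpSample ν e p (16 * 4 ^ p) (4 * 1) ξ w := by
  have : (0 : ℝ) < N := Nat.cast_pos.2 hN
  obtain ⟨m, hm, ξ, w, hξ⟩ := (frameSampling_grid hp).exists_isWeightedLpSample
    (M := ⌈2112 * 2 ^ p * ((N : ℝ) ^ p * N ^ 3)⌉₊) (by linarith) (Nat.ceil_pos.2 (by positivity))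
    (fun n _ d hd => le_trans (by gcongr) (Nat.le_ceil _)) zero_lt_one hν hν1 e
  exact ⟨m, ξ, w, (Nat.cast_le.2 hm).trans (Nat.ceil_lt_add_one (by positivity)).le, hξ⟩

/- A sample of polynomial size, found first, makes the logarithm of the number of points in the
second frame `O(log N)`. -/
theorem FrameSampling.finiteDiscretization {θ C K : ℝ} (hp : 1 ≤ p) (hθ : 0 ≤ θ) (hC : 0 < C)
    (hK : 0 < K)
    (h : FrameSampling p K fun n d => C * ((d : ℝ) ^ θ * Real.log (n + d + 2))) :
    FiniteDiscretization p fun N => (N : ℝ) ^ θ * Real.log N := by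
  set A := Real.log (2112 * 2 ^ p + 4) + (p + 3)
  have hA : 0 < A :=
    add_pos (Real.log_pos (by linarith [Real.rpow_pos_of_pos two_pos p])) (by linarith)
  refine ⟨17 * (C * A + 1), 16 * 4 ^ p * K * 17, by positivity, by positivity,
    fun ι _ N hN ν hν hν1 e => ?_⟩
  have hlog := one_le_log_natCast hN
  have hNlog : 1 ≤ (N : ℝ) ^ θ * Real.log N :=
    one_le_mul_of_one_le_of_one_le (Real.one_le_rpow (Nat.one_le_cast.2 (by lia)) hθ) hlog
  obtain ⟨m₀, ξ₀, w₀, hm₀, h₀⟩ := exists_isWeightedLpSample_card_le hp (by lia) hν hν1 e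
  set M := ⌈C * A * ((N : ℝ) ^ θ * Real.log N)⌉₊
  have hM : 0 < M := Nat.ceil_pos.2 (by positivity)
  have hsize : ∀ n ≤ Fintype.card (Fin m₀), ∀ d ≤ N,
      C * ((d : ℝ) ^ θ * Real.log (n + d + 2)) ≤ M := fun n hn d hd => by
    have hn' : (n : ℝ) ≤ m₀ := Nat.cast_le.2 (hn.trans_eq (Fintype.card_fin m₀))
    have hlog' := log_add_add_two_le_mul_log (by positivity) (by linarith) hN (hn'.trans hm₀) hd
    calc C * ((d : ℝ) ^ θ * Real.log (n + d + 2)) ≤ C * ((N : ℝ) ^ θ * (A * Real.log N)) := by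
          have := Real.log_natCast_nonneg (n + d + 2)
          push_cast at this
          gcongr
      _ = C * A * ((N : ℝ) ^ θ * Real.log N) := by ring
      _ ≤ M := Nat.le_ceil _
  obtain ⟨m₁, hm₁, ξ₁, w₁, h₁⟩ := h.exists_isWeightedLpSample (by linarith) hM hsize
    (by norm_num) h₀.nonneg h₀.sum_le (e ∘ ξ₀)
  obtain ⟨m, η, hm, hη⟩ := (h₀.trans (by positivity) h₁).exists_equalWeight (by positivity) hM hm₁
  norm_num at hm hη
  refine ⟨m, η, hm.trans ?_, hη⟩
  have hceil : (M : ℝ) ≤ C * A * ((N : ℝ) ^ θ * Real.log N) + 1 :=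
    (Nat.ceil_lt_add_one (by positivity)).le
  linarith

theorem finiteDiscretization_of_two_lt (hp : 2 < p) :
    FiniteDiscretization p fun N => (N : ℝ) ^ (p / 2) * Real.log N := by
  obtain ⟨C, hC, h⟩ := exists_frameSampling_of_two_lt hp
  exact h.finiteDiscretization (by linarith) (by linarith) hC (by positivity)

theorem finiteDiscretization_of_lt_two (hp₁ : 1 ≤ p) (hp₂ : p < 2) :
    FiniteDiscretization p fun N => N * Real.log N := by
  suffices FiniteDiscretization p fun N => (N : ℝ) ^ (1 : ℝ) * Real.log N by
    simpa only [Real.rpow_one] using this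
  rcases hp₁.eq_or_lt with rfl | hp₁
  · exact FrameSampling.finiteDiscretization (C := 512) (K := 8) le_rfl zero_le_one (by norm_num)
      (by norm_num) (by simpa only [Real.rpow_one] using frameSampling_one)
  · obtain ⟨C, hC, h⟩ := exists_frameSampling_of_lt_two hp₁ hp₂
    exact FrameSampling.finiteDiscretization (C := C) (K := 16 * 4 ^ p) hp₁.le zero_le_one hC
      (by positivity) (by simpa only [Real.rpow_one] using h)

end TwoStage

/-! ### Barrier argument for quadratic forms -/

section MatrixIdentities

variable {n : Type*} [Fintype n] [DecidableEq n]

theorem inv_add_smul_vecMulVec {𝕜 : Type*} [Field 𝕜] {A : Matrix n n 𝕜} (hA : IsUnit A.det)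
    {c : 𝕜} {u v : n → 𝕜} (h : 1 + c * (v ⬝ᵥ A⁻¹ *ᵥ u) ≠ 0) :
    (A + c • Matrix.vecMulVec u v)⁻¹ =
      A⁻¹ - (c / (1 + c * (v ⬝ᵥ A⁻¹ *ᵥ u))) • Matrix.vecMulVec (A⁻¹ *ᵥ u) (v ᵥ* A⁻¹) := by
  apply Matrix.inv_eq_right_inv
  have hAu : A *ᵥ (A⁻¹ *ᵥ u) = u := by
    rw [Matrix.mulVec_mulVec, Matrix.mul_nonsing_inv A hA, Matrix.one_mulVec]
  rw [add_mul, mul_sub, mul_sub, Matrix.mul_nonsing_inv A hA, mul_smul_comm, Matrix.mul_vecMulVec,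
    hAu, smul_mul_assoc, smul_mul_assoc, mul_smul_comm, Matrix.vecMulVec_mul,
    Matrix.vecMulVec_mul_vecMulVec]
  ext i j
  simp only [Matrix.add_apply, Matrix.sub_apply, Matrix.smul_apply, Matrix.vecMulVec_apply,
    Pi.smul_apply, smul_eq_mul]
  field_simp
  ring

theorem trace_inv_add_smul_vecMulVec {𝕜 : Type*} [Field 𝕜] {A : Matrix n n 𝕜}
    (hA : IsUnit A.det) {c : 𝕜} {u v : n → 𝕜} (h : 1 + c * (v ⬝ᵥ A⁻¹ *ᵥ u) ≠ 0) :
    (A + c • Matrix.vecMulVec u v)⁻¹.trace =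
      A⁻¹.trace - c * (v ⬝ᵥ (A⁻¹ * A⁻¹) *ᵥ u) / (1 + c * (v ⬝ᵥ A⁻¹ *ᵥ u)) := by
  rw [inv_add_smul_vecMulVec hA h, Matrix.trace_sub, Matrix.trace_smul, Matrix.trace_vecMulVec,
    dotProduct_comm (A⁻¹ *ᵥ u), ← Matrix.dotProduct_mulVec, Matrix.mulVec_mulVec, smul_eq_mul,
    div_mul_eq_mul_div]

variable (U : unitary (Matrix n n ℝ))

theorem trace_conj_diagonal (g : n → ℝ) :
    (Unitary.conjStarAlgAut ℝ _ U (Matrix.diagonal g)).trace = ∑ i, g i := by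
  rw [Unitary.conjStarAlgAut_apply, Matrix.trace_mul_cycle]
  simp [Matrix.trace_diagonal]

theorem posDef_conj_diagonal {g : n → ℝ} (hg : ∀ i, 0 < g i) :
    (Unitary.conjStarAlgAut ℝ _ U (Matrix.diagonal g)).PosDef := by
  have hU : IsUnit (U : Matrix n n ℝ) := (Unitary.toUnits U).isUnit
  rw [Unitary.conjStarAlgAut_apply, Matrix.IsUnit.posDef_star_right_conjugate_iff hU]
  exact Matrix.posDef_diagonal_iff.2 hg

theorem inv_conj_diagonal {g : n → ℝ} (hg : ∀ i, g i ≠ 0) :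
    (Unitary.conjStarAlgAut ℝ _ U (Matrix.diagonal g))⁻¹ =
      Unitary.conjStarAlgAut ℝ _ U (Matrix.diagonal fun i => (g i)⁻¹) := by
  apply Matrix.inv_eq_right_inv
  rw [← map_mul, Matrix.diagonal_mul_diagonal]
  simp only [mul_inv_cancel₀ (hg _), Matrix.diagonal_one, map_one]

end MatrixIdentities

section Barrier

variable {n : Type*} [Fintype n] [DecidableEq n] {B : Matrix n n ℝ}

theorem barrier_shift (hB : B.PosDef) (htr : B⁻¹.trace ≤ 1 / 4) :
    (B - 1).PosDef ∧ (B - 1)⁻¹.trace ≤ 1 / 3 ∧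
      (B - 1)⁻¹.trace - B⁻¹.trace ≤ ((B - 1)⁻¹ * (B - 1)⁻¹).trace := by
  set U := hB.1.eigenvectorUnitary
  set l := hB.1.eigenvalues
  have hl : ∀ i, 0 < l i := hB.eigenvalues_pos
  have hBl : B = Unitary.conjStarAlgAut ℝ _ U (Matrix.diagonal l) := hB.1.spectral_theorem
  have hB1 : B - 1 = Unitary.conjStarAlgAut ℝ _ U (Matrix.diagonal fun i => l i - 1) := by
    rw [← Matrix.diagonal_sub, map_sub, ← hBl, Matrix.diagonal_one, map_one]
  have htrB : B⁻¹.trace = ∑ i, (l i)⁻¹ := by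
    rw [hBl, inv_conj_diagonal U fun i => (hl i).ne', trace_conj_diagonal]
  have hl4 : ∀ i, 4 ≤ l i := fun i => by
    have hle : (l i)⁻¹ ≤ 1 / 4 := (Finset.single_le_sum (f := fun i => (l i)⁻¹)
      (fun i _ => (inv_pos.2 (hl i)).le) (Finset.mem_univ i)).trans (htrB.symm.trans_le htr)
    rwa [one_div, inv_le_inv₀ (hl i) four_pos] at hle
  have hl1 : ∀ i, 0 < l i - 1 := fun i => by linarith [hl4 i]
  rw [htrB] at htr ⊢
  rw [hB1, inv_conj_diagonal U fun i => (hl1 i).ne', ← map_mul, Matrix.diagonal_mul_diagonal,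
    trace_conj_diagonal, trace_conj_diagonal, ← Finset.sum_sub_distrib]
  refine ⟨posDef_conj_diagonal U hl1, ?_, Finset.sum_le_sum fun i _ => ?_⟩
  · have hinv : ∀ i, (l i - 1)⁻¹ ≤ 4 / 3 * (l i)⁻¹ := fun i => by
      rw [← div_eq_mul_inv, inv_eq_one_div, div_le_div_iff₀ (hl1 i) (hl i)]
      linarith [hl4 i]
    calc ∑ i, (l i - 1)⁻¹ ≤ ∑ i, 4 / 3 * (l i)⁻¹ := Finset.sum_le_sum fun i _ => hinv i
      _ ≤ 1 / 3 := by
          rw [← Finset.mul_sum]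
          linarith
  · have hle : (l i)⁻¹ ≤ (l i - 1)⁻¹ := inv_anti₀ (hl1 i) (by linarith)
    have hsub : (l i - 1)⁻¹ - (l i)⁻¹ = (l i - 1)⁻¹ * (l i)⁻¹ := by
      rw [inv_sub_inv (hl1 i).ne' (hl i).ne', sub_sub_cancel, one_div, mul_inv]
    rw [hsub]
    exact mul_le_mul_of_nonneg_left hle (inv_nonneg.2 (hl1 i).le)

variable {ι : Type*} [Fintype ι] {ν : ι → ℝ} {v : ι → n → ℝ}

theorem sum_mul_dotProduct_mulVec_eq_trace (hv : ∑ x, ν x • Matrix.vecMulVec (v x) (v x) = 1)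
    (Q : Matrix n n ℝ) : ∑ x, ν x * (v x ⬝ᵥ Q *ᵥ v x) = Q.trace := by
  calc ∑ x, ν x * (v x ⬝ᵥ Q *ᵥ v x) = (Q * ∑ x, ν x • Matrix.vecMulVec (v x) (v x)).trace := by
        rw [Finset.mul_sum, Matrix.trace_sum]
        refine Finset.sum_congr rfl fun x _ => ?_
        rw [mul_smul_comm, Matrix.trace_smul, Matrix.mul_vecMulVec, Matrix.trace_vecMulVec,
          dotProduct_comm, smul_eq_mul]
    _ = Q.trace := by rw [hv, mul_one]

theorem exists_barrier_gain [Nonempty ι] (hν : ∀ x, 0 < ν x) (hν1 : ∑ x, ν x ≤ 1)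
    (hv : ∑ x, ν x • Matrix.vecMulVec (v x) (v x) = 1) {R : Matrix n n ℝ} (hR : R.PosSemidef)
    (htr : R.trace ≤ 1 / 3) {δ : ℝ} (hδ : δ ≤ (R * R).trace) :
    ∃ x, δ * (1 + 2 * (v x ⬝ᵥ R *ᵥ v x)) ≤ 2 * (v x ⬝ᵥ (R * R) *ᵥ v x) := by
  have hRR : 0 ≤ (R * R).trace := by
    simpa only [hR.1.eq] using (Matrix.posSemidef_conjTranspose_mul_self R).trace_nonneg
  have hmean : ∑ x, ν x * (δ * (1 + 2 * (v x ⬝ᵥ R *ᵥ v x))) ≤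
      ∑ x, ν x * (2 * (v x ⬝ᵥ (R * R) *ᵥ v x)) := by
    calc _ = δ * (∑ x, ν x + 2 * ∑ x, ν x * (v x ⬝ᵥ R *ᵥ v x)) := by
          rw [Finset.mul_sum, ← Finset.sum_add_distrib, Finset.mul_sum]
          exact Finset.sum_congr rfl fun x _ => by ring
      _ ≤ (R * R).trace * 2 := by
          rw [sum_mul_dotProduct_mulVec_eq_trace hv]
          exact mul_le_mul hδ (by linarith)
            (add_nonneg (Finset.sum_nonneg fun x _ => (hν x).le)
              (mul_nonneg zero_le_two hR.trace_nonneg)) hRR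
      _ = _ := by
          rw [← sum_mul_dotProduct_mulVec_eq_trace hv (R * R), Finset.sum_mul]
          exact Finset.sum_congr rfl fun x _ => by ring
  obtain ⟨x, -, hx⟩ := Finset.exists_le_of_sum_le Finset.univ_nonempty hmean
  exact ⟨x, le_of_mul_le_mul_left hx (hν x)⟩

theorem exists_barrier_step [Nonempty ι] (hν : ∀ x, 0 < ν x) (hν1 : ∑ x, ν x ≤ 1)
    (hv : ∑ x, ν x • Matrix.vecMulVec (v x) (v x) = 1) (hB : B.PosDef)
    (htr : B⁻¹.trace ≤ 1 / 4) :
    ∃ x, (B - 1 + (2 : ℝ) • Matrix.vecMulVec (v x) (v x)).PosDef ∧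
      (B - 1 + (2 : ℝ) • Matrix.vecMulVec (v x) (v x))⁻¹.trace ≤ 1 / 4 := by
  obtain ⟨hB1, htr1, hdiff⟩ := barrier_shift hB htr
  obtain ⟨x, hx⟩ := exists_barrier_gain hν hν1 hv hB1.inv.posSemidef htr1 hdiff
  have hpos : 0 < 1 + 2 * (v x ⬝ᵥ (B - 1)⁻¹ *ᵥ v x) := by
    have := hB1.inv.posSemidef.dotProduct_mulVec_nonneg (v x)
    rw [star_trivial] at this
    linarith
  refine ⟨x, hB1.add_posSemidef (Matrix.PosSemidef.smul ?_ zero_le_two), ?_⟩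
  · simpa using Matrix.posSemidef_vecMulVec_self_star (v x)
  · rw [trace_inv_add_smul_vecMulVec hB1.det_pos.ne'.isUnit hpos.ne']
    rw [← le_div_iff₀ hpos] at hx
    linarith

theorem exists_barrier_sequence [Nonempty n] [Nonempty ι] (hν : ∀ x, 0 < ν x)
    (hν1 : ∑ x, ν x ≤ 1) (hv : ∑ x, ν x • Matrix.vecMulVec (v x) (v x) = 1) (M : ℕ) :
    ∃ ξ : Fin M → ι, ∃ B : Matrix n n ℝ,
      B = (4 * Fintype.card n - M : ℝ) • 1 +
        (2 : ℝ) • ∑ i, Matrix.vecMulVec (v (ξ i)) (v (ξ i)) ∧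
      B.PosDef ∧ B⁻¹.trace ≤ 1 / 4 := by
  have hcard : (0 : ℝ) < Fintype.card n := Nat.cast_pos.2 Fintype.card_pos
  induction M with
  | zero =>
    refine ⟨Fin.elim0, (4 * Fintype.card n : ℝ) • 1, by simp,
      Matrix.PosDef.one.smul (by positivity), ?_⟩
    have hinv : ((4 * Fintype.card n : ℝ) • (1 : Matrix n n ℝ))⁻¹ =
        (4 * Fintype.card n : ℝ)⁻¹ • 1 := by
      apply Matrix.inv_eq_right_inv
      rw [smul_mul_smul_comm, mul_inv_cancel₀ (by positivity), one_mul, one_smul]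
    rw [hinv, Matrix.trace_smul, Matrix.trace_one, smul_eq_mul, mul_inv, mul_assoc,
      inv_mul_cancel₀ hcard.ne', mul_one, one_div]
  | succ M ih =>
    obtain ⟨ξ, B, rfl, hB, htr⟩ := ih
    obtain ⟨x, hx, hxtr⟩ := exists_barrier_step hν hν1 hv hB htr
    refine ⟨Fin.snoc ξ x, _, ?_, hx, hxtr⟩
    rw [Fin.sum_univ_castSucc]
    simp only [Fin.snoc_castSucc, Fin.snoc_last]
    push_cast
    module

end Barrier

section EvenPowers

variable {ι : Type*} [Fintype ι] {ν : ι → ℝ}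

theorem exists_isWeightedLpSample_two_of_parseval {d : ℕ} (hd : 0 < d) {v : ι → Fin d → ℝ}
    (hν : ∀ x, 0 < ν x) (hν1 : ∑ x, ν x ≤ 1)
    (hv : ∑ x, ν x • Matrix.vecMulVec (v x) (v x) = 1) :
    ∃ ξ : Fin (8 * d) → ι, IsWeightedLpSample ν v 2 4 1 ξ fun _ => ((8 * d : ℕ) : ℝ)⁻¹ := by
  have hd' : (0 : ℝ) < d := Nat.cast_pos.2 hd
  have := Fin.pos_iff_nonempty.1 hd
  have : Nonempty ι := by
    by_contra hempty
    rw [not_nonempty_iff] at hempty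
    rw [Finset.univ_eq_empty, Finset.sum_empty] at hv
    exact zero_ne_one hv
  obtain ⟨ξ, B, rfl, hB, -⟩ := exists_barrier_sequence hν hν1 hv (8 * d)
  refine ⟨ξ, fun _ => by positivity, ?_, fun a => ?_⟩
  · rw [Finset.sum_const, Finset.card_fin, nsmul_eq_mul]
    exact mul_inv_le_one
  have hrankOne : ∀ w : Fin d → ℝ, a ⬝ᵥ Matrix.vecMulVec w w *ᵥ a = (a ⬝ᵥ w) ^ 2 := fun w => by
    rw [Matrix.vecMulVec_mulVec, dotProduct_smul, dotProduct_comm w a, sq]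
    rfl
  have hnonneg := hB.posSemidef.dotProduct_mulVec_nonneg a
  rw [star_trivial, Matrix.add_mulVec, Matrix.smul_mulVec, Matrix.smul_mulVec, Matrix.one_mulVec,
    Matrix.sum_mulVec, dotProduct_add, dotProduct_smul, dotProduct_smul, dotProduct_sum] at hnonneg
  have hparseval : ∑ x, ν x * (a ⬝ᵥ v x) ^ 2 = a ⬝ᵥ a := by
    have hone : a ⬝ᵥ (1 : Matrix (Fin d) (Fin d) ℝ) *ᵥ a = a ⬝ᵥ a := by rw [Matrix.one_mulVec]
    rw [← hone, ← hv, Matrix.sum_mulVec, dotProduct_sum]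
    simp only [Matrix.smul_mulVec, dotProduct_smul, hrankOne, smul_eq_mul]
  simp only [hrankOne, smul_eq_mul, Fintype.card_fin] at hnonneg
  push_cast at hnonneg ⊢
  simp only [Real.rpow_two, sq_abs]
  rw [hparseval, ← Finset.mul_sum]
  have hscale : ∀ S : ℝ, 4 * ((8 * (d : ℝ))⁻¹ * S) = S / (2 * d) := fun S => by
    field_simp
    ring
  rw [hscale, le_div_iff₀ (by positivity)]
  linarith

theorem exists_isWeightedLpSample_two (hν : ∀ x, 0 ≤ ν x) (hν1 : ∑ x, ν x ≤ 1) {D : ℕ}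
    (e : ι → Fin D → ℝ) :
    ∃ (m : ℕ) (ξ : Fin m → ι), m ≤ 8 * D ∧ IsWeightedLpSample ν e 2 4 1 ξ fun _ => (m : ℝ)⁻¹ := by
  classical
  obtain ⟨d, hdD, e', he'0, he', hrep⟩ :=
    exists_injective_coordinates fun x : {x // 0 < ν x ∧ e x ≠ 0} => e x
  rcases d.eq_zero_or_pos with rfl | hd
  · exact ⟨0, _, by simp, .of_support (ξ := Fin.elim0) hν two_ne_zero hrep
      ⟨fun i => i.elim0, by simp, fun a => by simp⟩⟩
  obtain ⟨τ, u, -, hu, heu⟩ := exists_isotropicFrame hd (fun x => x.2.1) two_pos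
    (fun x => he'0 x x.2.2) he'
  have hparseval : ∑ x : {x // 0 < ν x ∧ e x ≠ 0},
      ν x • Matrix.vecMulVec (τ x • u x) (τ x • u x) = 1 := by
    ext i j
    rw [Matrix.one_apply, ← hu.orthonormal i j, Matrix.sum_apply]
    refine Finset.sum_congr rfl fun x _ => ?_
    simp only [Matrix.smul_apply, Matrix.vecMulVec_apply, Pi.smul_apply, smul_eq_mul,
      Real.rpow_two]
    ring
  have hsum : ∑ x : {x // 0 < ν x ∧ e x ≠ 0}, ν x ≤ 1 := by
    rw [← Finset.sum_subtype {x | 0 < ν x ∧ e x ≠ 0} (by simp) ν]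
    exact (Finset.sum_le_univ_sum_of_nonneg hν).trans hν1
  obtain ⟨ξ, hξ⟩ := exists_isWeightedLpSample_two_of_parseval hd (fun x => x.2.1) hsum hparseval
  refine ⟨8 * d, fun i => ξ i, by lia, .of_support hν two_ne_zero (fun a => ?_) hξ⟩
  obtain ⟨b, hb⟩ := hrep a
  obtain ⟨c, hc⟩ := heu b
  exact ⟨c, fun x => by rw [hb, hc, dotProduct_smul, smul_eq_mul]⟩

theorem dotProduct_pow_eq_dotProduct_prod {N k D : ℕ} (E : (Fin k → Fin N) ≃ Fin D)
    (a v : Fin N → ℝ) :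
    (a ⬝ᵥ v) ^ k = (fun t => ∏ i, a (E.symm t i)) ⬝ᵥ (fun t => ∏ i, v (E.symm t i)) := by
  simp only [dotProduct, Fintype.sum_pow, Finset.prod_mul_distrib]
  rw [← E.symm.sum_comp]

/- The `2k`-th powers of a family are the squares of its `k`-th tensor power. -/
theorem finiteDiscretization_two_mul (k : ℕ) :
    FiniteDiscretization (2 * k) fun N => (N : ℝ) ^ k := by
  refine ⟨8, 4, by norm_num, by norm_num, fun ι _ N _ ν hν hν1 e => ?_⟩
  let E : (Fin k → Fin N) ≃ Fin (N ^ k) := Fintype.equivFinOfCardEq (by simp)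
  obtain ⟨m, η, hm, hη⟩ := exists_isWeightedLpSample_two hν hν1 fun x t => ∏ i, e x (E.symm t i)
  have hpow : ∀ a x, |a ⬝ᵥ e x| ^ (2 * k : ℝ) =
      |(fun t => ∏ i, a (E.symm t i)) ⬝ᵥ (fun t => ∏ i, e x (E.symm t i))| ^ (2 : ℝ) :=
    fun a x => by
      rw [← dotProduct_pow_eq_dotProduct_prod, abs_pow, mul_comm, Real.rpow_mul (abs_nonneg _),
        Real.rpow_natCast]
  refine ⟨m, η, (by exact_mod_cast hm : (m : ℝ) ≤ 8 * (N : ℝ) ^ k), hη.nonneg, hη.sum_le,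
    fun a => ?_⟩
  simp only [hpow]
  exact hη.le_sum _

end EvenPowers

/-! ### Reduction to finitely many points -/

section SimpleApproximation

variable {Ω E : Type*} [MeasurableSpace Ω] {μ : Measure Ω} {q : ENNReal}
  [NormedAddCommGroup E] {u : Ω → E}

theorem lpNorm_congr_ae {v : Ω → E} (h : u =ᵐ[μ] v) : lpNorm u q μ = lpNorm v q μ := by
  classical
  rw [lpNorm, lpNorm, eLpNorm_congr_ae h]
  exact if_congr (aestronglyMeasurable_congr h) rfl rfl

theorem ae_forall_mem_apply_eq_zero [NormedSpace ℝ E] [FiniteDimensional ℝ E]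
    (W : Submodule ℝ (E →L[ℝ] ℝ)) (hW : ∀ L ∈ W, ∀ᵐ ω ∂μ, L (u ω) = 0) :
    ∀ᵐ ω ∂μ, ∀ L ∈ W, L (u ω) = 0 := by
  obtain ⟨S, rfl⟩ := IsNoetherian.noetherian W
  have hS : ∀ᵐ ω ∂μ, ∀ L ∈ S, L (u ω) = 0 :=
    (ae_ball_iff S.countable_toSet).2 fun L hL => hW L (Submodule.subset_span hL)
  filter_upwards [hS] with ω hω L hL
  induction hL using Submodule.span_induction with
  | mem L hL => exact hω L hL
  | zero => rfl
  | add L M _ _ hL hM => rw [add_apply, hL, hM, add_zero]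
  | smul c L _ hL => rw [smul_apply, hL, smul_zero]

theorem exists_norm_le_mul_lpNorm_comp [NormedSpace ℝ E] [FiniteDimensional ℝ E]
    [Fact (1 ≤ q)] (hu : MemLp u q μ) :
    ∃ A : Set Ω, (∀ᵐ ω ∂μ, ω ∈ A) ∧ ∃ K : ℝ, 0 ≤ K ∧ ∀ L : E →L[ℝ] ℝ, ∃ M : E →L[ℝ] ℝ,
      (∀ ω ∈ A, M (u ω) = L (u ω)) ∧ ‖M‖ ≤ K * lpNorm (M ∘ u) q μ := by
  let T : (E →L[ℝ] ℝ) →ₗ[ℝ] Lp ℝ q μ :=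
    { toFun := fun L => L.compLp hu.toLp
      map_add' := fun L M => ContinuousLinearMap.add_compLp L M _
      map_smul' := fun c L => ContinuousLinearMap.smul_compLp c L _ }
  have hT : ∀ L : E →L[ℝ] ℝ, T L =ᵐ[μ] L ∘ u := fun L =>
    Filter.EventuallyEq.trans (L.coeFn_compLp _) (hu.coeFn_toLp.fun_comp L)
  obtain ⟨S, hS⟩ := T.rangeRestrict.exists_rightInverse_of_surjective T.range_rangeRestrict
  have hTS : ∀ L, T (S (T.rangeRestrict L)) = T L := fun L =>
    congrArg Subtype.val (LinearMap.congr_fun hS (T.rangeRestrict L))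
  refine ⟨{ω | ∀ L ∈ LinearMap.ker T, L (u ω) = 0}, ae_forall_mem_apply_eq_zero _ fun L hL => ?_,
    ‖LinearMap.toContinuousLinearMap S‖, ContinuousLinearMap.opNorm_nonneg _, fun L =>
    ⟨S (T.rangeRestrict L), fun ω hω => ?_, ?_⟩⟩
  · filter_upwards [hT L, Lp.coeFn_zero ℝ q μ] with ω hω hzero
    rw [LinearMap.mem_ker.1 hL, hzero] at hω
    exact hω.symm
  · have hker : S (T.rangeRestrict L) - L ∈ LinearMap.ker T := by
      rw [LinearMap.mem_ker, map_sub, hTS, sub_self]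
    exact sub_eq_zero.1 (hω _ hker)
  · have hnorm : lpNorm (S (T.rangeRestrict L) ∘ u) q μ = ‖T L‖ := by
      rw [← lpNorm_congr_ae (hT _), hTS]
      exact (toReal_eLpNorm (Lp.aestronglyMeasurable _)).symm
    rw [hnorm]
    exact (LinearMap.toContinuousLinearMap S).le_opNorm (T.rangeRestrict L)

theorem exists_simpleFunc_mem_image [IsProbabilityMeasure μ] [MeasurableSpace E] [BorelSpace E]
    [SecondCountableTopology E] (hum : Measurable u) (hu : MemLp u q μ) (hq : q ≠ ⊤)
    {A : Set Ω} (hA : ∀ᵐ ω ∂μ, ω ∈ A) {ε : ENNReal} (hε : 0 < ε) :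
    ∃ g : SimpleFunc Ω E, (∀ ω, g ω ∈ u '' A) ∧ eLpNorm (⇑g - u) q μ < ε := by
  obtain ⟨ω₀, hω₀⟩ := hA.exists
  have hmem : u ω₀ ∈ u '' A := Set.mem_image_of_mem u hω₀
  have hlim := SimpleFunc.tendsto_approxOn_Lp_eLpNorm hum hmem hq
    (hA.mono fun ω hω => subset_closure (Set.mem_image_of_mem u hω))
    (hu.sub (memLp_const _)).eLpNorm_lt_top
  obtain ⟨n, hn⟩ := (hlim.eventually_lt_const hε).exists
  exact ⟨_, SimpleFunc.approxOn_mem hum hmem n, hn⟩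

theorem lpNorm_clm_comp_le_add [NormedSpace ℝ E] (hq : 1 ≤ q) {g : Ω → E} (hu : MemLp u q μ)
    (hg : MemLp g q μ) (L : E →L[ℝ] ℝ) :
    lpNorm (L ∘ u) q μ ≤ lpNorm (L ∘ g) q μ + ‖L‖ * lpNorm (g - u) q μ := by
  have hLg : MemLp (L ∘ g) q μ := L.comp_memLp' hg
  have hbound : lpNorm (L ∘ u - L ∘ g) q μ ≤ lpNorm (‖L‖ • fun ω => ‖(g - u) ω‖) q μ :=
    lpNorm_mono_real ((hg.sub hu).norm.const_smul _) fun ω => by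
      rw [Pi.sub_apply, Function.comp_apply, Function.comp_apply, ← map_sub, ← norm_neg, ← map_neg,
        neg_sub]
      exact L.le_opNorm _
  rw [lpNorm_const_smul, coe_nnnorm, norm_norm, lpNorm_norm (hg.sub hu).1] at hbound
  exact (lpNorm_le_lpNorm_add_lpNorm_sub' hLg hq).trans (by gcongr)

theorem exists_simpleFunc_lpNorm_comp_le [IsProbabilityMeasure μ] [NormedSpace ℝ E]
    [FiniteDimensional ℝ E] [MeasurableSpace E] [BorelSpace E] (hq : 1 ≤ q) (hq' : q ≠ ⊤)
    (hum : Measurable u) (hu : MemLp u q μ) :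
    ∃ (g : SimpleFunc Ω E) (x : E → Ω), (∀ ω, u (x (g ω)) = g ω) ∧
      ∀ L : E →L[ℝ] ℝ, lpNorm (L ∘ u) q μ ≤ 2 * lpNorm (L ∘ g) q μ := by
  have : Fact (1 ≤ q) := ⟨hq⟩
  have : Nonempty Ω := nonempty_of_isProbabilityMeasure μ
  obtain ⟨A, hA, K, hK, hrep⟩ := exists_norm_le_mul_lpNorm_comp hu
  obtain ⟨g, hgA, hgu⟩ := exists_simpleFunc_mem_image hum hu hq' hA
    (ENNReal.ofReal_pos.2 (by positivity : 0 < (2 * (K + 1))⁻¹))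
  have hg := g.memLp_of_isFiniteMeasure q μ
  refine ⟨g, Function.invFunOn u A, fun ω => Function.invFunOn_eq (hgA ω), fun L => ?_⟩
  obtain ⟨M, hML, hM⟩ := hrep L
  have hMLu : M ∘ u =ᵐ[μ] L ∘ u := hA.mono hML
  have hMLg : M ∘ g = L ∘ g := by
    ext ω
    obtain ⟨x, hx, hxg⟩ := hgA ω
    rw [Function.comp_apply, Function.comp_apply, ← hxg, hML x hx]
  have hdist : lpNorm (⇑g - u) q μ ≤ (2 * (K + 1))⁻¹ := by
    rw [← toReal_eLpNorm (hg.sub hu).1]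
    exact ENNReal.toReal_le_of_le_ofReal (by positivity) hgu.le
  rw [← lpNorm_congr_ae hMLu, ← hMLg]
  have hsmall : ‖M‖ * lpNorm (⇑g - u) q μ ≤ lpNorm (M ∘ u) q μ / 2 :=
    calc ‖M‖ * lpNorm (⇑g - u) q μ ≤ K * lpNorm (M ∘ u) q μ * (2 * (K + 1))⁻¹ :=
        mul_le_mul hM hdist lpNorm_nonneg (mul_nonneg hK lpNorm_nonneg)
      _ = K / (K + 1) * (lpNorm (M ∘ u) q μ / 2) := by field_simp
      _ ≤ lpNorm (M ∘ u) q μ / 2 :=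
        mul_le_of_le_one_left (div_nonneg lpNorm_nonneg zero_le_two)
          (div_le_one_of_le₀ (by linarith) (by positivity))
  linarith [lpNorm_clm_comp_le_add hq hu hg M]

end SimpleApproximation

section PointEvaluation

variable {Ω : Type*} [MeasurableSpace Ω] {μ : Measure Ω} {p : ℝ}

theorem lpNorm_ofReal_eq_LpNorm (hp : 0 < p) {f : Ω → ℝ} (hf : AEStronglyMeasurable f μ) :
    lpNorm f (ENNReal.ofReal p) μ = LpNorm μ p f := by
  rw [lpNorm_eq_integral_norm_rpow_toReal (ENNReal.ofReal_pos.2 hp).ne' ENNReal.ofReal_ne_top hf,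
    ENNReal.toReal_ofReal hp.le, LpNorm, one_div]
  rfl

theorem integral_comp_simpleFunc_eq_sum {E : Type*} [NormedAddCommGroup E] [IsFiniteMeasure μ]
    (g : SimpleFunc Ω E) {φ : E → ℝ} (hφ : φ 0 = 0) :
    ∫ ω, φ (g ω) ∂μ = ∑ v : g.range, μ.real (g ⁻¹' {(v : E)}) * φ v := by
  rw [Finset.sum_coe_sort g.range fun v => μ.real (g ⁻¹' {v}) * φ v]
  have hmap := SimpleFunc.map_integral g φ g.integrable_of_isFiniteMeasure hφ (μ := μ)
  rwa [SimpleFunc.integral_eq_integral _ (SimpleFunc.integrable_of_isFiniteMeasure _)] at hmap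

theorem sum_range_measureReal_preimage_singleton {E : Type*} [IsProbabilityMeasure μ]
    (g : SimpleFunc Ω E) : ∑ v : g.range, μ.real (g ⁻¹' {(v : E)}) = 1 := by
  rw [Finset.sum_coe_sort g.range fun v => μ.real (g ⁻¹' {v})]
  simp only [Measure.real]
  rw [← ENNReal.toReal_sum fun v _ => measure_ne_top _ _, g.sum_range_measure_preimage_singleton,
    measure_univ, ENNReal.toReal_one]

theorem exists_finite_LpNorm_dotProduct_le [IsProbabilityMeasure μ] (hp : 1 ≤ p) {N : ℕ}
    {u : Ω → Fin N → ℝ} (hum : ∀ j, Measurable fun ω => u ω j)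
    (hu : ∀ j, Integrable (fun ω => |u ω j| ^ p) μ) :
    ∃ (ι : Type) (_ : Fintype ι) (x : ι → Ω) (ν : ι → ℝ), (∀ i, 0 ≤ ν i) ∧ ∑ i, ν i = 1 ∧
      ∀ a : Fin N → ℝ, LpNorm μ p (fun ω => a ⬝ᵥ u ω) ≤
        2 * (∑ i, ν i * |a ⬝ᵥ u (x i)| ^ p) ^ (1 / p) := by
  have hp0 : 0 < p := zero_lt_one.trans_le hp
  have huLp : MemLp u (ENNReal.ofReal p) μ := MemLp.of_eval fun j => by
    rw [← integrable_norm_rpow_iff (hum j).aestronglyMeasurable (ENNReal.ofReal_pos.2 hp0).ne'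
      ENNReal.ofReal_ne_top, ENNReal.toReal_ofReal hp0.le]
    exact hu j
  obtain ⟨g, x, hx, hg⟩ := exists_simpleFunc_lpNorm_comp_le (ENNReal.one_le_ofReal.2 hp)
    ENNReal.ofReal_ne_top (measurable_pi_iff.2 hum) huLp
  refine ⟨g.range, inferInstance, fun v => x v, fun v => μ.real (g ⁻¹' {(v : Fin N → ℝ)}),
    fun v => measureReal_nonneg, sum_range_measureReal_preimage_singleton g, fun a => ?_⟩
  let L : (Fin N → ℝ) →L[ℝ] ℝ := LinearMap.toContinuousLinearMap (dotProductBilin ℝ ℝ a)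
  have hL := hg L
  rw [lpNorm_ofReal_eq_LpNorm hp0 (L.comp_memLp' huLp).1, lpNorm_ofReal_eq_LpNorm hp0
    (L.comp_memLp' (g.memLp_of_isFiniteMeasure (ENNReal.ofReal p) μ)).1] at hL
  refine hL.trans_eq ?_
  have hxv : ∀ v : g.range, u (x v) = v := fun v => by
    obtain ⟨ω, hω⟩ := SimpleFunc.mem_range.1 v.2
    rw [← hω, hx]
  simp only [hxv]
  rw [LpNorm]
  exact congrArg (2 * · ^ (1 / p)) (integral_comp_simpleFunc_eq_sum g
    (φ := fun v => |a ⬝ᵥ v| ^ p) (by simp [hp0.ne']))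

end PointEvaluation

section Discretization

variable {p : ℝ} {N : ℕ}

universe u in
/-- Sampling discretization in `L_p`: for some constants depending only on `p`, all `N`-dimensional
spaces of functions on a probability space satisfy a one-sided, equal-weight discretization
inequality with `O(Φ N)` points. The restriction `3 ≤ N` guarantees `1 ≤ log N`. -/
def LpDiscretization (p : ℝ) (Φ : ℕ → ℝ) : Prop :=
  ∃ C₁ C₂ : ℝ, 0 < C₁ ∧ 0 < C₂ ∧
    ∀ (Ω : Type u) [MeasurableSpace Ω] (μ : Measure Ω) [IsProbabilityMeasure μ] (N : ℕ), 3 ≤ N →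
      ∀ X : Submodule ℝ (Ω → ℝ), Module.finrank ℝ X = N → (∀ f ∈ X, Measurable f) →
        (∀ f ∈ X, Integrable (fun ω => |f ω| ^ p) μ) →
        ∃ (m : ℕ) (ξ : Fin m → Ω),
          (∀ f ∈ X, LpNorm μ p f ≤ C₂ * ((1 / (m : ℝ)) * ∑ j, |f (ξ j)| ^ p) ^ (1 / p)) ∧
          m ≤ C₁ * Φ N

theorem FiniteDiscretization.lpDiscretization {Φ : ℕ → ℝ} (h : FiniteDiscretization p Φ)
    (hp : 1 ≤ p) : LpDiscretization p Φ := by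
  obtain ⟨C, K, hC, hK, h⟩ := h
  refine ⟨C, 2 * K ^ (1 / p), hC, by positivity, fun Ω _ μ _ N hN X hX hmeas hint => ?_⟩
  have : Module.Finite ℝ X := Module.finite_of_finrank_pos (by lia)
  let b := Module.finBasisOfFinrankEq ℝ X hX
  obtain ⟨ι, _, x, ν, hν, hν1, hx⟩ := exists_finite_LpNorm_dotProduct_le hp
    (u := fun ω j => (b j : Ω → ℝ) ω) (fun j => hmeas _ (b j).2) (fun j => hint _ (b j).2)
  obtain ⟨m, η, hm, hη⟩ := h hN hν hν1.le fun i j => (b j : Ω → ℝ) (x i)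
  refine ⟨m, fun j => x (η j), fun f hf => ?_, hm⟩
  have hrepr : ∀ ω, f ω = (b.repr ⟨f, hf⟩ : Fin N → ℝ) ⬝ᵥ fun j => (b j : Ω → ℝ) ω := fun ω => by
    have hsum := congrFun (congrArg Subtype.val (b.sum_repr ⟨f, hf⟩)) ω
    rw [Submodule.coe_sum, Finset.sum_apply] at hsum
    exact hsum.symm
  have hsum := hη.le_sum (b.repr ⟨f, hf⟩)
  simp only [← hrepr, ← Finset.mul_sum, ← one_div] at hsum
  have hnorm := hx (b.repr ⟨f, hf⟩)
  simp only [← hrepr] at hnorm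
  calc LpNorm μ p f ≤ 2 * (∑ i, ν i * |f (x i)| ^ p) ^ (1 / p) := hnorm
    _ ≤ 2 * (K * (1 / m * ∑ j, |f (x (η j))| ^ p)) ^ (1 / p) := by
      have : 0 ≤ ∑ i, ν i * |f (x i)| ^ p :=
        Finset.sum_nonneg fun i _ => mul_nonneg (hν i) (by positivity)
      gcongr
    _ = 2 * K ^ (1 / p) * (1 / m * ∑ j, |f (x (η j))| ^ p) ^ (1 / p) := by
      rw [Real.mul_rpow hK.le (by positivity), mul_assoc]

open Classical in
/-- The number of sampling points sufficient for `N`-dimensional subspaces of `L_p`, up to a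
constant depending on `p`. -/
noncomputable def sampleSize (p : ℝ) (N : ℕ) : ℝ :=
  if p < 2 then N * Real.log N
  else if ∃ k : ℕ, p = 2 * k then (N : ℝ) ^ (p / 2)
  else (N : ℝ) ^ (p / 2) * Real.log N

theorem sampleSize_of_lt_two (hp : p < 2) (N : ℕ) : sampleSize p N = N * Real.log N :=
  if_pos hp

theorem sampleSize_two_mul {k : ℕ} (hk : 1 ≤ k) (N : ℕ) :
    sampleSize (2 * k) N = (N : ℝ) ^ (2 * k / 2 : ℝ) := by
  have : (1 : ℝ) ≤ k := by exact_mod_cast hk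
  rw [sampleSize, if_neg (by linarith), if_pos ⟨k, rfl⟩]

theorem sampleSize_two (N : ℕ) : sampleSize 2 N = N := by
  simpa using sampleSize_two_mul le_rfl N

theorem sampleSize_nonneg (p : ℝ) (N : ℕ) : 0 ≤ sampleSize p N := by
  unfold sampleSize
  split_ifs <;> positivity

theorem sampleSize_le (hp : 2 ≤ p) (hN : 3 ≤ N) :
    sampleSize p N ≤ (N : ℝ) ^ (p / 2) * Real.log N := by
  rw [sampleSize, if_neg hp.not_gt]
  split_ifs
  · exact le_mul_of_one_le_right (by positivity) (one_le_log_natCast hN)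
  · rfl

theorem finiteDiscretization_sampleSize (hp : 1 ≤ p) : FiniteDiscretization p (sampleSize p) := by
  unfold sampleSize
  split_ifs with hlt heven
  · exact finiteDiscretization_of_lt_two hp hlt
  · obtain ⟨k, rfl⟩ := heven
    simpa using finiteDiscretization_two_mul k
  · have hne : p ≠ 2 := fun h => heven ⟨1, by simpa using h⟩
    exact finiteDiscretization_of_two_lt (lt_of_le_of_ne (not_lt.1 hlt) hne.symm)

theorem exists_one_le_mul_log_log_sq :
    ∃ c : ℝ, 1 ≤ c ∧ ∀ N : ℕ, 3 ≤ N → 1 ≤ c * Real.log (Real.log N) ^ 2 := by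
  have hlog3 : 1 < Real.log 3 := by
    rw [Real.lt_log_iff_exp_lt (by norm_num)]
    exact Real.exp_one_lt_three
  have hpos : 0 < Real.log (Real.log 3) := Real.log_pos hlog3
  refine ⟨max 1 (Real.log (Real.log 3) ^ 2)⁻¹, le_max_left _ _, fun N hN => ?_⟩
  have hmono : Real.log (Real.log 3) ≤ Real.log (Real.log N) :=
    Real.log_le_log (by linarith) (Real.log_le_log (by norm_num) (by exact_mod_cast hN))
  calc 1 = (Real.log (Real.log 3) ^ 2)⁻¹ * Real.log (Real.log 3) ^ 2 := by field_simp
    _ ≤ _ := by gcongr; exact le_max_right _ _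

end Discretization

theorem stmt_7_general {p : ℝ} (hp : 1 ≤ p) : LpDiscretization p (sampleSize p) :=
  (finiteDiscretization_sampleSize hp).lpDiscretization hp

/-- Proposition 3.2: for `1 ≤ p < ∞` there are constants `C₁(p), C₂(p) > 0` such
that every `N`-dimensional subspace of `L_p` of a probability space admits an equal-weight LDI
`‖f‖_p ≤ C₂((1/m)∑_j |f(ξ^j)|^p)^{1/p}` with `m ≤ C₁N` if `p = 2`, `m ≤ C₁N log N` if `p = 1`,
`m ≤ C₁N log N (log log N)²` if `1 < p < 2`, `m ≤ C₁N^{p/2}` if `p` is an even integer, and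
`m ≤ C₁N^{p/2} log N` if `p > 2`. -/
theorem stmt_7 (p : ℝ) (hp : 1 ≤ p) :
    ∃ C₁ C₂ : ℝ, 0 < C₁ ∧ 0 < C₂ ∧
      ∀ (Ω : Type) [MeasurableSpace Ω], ∀ (μ : Measure Ω) [IsProbabilityMeasure μ],
        ∀ (N : ℕ), 3 ≤ N →
        ∀ (X : Submodule ℝ (Ω → ℝ)), Module.finrank ℝ X = N →
          (∀ f ∈ X, Measurable f) →
          (∀ f ∈ X, Integrable (fun ω => |f ω| ^ p) μ) →
          ∃ (m : ℕ) (ξ : Fin m → Ω),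
            (∀ f ∈ X, LpNorm μ p f ≤ C₂ * ((1 / (m : ℝ)) * ∑ j, |f (ξ j)| ^ p) ^ (1 / p)) ∧
            (p = 2 → (m : ℝ) ≤ C₁ * N) ∧
            (p = 1 → (m : ℝ) ≤ C₁ * N * Real.log N) ∧
            (1 < p → p < 2 → (m : ℝ) ≤ C₁ * N * Real.log N * (Real.log (Real.log N)) ^ 2) ∧
            ((∃ k : ℕ, 1 ≤ k ∧ p = 2 * k) → (m : ℝ) ≤ C₁ * (N : ℝ) ^ (p / 2)) ∧
            (2 < p → (m : ℝ) ≤ C₁ * (N : ℝ) ^ (p / 2) * Real.log N) := by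
  obtain ⟨C₁, C₂, hC₁, hC₂, h⟩ := stmt_7_general hp
  obtain ⟨c, hc, hloglog⟩ := exists_one_le_mul_log_log_sq
  refine ⟨C₁ * c, C₂, by positivity, hC₂, fun Ω _ μ _ N hN X hX hmeas hint => ?_⟩
  obtain ⟨m, ξ, hξ, hm⟩ := h Ω μ N hN X hX hmeas hint
  have hmc : (m : ℝ) ≤ C₁ * c * sampleSize p N := hm.trans <|
    mul_le_mul_of_nonneg_right (le_mul_of_one_le_right hC₁.le hc) (sampleSize_nonneg p N)
  refine ⟨m, ξ, hξ, ?_, ?_, fun _ hlt => ?_, ?_, fun hgt => ?_⟩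
  · rintro rfl
    rwa [sampleSize_two] at hmc
  · rintro rfl
    rwa [sampleSize_of_lt_two one_lt_two, ← mul_assoc] at hmc
  · rw [sampleSize_of_lt_two hlt] at hm
    have : 0 ≤ C₁ * (N * Real.log N) := by positivity
    exact (hm.trans (le_mul_of_one_le_right this (hloglog N hN))).trans_eq (by ring)
  · rintro ⟨k, hk, rfl⟩
    exact hmc.trans_eq (congrArg _ (sampleSize_two_mul hk N))
  · rw [mul_assoc]
    exact hmc.trans (mul_le_mul_of_nonneg_left (sampleSize_le hgt.le hN) (by positivity))
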